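/- arXiv:2103.11347 — 2 statements merged into one kernel-verified Lean document; each statement's English description precedes it below -/
import Mathlib

section
/- Consider the circular billiard with boundary the unit circle S = {q ∈ ℝ² : ‖q‖ = 1}. Let p₀ ∈ ℝ² with 0 < ‖p₀‖ < 1 (an interior point which is not the center), and let α ∈ (0, π). Then the set of ordered pairs (v, v′) of unit vectors in ℝ² with ⟨v, v′⟩ = cos α, such that some billiard trajectory from the shot (p₀, v) is periodic and some billiard trajectory from the shot (p₀, v′) is periodic, is finite. -/
noncomputable section

/-- The Euclidean inner product on `ℝ × ℝ`. -/
def ip (v w : ℝ × ℝ) : ℝ := v.1 * w.1 + v.2 * w.2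

/-- The Euclidean norm on `ℝ × ℝ`. -/
def nrm (v : ℝ × ℝ) : ℝ := Real.sqrt (ip v v)

/-- The unit direction vectors along a trajectory: `u 0 = v` and, for `k ≥ 1`,
`u k` is the normalization of `q (k+1) - q k`. -/
def dirs (q : ℕ → ℝ × ℝ) (v : ℝ × ℝ) : ℕ → ℝ × ℝ
  | 0 => v
  | k + 1 => (nrm (q (k + 2) - q (k + 1)))⁻¹ • (q (k + 2) - q (k + 1))

/-- `q` is a billiard trajectory from the shot `(p, v)` in the circular billiard with
boundary the unit circle; the outward unit normal at a boundary point `q_k` is `q_k`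
itself. -/
def IsCircTrajectory (p v : ℝ × ℝ) (q : ℕ → ℝ × ℝ) : Prop :=
  q 0 = p ∧
  (∀ k, 1 ≤ k → nrm (q k) = 1 ∧ q (k + 1) ≠ q k) ∧
  (∃ t : ℝ, 0 < t ∧ q 1 = p + t • v) ∧
  (∀ k : ℕ, dirs q v (k + 1) =
    dirs q v k - (2 * ip (dirs q v k) (q (k + 1))) • q (k + 1))

/-- The trajectory is periodic. -/
def IsPeriodicTraj (q : ℕ → ℝ × ℝ) : Prop :=
  ∃ n : ℕ, 1 ≤ n ∧ ∀ k, 1 ≤ k → q (k + n) = q k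

open Polynomial in
lemma gal_poly {L k : ℕ} (hL : 0 < L) {ω : ℂ} (hω : IsPrimitiveRoot ω L) (hk : Nat.Coprime k L)
    (P : ℤ[X]) (h : aeval ω P = 0) : aeval (ω ^ k) P = 0 := by
  have h1 : minpoly ℤ ω ∣ P := minpoly.isIntegrallyClosed_dvd (hω.isIntegral hL) h
  have h2 : minpoly ℤ (ω ^ k) ∣ P := by
    rw [← hω.minpoly_eq_pow_coprime hk]; exact h1
  obtain ⟨R, hR⟩ := h2
  rw [hR, map_mul, minpoly.aeval, zero_mul]

def tw (z : ℂ) : ℂ := z + z⁻¹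

def dt (A B A1 B1 A2 B2 : ℂ) : ℂ :=
  A * B * ((A1 + B1) - (A2 + B2)) - (A + B) * (A1 * B1 - A2 * B2)
    + (A1 * B1 * (A2 + B2) - (A1 + B1) * (A2 * B2))

open Polynomial in
lemma gal_dt {L k : ℕ} (hL : 0 < L) (hk : Nat.Coprime k L) {a b a1 b1 a2 b2 : ℂ}
    (ha : a ^ L = 1) (hb : b ^ L = 1) (ha1 : a1 ^ L = 1) (hb1 : b1 ^ L = 1)
    (ha2 : a2 ^ L = 1) (hb2 : b2 ^ L = 1)
    (h : dt (tw a) (tw b) (tw a1) (tw b1) (tw a2) (tw b2) = 0) :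
    dt (tw (a ^ k)) (tw (b ^ k)) (tw (a1 ^ k)) (tw (b1 ^ k)) (tw (a2 ^ k)) (tw (b2 ^ k)) = 0 := by
  have : NeZero L := ⟨hL.ne'⟩
  have hω := Complex.isPrimitiveRoot_exp L hL.ne'
  set ω := Complex.exp (2 * Real.pi * Complex.I / L) with hωd
  let C : ℕ → ℤ[X] := fun i => X ^ i + X ^ (i * (L - 1))
  have hC : ∀ (i : ℕ) (x : ℂ), x ^ L = 1 → aeval x (C i) = tw (x ^ i) := by
    intro i x hx
    have hx0 : x ≠ 0 := by
      rintro rfl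
      rw [zero_pow hL.ne'] at hx
      exact zero_ne_one hx
    simp only [C, tw, map_add, map_pow, aeval_X]
    congr 1
    apply eq_inv_of_mul_eq_one_left
    rw [← pow_add]
    have : i * (L - 1) + i = L * i := by
      obtain ⟨m, rfl⟩ : ∃ m, L = m + 1 := ⟨L - 1, by omega⟩
      simp only [Nat.add_sub_cancel]; ring
    rw [this, pow_mul, hx, one_pow]
  obtain ⟨i, -, rfl⟩ := hω.eq_pow_of_pow_eq_one ha
  obtain ⟨j, -, rfl⟩ := hω.eq_pow_of_pow_eq_one hb
  obtain ⟨i1, -, rfl⟩ := hω.eq_pow_of_pow_eq_one ha1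
  obtain ⟨j1, -, rfl⟩ := hω.eq_pow_of_pow_eq_one hb1
  obtain ⟨i2, -, rfl⟩ := hω.eq_pow_of_pow_eq_one ha2
  obtain ⟨j2, -, rfl⟩ := hω.eq_pow_of_pow_eq_one hb2
  have hk1 : (ω ^ k) ^ L = 1 := by rw [← pow_mul, mul_comm, pow_mul, hω.pow_eq_one, one_pow]
  have key := gal_poly hL hω hk
    (C i * C j * ((C i1 + C j1) - (C i2 + C j2)) - (C i + C j) * (C i1 * C j1 - C i2 * C j2)
    + (C i1 * C j1 * (C i2 + C j2) - (C i1 + C j1) * (C i2 * C j2)))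
  simp only [map_add, map_sub, map_mul, hC _ _ hω.pow_eq_one, hC _ _ hk1] at key
  have := key h
  simp only [← pow_mul, mul_comm k] at this
  simp only [dt, ← pow_mul]
  exact this

/-- density of conjugates -/
lemma dense_conj {M : ℕ} (hM : 0 < M) {δ : ℝ} (hδ : 0 < δ) :
    ∃ B : ℕ, ∀ (a : ℂ) (N : ℕ), B < N → IsPrimitiveRoot a N → ∀ c : ℝ, -1 ≤ c → c ≤ 1 →
      ∃ k : ℕ, Nat.Coprime k (N * M) ∧ k ≡ 1 [MOD M] ∧ |(a ^ k).re - c| < δ := by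
  obtain ⟨Q0, hQ0⟩ := exists_nat_gt (4 * Real.pi / δ)
  set Q := M * Q0 with hQ
  refine ⟨Q.factorial, fun a N hN ha c hc1 hc2 => ?_⟩
  have hN0 : N ≠ 0 := by omega
  have hndvd : ¬ N ∣ Q.factorial := fun h => absurd (Nat.le_of_dvd (Nat.factorial_pos _) h) (by omega)
  rw [Nat.dvd_iff_prime_pow_dvd_dvd] at hndvd
  push Not at hndvd
  obtain ⟨p, e, hp, hpe, hpQ⟩ := hndvd
  have hQp : Q < p ^ e := by
    by_contra hlt
    exact hpQ (Nat.dvd_factorial (pow_pos hp.pos _) (by omega))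
  obtain ⟨f, n, hpn, hNn⟩ := Nat.exists_eq_pow_mul_and_not_dvd hN0 p hp.ne_one
  set q := p ^ f with hq
  have hef : e ≤ f := by
    have h1 : p ^ e ∣ p ^ f := by
      have hcop : Nat.Coprime (p ^ e) n := Nat.Coprime.pow_left _ ((Nat.Prime.coprime_iff_not_dvd hp).2 hpn)
      rw [hNn] at hpe
      exact hcop.dvd_of_dvd_mul_right hpe
    exact (Nat.pow_dvd_pow_iff_le_right hp.one_lt).1 h1
  have hQq : Q < q := lt_of_lt_of_le hQp (Nat.pow_le_pow_right hp.pos hef)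
  have hq0 : 0 < q := by omega
  have hn0 : n ≠ 0 := by rintro rfl; simp at hpn
  have haq : IsPrimitiveRoot (a ^ n) q := ha.pow (Nat.pos_of_ne_zero hN0) (by rw [hNn, mul_comm])
  obtain ⟨q', hq'⟩ : Nat.gcd q M ∣ q := Nat.gcd_dvd_left _ _
  have hg0 : 0 < Nat.gcd q M := Nat.gcd_pos_of_pos_left _ hq0
  have hgM : Nat.gcd q M ≤ M := Nat.gcd_le_right _ hM
  have hq'0 : 0 < q' := by
    rcases Nat.eq_zero_or_pos q' with h | h
    · rw [h] at hq'; omega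
    · exact h
  have hQ0q : Q0 < q' := by
    by_contra hle
    push Not at hle
    have : q ≤ Q := by
      rw [hq', hQ]; exact Nat.mul_le_mul hgM hle
    omega
  have hg : IsPrimitiveRoot ((a ^ n) ^ M) q' := by
    have : NeZero q := ⟨hq0.ne'⟩
    have h1 : orderOf ((a ^ n) ^ M) = q' := by
      rw [orderOf_pow' _ hM.ne', ← haq.eq_orderOf]
      exact Nat.div_eq_of_eq_mul_right hg0 hq'
    rw [← h1]; exact IsPrimitiveRoot.orderOf _
  have : NeZero q' := ⟨hq'0.ne'⟩
  have hω := Complex.isPrimitiveRoot_exp q' hq'0.ne'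
  obtain ⟨u, -, hu, hgu⟩ := hg.isPrimitiveRoot_iff.1 hω
  have hnorm : ‖a‖ = 1 := ha.norm'_eq_one hN0
  set ψ := a.arg with hψ
  have haexp : a = Complex.exp (ψ * Complex.I) := by
    have := Complex.norm_mul_exp_arg_mul_I a
    rw [hnorm, Complex.ofReal_one, one_mul] at this
    exact this.symm
  set θ := Real.arccos c + 2 * Real.pi with hθ
  have hcosθ : Real.cos θ = c := by
    rw [hθ, Real.cos_add_two_pi, Real.cos_arccos hc1 hc2]
  have hpi := Real.pi_pos
  have hpos : 0 ≤ (θ - ψ) * q' / (2 * Real.pi) := by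
    have h1 : ψ ≤ Real.pi := Complex.arg_le_pi a
    have h2 := Real.arccos_nonneg c
    have : 0 ≤ θ - ψ := by rw [hθ]; linarith
    positivity
  set t := ⌊(θ - ψ) * q' / (2 * Real.pi)⌋₊ with ht
  have ht1 : (t : ℝ) ≤ (θ - ψ) * q' / (2 * Real.pi) := Nat.floor_le hpos
  have ht2 : (θ - ψ) * q' / (2 * Real.pi) < t + 1 := Nat.lt_floor_add_one _
  have hq'R : (0 : ℝ) < q' := by exact_mod_cast hq'0
  have hclose : ∀ s : ℕ, (s = t ∨ s = t + 1) → |(a ^ (1 + n * M * (u * s))).re - c| < δ := by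
    intro s hs
    have e1 : a ^ (1 + n * M * (u * s)) = Complex.exp (((ψ + 2 * Real.pi * s / q' : ℝ) : ℂ) * Complex.I) := by
      rw [pow_add, pow_one, pow_mul, pow_mul, pow_mul, hgu, ← Complex.exp_nat_mul]
      conv_lhs => rw [haexp]
      rw [← Complex.exp_add]
      congr 1
      push_cast
      ring
    rw [e1, Complex.exp_ofReal_mul_I_re, ← hcosθ]
    refine lt_of_le_of_lt (Real.abs_cos_sub_cos_le _ _) ?_
    have hs' : |(s : ℝ) - (θ - ψ) * q' / (2 * Real.pi)| ≤ 1 := by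
      rw [abs_le]
      rcases hs with rfl | rfl
      · constructor <;> linarith
      · push_cast; constructor <;> linarith
    have e2 : ψ + 2 * Real.pi * s / q' - θ = (2 * Real.pi / q') * ((s : ℝ) - (θ - ψ) * q' / (2 * Real.pi)) := by
      field_simp
      ring
    rw [e2, abs_mul, abs_of_pos (by positivity)]
    have h3 : 4 * Real.pi / δ < q' := hQ0.trans (by exact_mod_cast hQ0q)
    have h4 : 2 * Real.pi / q' < δ := by
      rw [div_lt_iff₀ hδ] at h3
      rw [div_lt_iff₀ hq'R]
      nlinarith
    calc _ ≤ 2 * Real.pi / q' * 1 := by gcongr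
      _ < δ := by linarith
  have hgood : ∃ s : ℕ, (s = t ∨ s = t + 1) ∧ ¬ p ∣ 1 + n * M * (u * s) := by
    by_contra hcon
    push Not at hcon
    have h1 := hcon t (Or.inl rfl)
    have h2 := hcon (t + 1) (Or.inr rfl)
    have h3 : p ∣ n * M * u := by
      have := Nat.dvd_sub h2 h1
      have e : 1 + n * M * (u * (t + 1)) - (1 + n * M * (u * t)) = n * M * u := by
        have : 1 + n * M * (u * (t + 1)) = (1 + n * M * (u * t)) + n * M * u := by ring
        omega
      rwa [e] at this
    have hpM : ¬ p ∣ M := by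
      intro h
      have h5 : p ∣ n * M * (u * t) := (h.mul_left n).mul_right _
      have := (Nat.dvd_add_left h5).1 h1
      exact hp.one_lt.ne' (Nat.dvd_one.1 this)
    have hpu : p ∣ u := by
      rcases (Nat.Prime.dvd_mul hp).1 h3 with h | h
      · rcases (Nat.Prime.dvd_mul hp).1 h with h | h
        · exact absurd h hpn
        · exact absurd h hpM
      · exact h
    have hcop : Nat.Coprime q M := Nat.Coprime.pow_left _ ((Nat.Prime.coprime_iff_not_dvd hp).2 hpM)
    have hqq : q = q' := by rw [Nat.Coprime] at hcop; rw [hcop, one_mul] at hq'; exact hq'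
    have hf : f ≠ 0 := by
      rintro rfl
      have : q = 1 := by simp [hq]
      have : 0 < e := by
        rcases Nat.eq_zero_or_pos e with h | h
        · subst h; simp at hpQ
        · exact h
      omega
    have hpq : p ∣ q' := by rw [← hqq]; exact dvd_pow_self p hf
    exact hp.one_lt.ne' (Nat.dvd_one.1 (hu ▸ Nat.dvd_gcd hpu hpq))
  obtain ⟨s, hs, hps⟩ := hgood
  refine ⟨1 + n * M * (u * s), ?_, ?_, hclose s hs⟩
  · have c1 : Nat.Coprime (1 + n * M * (u * s)) (n * M) := by simp
    have c2 : Nat.Coprime (1 + n * M * (u * s)) q :=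
      Nat.Coprime.pow_right _ ((Nat.Prime.coprime_iff_not_dvd hp).2 hps).symm
    rw [hNn, mul_assoc q n M]
    exact c2.mul_right c1
  · have : 1 + n * M * (u * s) = 1 + M * (n * u * s) := by ring
    rw [this]
    simp [Nat.ModEq]

def Sol (c K : ℝ) (a b : ℂ) : Prop :=
  (∃ n : ℕ, 0 < n ∧ a ^ n = 1) ∧ (∃ n : ℕ, 0 < n ∧ b ^ n = 1) ∧
    (a.re - c) * (b.re - c) = -K

lemma Sol.symm {c K : ℝ} {a b : ℂ} (h : Sol c K a b) : Sol c K b a :=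
  ⟨h.2.1, h.1, by rw [mul_comm]; exact h.2.2⟩

lemma norm_of_pow {a : ℂ} {n : ℕ} (hn : 0 < n) (h : a ^ n = 1) : ‖a‖ = 1 :=
  Complex.norm_eq_one_of_pow_eq_one h hn.ne'

lemma tw_eq {a : ℂ} (h : ‖a‖ = 1) : tw a = ((2 * a.re : ℝ) : ℂ) := by
  rw [tw, Complex.inv_eq_conj h, Complex.add_conj]

/-- The order of `a` in a solution is bounded. -/
lemma Sol.bounded {c K : ℝ} (hc1 : -1 ≤ c) (hc2 : c ≤ 1) (hK : 0 < K) {a1 b1 a2 b2 : ℂ}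
    (h1 : Sol c K a1 b1) (h2 : Sol c K a2 b2) (hne : a1.re + b1.re ≠ a2.re + b2.re) :
    ∃ B : ℕ, ∀ a b, Sol c K a b → ∃ m : ℕ, 0 < m ∧ m ≤ B ∧ a ^ m = 1 := by
  obtain ⟨⟨n1, hn1, e1⟩, ⟨m1, hm1, f1⟩, g1⟩ := h1
  obtain ⟨⟨n2, hn2, e2⟩, ⟨m2, hm2, f2⟩, g2⟩ := h2
  set M := (n1 * m1) * (n2 * m2) with hMd
  have hM : 0 < M := by positivity
  have dv : ∀ {x : ℂ} {n m : ℕ}, n ∣ m → x ^ n = 1 → x ^ m = 1 := by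
    rintro x n m ⟨r, rfl⟩ h
    rw [pow_mul, h, one_pow]
  have ea1 : a1 ^ M = 1 := dv ((dvd_mul_right n1 m1).mul_right _) e1
  have eb1 : b1 ^ M = 1 := dv ((dvd_mul_left m1 n1).mul_right _) f1
  have ea2 : a2 ^ M = 1 := dv ((dvd_mul_right n2 m2).mul_left _) e2
  have eb2 : b2 ^ M = 1 := dv ((dvd_mul_left m2 n2).mul_left _) f2
  obtain ⟨B, hB⟩ := dense_conj hM (half_pos hK)
  refine ⟨B, fun a b h => ?_⟩
  obtain ⟨⟨n, hn, ea⟩, ⟨m, hm, eb⟩, g⟩ := h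
  have hN0 : 0 < orderOf a := orderOf_pos_iff.2 (isOfFinOrder_iff_pow_eq_one.2 ⟨n, hn, ea⟩)
  refine ⟨orderOf a, hN0, ?_, pow_orderOf_eq_one a⟩
  by_contra hlt
  push Not at hlt
  obtain ⟨k0, hk0, hk0M, hk0c⟩ := hB a _ hlt (IsPrimitiveRoot.orderOf a) c hc1 hc2
  set N := orderOf a
  set L := N * M * m with hL
  have hL0 : 0 < L := by positivity
  have : NeZero L := ⟨hL0.ne'⟩
  obtain ⟨k, hkL, hkk⟩ : ∃ k : ℕ, Nat.Coprime k L ∧ k ≡ k0 [MOD N * M] := by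
    obtain ⟨y, hy⟩ := ZMod.unitsMap_surjective (show N * M ∣ L from dvd_mul_right _ _)
      (ZMod.unitOfCoprime k0 hk0)
    refine ⟨(y : ZMod L).val, ZMod.val_coe_unit_coprime y, ?_⟩
    rw [← ZMod.natCast_eq_natCast_iff]
    have := congrArg (fun z : (ZMod (N * M))ˣ => (z : ZMod (N * M))) hy
    simp only [ZMod.unitsMap_val, ZMod.coe_unitOfCoprime] at this
    rw [← this, ZMod.natCast_val]
  have hkM : k ≡ 1 [MOD M] := (hkk.of_dvd (dvd_mul_left M N)).trans hk0M
  have hkN : k ≡ k0 [MOD N] := hkk.of_dvd (dvd_mul_right N M)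
  have pw : ∀ {x : ℂ}, x ^ M = 1 → x ^ k = x := by
    intro x hx
    have : x ^ k = x ^ 1 := by
      have h := hkM.of_dvd (orderOf_dvd_of_pow_eq_one hx)
      rw [← pow_mod_orderOf x k, h, pow_mod_orderOf]
    rw [this, pow_one]
  have pa : a ^ k = a ^ k0 := by
    rw [← pow_mod_orderOf a k, hkN, pow_mod_orderOf]
  have hML : M ∣ L := (dvd_mul_left M N).mul_right m
  have na := norm_of_pow hn ea
  have nb := norm_of_pow hm eb
  have nak : ‖a ^ k‖ = 1 := by rw [norm_pow, na, one_pow]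
  have nbk : ‖b ^ k‖ = 1 := by rw [norm_pow, nb, one_pow]
  have key := gal_dt hL0 hkL (a := a) (b := b)
    (dv ((dvd_mul_right N M).mul_right m) (pow_orderOf_eq_one a)) (dv (dvd_mul_left m _) eb)
    (dv hML ea1) (dv hML eb1) (dv hML ea2) (dv hML eb2) (by
      rw [tw_eq na, tw_eq nb, tw_eq (norm_of_pow hM ea1), tw_eq (norm_of_pow hM eb1),
        tw_eq (norm_of_pow hM ea2), tw_eq (norm_of_pow hM eb2), dt]
      norm_cast
      have q0 : a.re * b.re = c * (a.re + b.re) - (c ^ 2 + K) := by linarith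
      have q1 : a1.re * b1.re = c * (a1.re + b1.re) - (c ^ 2 + K) := by linarith
      have q2 : a2.re * b2.re = c * (a2.re + b2.re) - (c ^ 2 + K) := by linarith
      linear_combination 8 * ((a1.re + b1.re) - (a2.re + b2.re)) * q0
        - 8 * (a.re + b.re - a2.re - b2.re) * q1 + 8 * (a.re + b.re - a1.re - b1.re) * q2)
  rw [pw ea1, pw eb1, pw ea2, pw eb2, tw_eq nak, tw_eq nbk, tw_eq (norm_of_pow hM ea1),
    tw_eq (norm_of_pow hM eb1), tw_eq (norm_of_pow hM ea2), tw_eq (norm_of_pow hM eb2), dt] at key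
  norm_cast at key
  have q1 : a1.re * b1.re = c * (a1.re + b1.re) - (c ^ 2 + K) := by linarith
  have q2 : a2.re * b2.re = c * (a2.re + b2.re) - (c ^ 2 + K) := by linarith
  rw [pa] at key
  set X := (a ^ k0).re
  set Y := (b ^ k).re
  have fin : (X - c) * (Y - c) = -K := by
    have h0 : ((a1.re + b1.re) - (a2.re + b2.re)) * ((X - c) * (Y - c) + K) = 0 := by
      linear_combination key / 8 + (X + Y - a2.re - b2.re) * q1 - (X + Y - a1.re - b1.re) * q2
    rcases mul_eq_zero.1 h0 with h | h
    · exact absurd (sub_eq_zero.1 h) hne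
    · linarith
  have hY : |Y| ≤ 1 := by
    have := Complex.abs_re_le_norm (b ^ k)
    rwa [nbk] at this
  have hY2 : |Y - c| ≤ 2 := by
    rw [abs_le] at hY ⊢
    constructor <;> linarith [hY.1, hY.2]
  have : K < K := by
    calc K = |(X - c) * (Y - c)| := by rw [fin, abs_neg, abs_of_pos hK]
      _ = |X - c| * |Y - c| := abs_mul _ _
      _ ≤ |X - c| * 2 := by gcongr
      _ < K / 2 * 2 := by gcongr
      _ = K := by ring
  exact lt_irrefl _ this

lemma fin_re (x : ℝ) : {a : ℂ | ‖a‖ = 1 ∧ a.re = x}.Finite := by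
  refine Set.Finite.subset (Set.toFinite {(⟨x, √(1 - x ^ 2)⟩ : ℂ), ⟨x, -√(1 - x ^ 2)⟩}) ?_
  rintro a ⟨h, rfl⟩
  have h1 : a.re ^ 2 + a.im ^ 2 = 1 := by
    have := Complex.sq_norm a
    rw [h, Complex.normSq_apply] at this
    linarith
  have h2 : √(1 - a.re ^ 2) = |a.im| := by
    rw [← Real.sqrt_sq_eq_abs]; congr 1; linarith
  simp only [h2, Set.mem_insert_iff, Set.mem_singleton_iff, Complex.ext_iff, true_and]
  rcases abs_choice a.im with h | h <;> rw [h] <;> simp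

lemma fin_pow (m : ℕ) (hm : 0 < m) (d : ℂ) : {z : ℂ | z ^ m = d}.Finite := by
  refine (Polynomial.nthRoots m d).toFinset.finite_toSet.subset ?_
  intro z hz
  simpa [Polynomial.mem_nthRoots hm] using hz

lemma sol_finite {c K : ℝ} (hc1 : -1 ≤ c) (hc2 : c ≤ 1) (hK : 0 < K) :
    {ab : ℂ × ℂ | Sol c K ab.1 ab.2}.Finite := by
  by_cases hE : ∃ a1 b1 a2 b2, Sol c K a1 b1 ∧ Sol c K a2 b2 ∧ a1.re + b1.re ≠ a2.re + b2.re
  · obtain ⟨a1, b1, a2, b2, h1, h2, hne⟩ := hE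
    obtain ⟨B, hB⟩ := Sol.bounded hc1 hc2 hK h1 h2 hne
    refine ((fin_pow B.factorial (Nat.factorial_pos _) 1).prod
      (fin_pow B.factorial (Nat.factorial_pos _) 1)).subset ?_
    have dv : ∀ a b, Sol c K a b → a ^ B.factorial = 1 := by
      intro a b h
      obtain ⟨m, hm, hmB, e⟩ := hB a b h
      obtain ⟨r, hr⟩ := Nat.dvd_factorial hm hmB
      rw [hr, pow_mul, e, one_pow]
    rintro ⟨a, b⟩ h
    exact ⟨dv a b h, dv b a h.symm⟩
  · push Not at hE
    by_cases hn : ∃ a0 b0, Sol c K a0 b0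
    · obtain ⟨a0, b0, h0⟩ := hn
      have F := (fin_re a0.re).union (fin_re b0.re)
      refine (F.prod F).subset ?_
      have key : ∀ a b, Sol c K a b → a ∈ {a : ℂ | ‖a‖ = 1 ∧ a.re = a0.re} ∪ {a : ℂ | ‖a‖ = 1 ∧ a.re = b0.re} := by
        intro a b h
        have hs := hE a b a0 b0 h h0
        have e1 := h.2.2
        have e2 := h0.2.2
        have e3 : b.re = a0.re + b0.re - a.re := by linarith
        have e4 : (a.re - a0.re) * (a.re - b0.re) = 0 := by
          rw [e3] at e1
          linear_combination e2 - e1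
        obtain ⟨n, hn, e⟩ := h.1
        have na := norm_of_pow hn e
        rcases mul_eq_zero.1 e4 with h | h
        · exact Or.inl ⟨na, by linarith⟩
        · exact Or.inr ⟨na, by linarith⟩
      rintro ⟨a, b⟩ h
      exact ⟨key a b h, key b a h.symm⟩
    · push Not at hn
      refine Set.finite_empty.subset ?_
      rintro ⟨a, b⟩ h
      exact absurd h (hn a b)

open ComplexConjugate in
lemma cplx_traj (Q U : ℕ → ℂ) (hQ : ∀ k, Q k * conj (Q k) = 1)
    (hU : ∀ k, U k * conj (U k) = 1) (hQU : ∀ k, ∃ τ : ℝ, U k = τ * (Q (k + 1) - Q k))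
    (hr : ∀ k, U (k + 1) = - conj (U k) * Q (k + 1) ^ 2) {n : ℕ} (hn : 1 ≤ n)
    (hper : Q n = Q 0) : ∃ m, 0 < m ∧ (U 0 * conj (Q 0)) ^ m = 1 := by
  set w := U 0 * conj (Q 0) with hw
  have hwk : ∀ k, U k * conj (Q k) = w := by
    intro k
    induction k with
    | zero => rfl
    | succ k ih =>
      rw [← ih, hr k]
      obtain ⟨τ, hτ⟩ := hQU k
      rw [hτ]
      simp only [map_mul, map_sub, Complex.conj_ofReal]
      linear_combination (-τ * (conj (Q (k + 1)) - conj (Q k)) * Q (k + 1) - τ) * hQ (k + 1) + τ * hQ k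
  have hww : w * conj w = 1 := by
    rw [hw]; simp only [map_mul, Complex.conj_conj]
    linear_combination (Q 0 * conj (Q 0)) * hU 0 + hQ 0
  have hstep : ∀ k, Q (k + 1) = (- w ^ 2) * Q k := by
    intro k
    have h1 : Q (k + 1) * conj w = - w * Q k := by
      rw [← hwk k]
      obtain ⟨τ, hτ⟩ := hQU k
      rw [hτ]
      simp only [map_mul, map_sub, Complex.conj_ofReal, Complex.conj_conj]
      linear_combination τ * Q k * hQ (k + 1) - τ * Q k * hQ k 
    linear_combination w * h1 - Q (k + 1) * hww
  have hpow : ∀ k, Q k = (- w ^ 2) ^ k * Q 0 := by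
    intro k
    induction k with
    | zero => simp
    | succ k ih => rw [hstep, ih, pow_succ]; ring
  have h0 : Q 0 ≠ 0 := by
    intro h
    have := hQ 0
    rw [h] at this
    simp at this
  have h1 : (- w ^ 2) ^ n = 1 := by
    have := hpow n
    rw [hper] at this
    exact (mul_right_cancel₀ h0 ((one_mul _).trans this)).symm
  refine ⟨4 * n, by omega, ?_⟩
  have : w ^ (4 * n) = ((- w ^ 2) ^ n) ^ 2 := by
    rw [← pow_mul, mul_comm n 2, pow_mul, pow_mul]; congr 1; ring
  rw [this, h1, one_pow]

lemma ip_self_of_nrm {v : ℝ × ℝ} (h : nrm v = 1) : v.1 * v.1 + v.2 * v.2 = 1 := by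
  rw [nrm, Real.sqrt_eq_one] at h; exact h

open ComplexConjugate in
lemma traj_root {p v : ℝ × ℝ} {q : ℕ → ℝ × ℝ} (h : IsCircTrajectory p v q)
    (hper : IsPeriodicTraj q) :
    ∃ w : ℂ, (∃ m, 0 < m ∧ w ^ m = 1) ∧ w.im = p.1 * v.2 - p.2 * v.1 := by
  obtain ⟨-, hq, ⟨t, -, h1⟩, hr⟩ := h
  obtain ⟨n, hn, hper⟩ := hper
  have hqn : ∀ k, (q (k + 1)).1 * (q (k + 1)).1 + (q (k + 1)).2 * (q (k + 1)).2 = 1 :=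
    fun k => ip_self_of_nrm (hq (k + 1) (by omega)).1
  let Q : ℕ → ℂ := fun k => ⟨(q (k + 1)).1, (q (k + 1)).2⟩
  let U : ℕ → ℂ := fun k => ⟨(dirs q v (k + 1)).1, (dirs q v (k + 1)).2⟩
  have refl : ∀ k, U k = - conj (⟨(dirs q v k).1, (dirs q v k).2⟩ : ℂ) * Q k ^ 2 := by
    intro k
    have e := hr k
    have e1 := congrArg Prod.fst e
    have e2 := congrArg Prod.snd e
    simp only [ip, Prod.fst_sub, Prod.snd_sub, Prod.smul_fst, Prod.smul_snd, smul_eq_mul] at e1 e2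
    have hk := hqn k
    apply Complex.ext
    · simp only [U, Q, pow_two, Complex.mul_re, Complex.mul_im, Complex.neg_re, Complex.neg_im, Complex.conj_re, Complex.conj_im]
      rw [e1]
      linear_combination (-(dirs q v k).1) * hk
    · simp only [U, Q, pow_two, Complex.mul_re, Complex.mul_im, Complex.neg_re, Complex.neg_im, Complex.conj_re, Complex.conj_im]
      rw [e2]
      linear_combination (-(dirs q v k).2) * hk
  have hQ : ∀ k, Q k * conj (Q k) = 1 := by
    intro k
    rw [Complex.mul_conj, Complex.normSq_apply]
    exact_mod_cast hqn k
  have hQU : ∀ k, ∃ τ : ℝ, U k = τ * (Q (k + 1) - Q k) := by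
    intro k
    refine ⟨(nrm (q (k + 2) - q (k + 1)))⁻¹, ?_⟩
    apply Complex.ext <;> simp [U, Q, dirs]
  have hU : ∀ k, U k * conj (U k) = 1 := by
    intro k
    rw [Complex.mul_conj, Complex.normSq_apply]
    have hne := (hq (k + 1) (by omega)).2
    set d := q (k + 2) - q (k + 1) with hd
    have hd0 : d ≠ 0 := sub_ne_zero.2 hne
    have hpos : 0 < ip d d := by
      rw [ip]
      by_contra hcon
      have a1 : d.1 = 0 := by nlinarith [mul_self_nonneg d.1, mul_self_nonneg d.2]
      have a2 : d.2 = 0 := by nlinarith [mul_self_nonneg d.1, mul_self_nonneg d.2]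
      exact hd0 (Prod.ext a1 a2)
    have hs : nrm d * nrm d = ip d d := Real.mul_self_sqrt hpos.le
    have hs0 : 0 < nrm d := Real.sqrt_pos.2 hpos
    have : (U k).re * (U k).re + (U k).im * (U k).im = 1 := by
      simp only [U, dirs, ← hd, Prod.smul_fst, Prod.smul_snd, smul_eq_mul]
      rw [ip] at hs
      field_simp
      linarith
    exact_mod_cast this
  have hper' : Q n = Q 0 := by
    have := hper 1 le_rfl
    simp only [Q]
    rw [add_comm n 1, this]
  refine ⟨U 0 * conj (Q 0), cplx_traj Q U hQ hU hQU (fun k => refl (k + 1)) hn hper', ?_⟩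
  have e : U 0 * conj (Q 0) = - conj (⟨v.1, v.2⟩ : ℂ) * Q 0 := by
    have := refl 0
    simp only [dirs] at this
    rw [this]
    linear_combination (-conj (⟨v.1, v.2⟩ : ℂ) * Q 0) * hQ 0
  rw [e]
  have x1 := congrArg Prod.fst h1
  have x2 := congrArg Prod.snd h1
  simp only [Prod.fst_add, Prod.snd_add, Prod.smul_fst, Prod.smul_snd, smul_eq_mul] at x1 x2
  simp [Q]
  rw [x1, x2]
  ring

lemma fin_cross {p : ℝ × ℝ} (hp : 0 < p.1 * p.1 + p.2 * p.2) (x : ℝ) :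
    {v : ℝ × ℝ | v.1 * v.1 + v.2 * v.2 = 1 ∧ p.1 * v.2 - p.2 * v.1 = x}.Finite := by
  set R := p.1 * p.1 + p.2 * p.2 with hR
  set s := √(R - x ^ 2) with hs
  refine Set.Finite.subset (Set.toFinite
    (Set.image (fun s : ℝ => ((p.1 * s - p.2 * x) / R, (p.2 * s + p.1 * x) / R)) {s, -s})) ?_
  rintro v ⟨h1, h2⟩
  have h3 : (p.1 * v.1 + p.2 * v.2) ^ 2 = R - x ^ 2 := by
    rw [← h2, hR]
    linear_combination (p.1 * p.1 + p.2 * p.2) * h1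
  refine ⟨p.1 * v.1 + p.2 * v.2, ?_, ?_⟩
  · rw [hs, ← h3, Real.sqrt_sq_eq_abs]
    rcases abs_choice (p.1 * v.1 + p.2 * v.2) with h | h <;> rw [h] <;> simp
  · apply Prod.ext
    · simp only [← h2]
      rw [div_eq_iff hp.ne', hR]; ring
    · simp only [← h2]
      rw [div_eq_iff hp.ne', hR]; ring

/-- In the circular billiard, for an interior point `p₀` other than the center and an
angle `α ∈ (0, π)`, only finitely many pairs of directions forming angle `α` give two
periodic trajectories. -/
theorem finiteness_angle_circle (p₀ : ℝ × ℝ) (hp₀ : 0 < nrm p₀) (hp₀' : nrm p₀ < 1)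
    (α : ℝ) (hα : α ∈ Set.Ioo 0 Real.pi) :
    {vv : (ℝ × ℝ) × (ℝ × ℝ) |
      nrm vv.1 = 1 ∧ nrm vv.2 = 1 ∧ ip vv.1 vv.2 = Real.cos α ∧
      (∃ q, IsCircTrajectory p₀ vv.1 q ∧ IsPeriodicTraj q) ∧
      (∃ q, IsCircTrajectory p₀ vv.2 q ∧ IsPeriodicTraj q)}.Finite := by
  have hR0 : 0 < p₀.1 * p₀.1 + p₀.2 * p₀.2 := Real.sqrt_pos.1 hp₀
  have hR1 : p₀.1 * p₀.1 + p₀.2 * p₀.2 < 1 := by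
    have := hp₀'
    rw [nrm, Real.sqrt_lt' one_pos, one_pow] at this
    exact this
  set R := p₀.1 * p₀.1 + p₀.2 * p₀.2 with hR
  set c := Real.cos α with hc
  have hsin := Real.sin_pos_of_pos_of_lt_pi hα.1 hα.2
  have hc2 : 0 < 1 - c ^ 2 := by
    have := Real.sin_sq_add_cos_sq α
    nlinarith
  set K := (1 - R) * (1 - c ^ 2) with hKd
  have hK : 0 < K := mul_pos (by linarith) hc2
  have hS := sol_finite (Real.neg_one_le_cos α) (Real.cos_le_one α) hK
  have hF1 : (⋃ ab ∈ {ab : ℂ × ℂ | Sol c K ab.1 ab.2}, {z : ℂ | z ^ 2 = ab.1 * ab.2}).Finite :=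
    hS.biUnion fun ab _ => fin_pow 2 two_pos _
  have hF2 : (⋃ ab ∈ {ab : ℂ × ℂ | Sol c K ab.1 ab.2}, {z : ℂ | z ^ 2 = ab.1 * ab.2⁻¹}).Finite :=
    hS.biUnion fun ab _ => fin_pow 2 two_pos _
  refine ((hF1.biUnion fun z _ => fin_cross hR0 z.re).prod
    (hF2.biUnion fun z _ => fin_cross hR0 z.re)).subset ?_
  rintro ⟨v, v'⟩ ⟨n1, n2, hip, ⟨q, hq, hqp⟩, ⟨q', hq', hqp'⟩⟩
  obtain ⟨w, ⟨m, hm, hwm⟩, hw⟩ := traj_root hq hqp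
  obtain ⟨w', ⟨m', hm', hwm'⟩, hw'⟩ := traj_root hq' hqp'
  have n1 := ip_self_of_nrm n1
  have n2 := ip_self_of_nrm n2
  simp only [ip] at hip n1 n2 hw hw'
  have root : ∀ {w : ℂ} {m : ℕ}, 0 < m → w ^ m = 1 →
      ∃ M, 0 < M ∧ (-Complex.I * w) ^ M = 1 := by
    intro w m hm h
    refine ⟨4 * m, by omega, ?_⟩
    have : (-Complex.I) ^ 4 = 1 := by rw [neg_pow, Complex.I_pow_four]; norm_num
    rw [mul_pow, pow_mul, this, one_pow, mul_comm 4 m, pow_mul, h, one_pow, one_mul]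
  obtain ⟨M, hM, hz⟩ := root hm hwm
  obtain ⟨M', hM', hz'⟩ := root hm' hwm'
  have hre : (-Complex.I * w).re = p₀.1 * v.2 - p₀.2 * v.1 := by rw [← hw]; simp
  have hre' : (-Complex.I * w').re = p₀.1 * v'.2 - p₀.2 * v'.1 := by rw [← hw']; simp
  set z := -Complex.I * w
  set z' := -Complex.I * w'
  have nz := norm_of_pow hM hz
  have nz' := norm_of_pow hM' hz'
  have hz'0 : z' ≠ 0 := by intro h; rw [h] at nz'; simp at nz'
  have sq : z.re * z.re + z.im * z.im = 1 := by
    have := Complex.sq_norm z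
    rw [nz, Complex.normSq_apply] at this
    linarith
  have sq' : z'.re * z'.re + z'.im * z'.im = 1 := by
    have := Complex.sq_norm z'
    rw [nz', Complex.normSq_apply] at this
    linarith
  have hell : z.re ^ 2 + z'.re ^ 2 - 2 * c * z.re * z'.re = R * (1 - c ^ 2) := by
    rw [hre, hre', ← hip, hR]
    linear_combination (-(p₀.1 * v.2 - p₀.2 * v.1) ^ 2) * n2 - (p₀.1 * v'.2 - p₀.2 * v'.1) ^ 2 * n1
      + (p₀.1 * p₀.1 + p₀.2 * p₀.2) * ((v'.1 * v'.1 + v'.2 * v'.2) * n1 + n2)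
  have hsol : Sol c K (z * z') (z * z'⁻¹) := by
    refine ⟨⟨M * M', by positivity, ?_⟩, ⟨M * M', by positivity, ?_⟩, ?_⟩
    · rw [mul_pow, pow_mul, hz, mul_comm M M', pow_mul, hz']; simp
    · rw [mul_pow, pow_mul, hz, mul_comm M M', inv_pow, pow_mul, hz']; simp
    · rw [Complex.inv_eq_conj nz']
      simp only [Complex.mul_re, Complex.conj_re, Complex.conj_im]
      rw [hKd]
      linear_combination hell - (z'.im * z'.im) * sq + (z.re * z.re - 1) * sq'
  have hmem : (z * z', z * z'⁻¹) ∈ {ab : ℂ × ℂ | Sol c K ab.1 ab.2} := hsol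
  refine ⟨?_, ?_⟩
  · refine Set.mem_biUnion (x := z) (Set.mem_biUnion hmem ?_) ⟨n1, hre.symm⟩
    simp only [Set.mem_ofPred_eq]
    field_simp
  · refine Set.mem_biUnion (x := z') (Set.mem_biUnion hmem ?_) ⟨n2, hre'.symm⟩
    have : z ≠ 0 := by intro h; rw [h] at nz; simp at nz
    simp only [Set.mem_ofPred_eq]
    field_simp
end
end

section
/- Let λ₁, λ₂ ∈ ℂ* be multiplicatively independent (i.e. if λ₁^a·λ₂^b = 1 with a, b ∈ ℤ then a = b = 0), and let β be the automorphism of ℙ²(ℂ) induced by the diagonal matrix diag(λ₁, λ₂, 1). Let L₁, L₂, L₃ be lines in ℙ²(ℂ) lying in pairwise distinct β-orbits (β^k(L_i) ≠ L_j for all k ∈ ℤ and all i ≠ j). Then there are only finitely many β-orbits of points of ℙ²(ℂ) which intersect all three lines L₁, L₂, L₃: there exists a finite set F ⊂ ℙ²(ℂ) such that every point P ∈ ℙ²(ℂ) for which there exist integers m₁, m₂, m₃ with β^{m₁}(P) ∈ L₁, β^{m₂}(P) ∈ L₂ and β^{m₃}(P) ∈ L₃ lies in the β-orbit of some element of F.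 -/
noncomputable section

open Projectivization

/-- The projective plane `ℙ²(ℂ)`. -/
abbrev ProjPlane := Projectivization ℂ (Fin 3 → ℂ)

/-- The automorphism of `ℙ²(ℂ)` induced by a linear automorphism `g` of `ℂ³`. -/
def projAct (g : (Fin 3 → ℂ) ≃ₗ[ℂ] (Fin 3 → ℂ)) (x : ProjPlane) : ProjPlane :=
  Projectivization.map g.toLinearMap g.injective x

/-- The point `P ∈ ℙ²(ℂ)` lies on the line which is the projectivization of the
2-dimensional subspace `W ⊂ ℂ³`. -/
def OnLine (P : ProjPlane) (W : Submodule ℂ (Fin 3 → ℂ)) : Prop :=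
  P.submodule ≤ W

section helpers
open Height AdmissibleAbsValues

open Finset Nat in
theorem aux_lcm_mono {m N : ℕ} (h : m ≤ N) : m.lcmUpto ∣ N.lcmUpto := by
  unfold Nat.lcmUpto
  apply Finset.lcm_dvd
  intro b hb
  apply Finset.dvd_lcm (f := id)
  simp only [Finset.mem_Icc] at hb ⊢
  omega

theorem aux_dvd_lcm {m N : ℕ} (h0 : 1 ≤ m) (h : m ≤ N) : m ∣ N.lcmUpto := by
  unfold Nat.lcmUpto
  apply Finset.dvd_lcm (f := id)
  simp only [Finset.mem_Icc]
  omega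

theorem aux_choose_dvd {m n N : ℕ} (h : m ≤ N) (hn : n ≤ m) : m.choose n ∣ N.lcmUpto :=
  (Chebyshev.choose_dvd_lcmUpto hn).trans (aux_lcm_mono h)

theorem aux_prod_desc (m n : ℕ) :
    ∏ i ∈ Finset.range n, ((m : ℤ) - i) = (n.factorial : ℤ) * (m.choose n : ℤ) := by
  rw [← descPochhammer_eval_eq_prod_range, descPochhammer_eval_eq_descFactorial,
    Nat.descFactorial_eq_factorial_mul_choose]
  push_cast; rfl

theorem aux_choose_le {m n N : ℕ} (h : m ≤ N) : ((m.choose n : ℕ) : ℤ) ≤ 2 ^ N := by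
  have h1 : m.choose n ≤ 2 ^ N := (Nat.choose_le_two_pow m n).trans (Nat.pow_le_pow_right (by norm_num) h)
  exact_mod_cast h1

theorem aux_block (n N : ℕ) (x : ℤ) (hx : x ≤ N) (hx' : -x + n ≤ N + 1) :
    ∃ b : ℤ, ∏ i ∈ Finset.range n, (x - i) = (n.factorial : ℤ) * b ∧ |b| ≤ 2 ^ N ∧
      ((x < 0 ∨ n ≤ x) → b ≠ 0 ∧ b ∣ (N.lcmUpto : ℤ)) := by
  by_cases h0 : 0 ≤ x
  · lift x to ℕ using h0
    have hxN : x ≤ N := by exact_mod_cast hx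
    refine ⟨x.choose n, aux_prod_desc x n, ?_, ?_⟩
    · rw [abs_of_nonneg (by positivity)]
      exact aux_choose_le hxN
    · intro h
      have h2 : n ≤ x := by omega
      refine ⟨?_, ?_⟩
      · exact_mod_cast (Nat.choose_pos h2).ne'
      · exact_mod_cast aux_choose_dvd hxN h2
  · push Not at h0
    obtain ⟨m, hm⟩ : ∃ m : ℕ, (m : ℤ) = -x + n - 1 := ⟨(-x + n - 1).toNat, by omega⟩
    have hmN : m ≤ N := by omega
    have hnm : n ≤ m := by omega
    refine ⟨(-1) ^ n * m.choose n, ?_, ?_, ?_⟩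
    · rw [mul_left_comm, ← aux_prod_desc m n, ← Finset.prod_range_reflect]
      rw [← Finset.card_range n, ← Finset.prod_const, Finset.card_range, ← Finset.prod_mul_distrib]
      apply Finset.prod_congr rfl
      intro i hi
      have := Finset.mem_range.1 hi
      rw [hm]
      have : ((n - 1 - i : ℕ) : ℤ) = n - 1 - i := by omega
      rw [this]; ring
    · rw [abs_mul, abs_pow, abs_neg, abs_one, one_pow, one_mul, abs_of_nonneg (by positivity)]
      exact aux_choose_le hmN
    · intro _
      refine ⟨?_, ?_⟩
      · have := (Nat.choose_pos hnm).ne'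
        have h2 : ((m.choose n : ℕ) : ℤ) ≠ 0 := by exact_mod_cast this
        exact mul_ne_zero (pow_ne_zero _ (by norm_num)) h2
      · have h1 : ((m.choose n : ℕ) : ℤ) ∣ (N.lcmUpto : ℤ) := by exact_mod_cast aux_choose_dvd hmN hnm
        rcases neg_one_pow_eq_or ℤ n with h | h <;> rw [h] <;> simpa using h1

theorem aux_own (n i : ℕ) (hi : i < n) : ∃ t : ℤ,
    (∏ i' ∈ (Finset.range n).erase i, ((i : ℤ) - i')) * t = ((n - 1).factorial : ℤ) ∧ |t| ≤ 2 ^ n := by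
  obtain ⟨m, rfl⟩ : ∃ m, n = i + 1 + m := ⟨n - (i + 1), by omega⟩
  have hs : (Finset.range (i + 1 + m)).erase i =
      Finset.range i ∪ (Finset.range m).image (fun k => i + 1 + k) := by
    ext a
    simp only [Finset.mem_erase, Finset.mem_range, Finset.mem_union, Finset.mem_image]
    constructor
    · rintro ⟨h1, h2⟩
      by_cases h : a < i
      · exact Or.inl h
      · exact Or.inr ⟨a - (i + 1), by omega, by omega⟩
    · rintro (h | ⟨k, h1, h2⟩) <;> omega
  have hd : Disjoint (Finset.range i) ((Finset.range m).image (fun k => i + 1 + k)) := by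
    rw [Finset.disjoint_left]
    intro a ha hb
    simp only [Finset.mem_range, Finset.mem_image] at ha hb
    obtain ⟨k, h1, h2⟩ := hb
    omega
  have h1 : ∏ i' ∈ Finset.range i, ((i : ℤ) - i') = (i.factorial : ℤ) := by
    rw [aux_prod_desc, Nat.choose_self]; simp
  have h2 : ∏ k ∈ Finset.range m, ((i : ℤ) - ((i + 1 + k : ℕ) : ℤ)) = (-1) ^ m * (m.factorial : ℤ) := by
    rw [← Finset.prod_range_add_one_eq_factorial]
    push_cast
    rw [← Finset.card_range m, ← Finset.prod_const, Finset.card_range, ← Finset.prod_mul_distrib]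
    apply Finset.prod_congr rfl
    intro k _; ring
  refine ⟨(-1) ^ m * ((i + m).choose m : ℕ), ?_, ?_⟩
  · rw [hs, Finset.prod_union hd, Finset.prod_image (by intro a _ b _ h; simpa using h), h1, h2]
    have : i + 1 + m - 1 = i + m := by omega
    rw [this, ← Nat.add_choose_mul_factorial_mul_factorial i m]
    have h3 : ((-1 : ℤ) ^ m) * (-1) ^ m = 1 := by rw [← mul_pow]; simp
    push_cast
    linear_combination ((i.factorial : ℤ) * m.factorial * (i + m).choose m) * h3
  · rw [abs_mul, abs_pow, abs_neg, abs_one, one_pow, one_mul, abs_of_nonneg (by positivity)]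
    exact aux_choose_le (by omega)

/-- One-block quotient for a block different from that of the node. -/
theorem aux_other (n N : ℕ) (x y : ℤ) (hx : x ≤ N) (hx' : -x + n ≤ N + 1) (hxo : x < 0 ∨ n ≤ x)
    (hy : y ≤ N) (hy' : -y + n ≤ N + 1) :
    ∃ f : ℤ, f * ∏ i ∈ Finset.range n, (x - i) = N.lcmUpto * ∏ i ∈ Finset.range n, (y - i) ∧
      |f| ≤ N.lcmUpto * 8 ^ N := by
  obtain ⟨b, hb, hb1, hb2⟩ := aux_block n N x hx hx'
  obtain ⟨b', hb', hb1', -⟩ := aux_block n N y hy hy'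
  obtain ⟨hb0, g, hg⟩ := hb2 hxo
  refine ⟨g * b', ?_, ?_⟩
  · rw [hb, hb', hg]; ring
  · rw [abs_mul]
    have h1 : |g| ≤ N.lcmUpto := by
      have h2 : |b| * |g| = N.lcmUpto := by rw [← abs_mul, ← hg, abs_of_nonneg (by positivity)]
      have h3 : 1 ≤ |b| := Int.one_le_abs hb0
      nlinarith [abs_nonneg g]
    have h2 : (2 : ℤ) ^ N ≤ 8 ^ N := by gcongr; norm_num
    have := hb1'.trans h2
    gcongr

theorem aux_same (n N i : ℕ) (hi : i < n) (hnN : n ≤ N) (y : ℤ) (hyo : y < 0 ∨ n ≤ y)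
    (hy : y ≤ N) (hy' : -y + n ≤ N + 1) :
    ∃ f : ℤ, f * ∏ i' ∈ (Finset.range n).erase i, ((i : ℤ) - i') =
        N.lcmUpto * ∏ i' ∈ (Finset.range n).erase i, (y - i') ∧
      |f| ≤ N.lcmUpto * 8 ^ N := by
  obtain ⟨b, hb, hb1, -⟩ := aux_block n N y hy hy'
  obtain ⟨t, ht, ht1⟩ := aux_own n i hi
  have hne : y - i ≠ 0 := by omega
  have hdvd : (y - i) ∣ (N.lcmUpto : ℤ) := by
    rw [← Int.natAbs_dvd_natAbs, Int.natAbs_natCast]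
    apply aux_dvd_lcm <;> omega
  obtain ⟨g, hg⟩ := hdvd
  rw [← Finset.mul_prod_erase _ _ (Finset.mem_range.2 hi)] at hb
  refine ⟨g * n * t * b, ?_, ?_⟩
  · have hf : (n : ℤ) * ((n - 1).factorial : ℤ) = n.factorial := by
      exact_mod_cast Nat.mul_factorial_pred (by omega)
    rw [hg]
    linear_combination (g * n * b) * ht + g * b * hf - g * hb
  · have h1 : |g| ≤ N.lcmUpto := by
      have h2 : |y - i| * |g| = N.lcmUpto := by rw [← abs_mul, ← hg, abs_of_nonneg (by positivity)]
      have h3 : 1 ≤ |y - i| := Int.one_le_abs hne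
      nlinarith [abs_nonneg g]
    have h2 : (n : ℤ) ≤ 2 ^ N := by
      have : n ≤ 2 ^ N := hnN.trans Nat.lt_two_pow_self.le
      exact_mod_cast this
    have h3 : |t| ≤ 2 ^ N := ht1.trans (by gcongr; norm_num)
    have h8 : (8 : ℤ) ^ N = 2 ^ N * 2 ^ N * 2 ^ N := by rw [← mul_pow, ← mul_pow]; norm_num
    rw [abs_mul, abs_mul, abs_mul, h8, abs_of_nonneg (by positivity : (0 : ℤ) ≤ n)]
    calc |g| * n * |t| * |b| ≤ N.lcmUpto * 2 ^ N * 2 ^ N * 2 ^ N := by gcongr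
      _ = _ := by ring

theorem aux_prod_erase {ι : Type*} [DecidableEq ι] (s : Finset ι) (a : ι) (f : ι → ℤ) :
    ∏ e ∈ s.erase a, f e = ∏ e ∈ s, if e = a then 1 else f e := by
  rw [← Finset.prod_erase s (a := a) (f := fun e => if e = a then 1 else f e) (by simp)]
  apply Finset.prod_congr rfl
  intro e he
  rw [if_neg (Finset.ne_of_mem_erase he)]

theorem aux_coeff (n q J js i j : ℕ) (hnq : n < q) (hjs : js < J) (hi : i < n) (hj : j < J) :
    ∃ c : ℤ, c * ∏ e ∈ (Finset.range n ×ˢ Finset.range J).erase (i, j),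
        (((i + q * j : ℕ) : ℤ) - ((e.1 + q * e.2 : ℕ) : ℤ)) =
      ((q * J).lcmUpto : ℤ) ^ J * ∏ e ∈ (Finset.range n ×ˢ Finset.range J).erase (i, j),
        (((n + q * js : ℕ) : ℤ) - ((e.1 + q * e.2 : ℕ) : ℤ)) ∧
      |c| ≤ ((q * J).lcmUpto * 8 ^ (q * J)) ^ J := by
  have hN : ∀ a b : ℕ, a < J → b < J → (q : ℤ) * a - q * b + q ≤ q * J := by
    intro a b ha hb
    have h1 : (a : ℤ) + 1 ≤ J := by omega
    nlinarith [Int.natCast_nonneg b, Int.natCast_nonneg q]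
  have key : ∀ j' ∈ Finset.range J, ∃ f : ℤ,
      f * (∏ i' ∈ Finset.range n, if (i', j') = (i, j) then 1 else
        (((i + q * j : ℕ) : ℤ) - ((i' + q * j' : ℕ) : ℤ))) =
      (q * J).lcmUpto * (∏ i' ∈ Finset.range n, if (i', j') = (i, j) then 1 else
        (((n + q * js : ℕ) : ℤ) - ((i' + q * j' : ℕ) : ℤ))) ∧
      |f| ≤ (q * J).lcmUpto * 8 ^ (q * J) := by
    intro j' hj'
    rw [Finset.mem_range] at hj'
    have e1 := hN j j' hj hj'
    have e2 := hN j' j hj' hj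
    have e3 := hN js j' hjs hj'
    have e4 := hN j' js hj' hjs
    by_cases hjj : j' = j
    · subst hjj
      have hy : (((n : ℤ) + q * js - q * j') < 0 ∨ (n : ℤ) ≤ (n : ℤ) + q * js - q * j') := by
        rcases lt_or_ge js j' with h | h
        · left
          have : (js : ℤ) + 1 ≤ j' := by omega
          nlinarith [Int.natCast_nonneg q]
        · right
          have : (j' : ℤ) ≤ js := by omega
          nlinarith [Int.natCast_nonneg q]
      obtain ⟨f, hf, hf1⟩ := aux_same n (q * J) i hi (by nlinarith)
        ((n : ℤ) + q * js - q * j') hy (by push_cast; omega) (by push_cast; omega)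
      refine ⟨f, ?_, hf1⟩
      rw [aux_prod_erase, aux_prod_erase] at hf
      convert hf using 3
      · simp only [Prod.mk.injEq, and_true]
        congr 1
        push_cast; ring
      · simp only [Prod.mk.injEq, and_true]
        congr 1
        push_cast; ring
    · have hx : (((i : ℤ) + q * j - q * j') < 0 ∨ (n : ℤ) ≤ (i : ℤ) + q * j - q * j') := by
        rcases lt_or_gt_of_ne hjj with h | h
        · right
          have : (j' : ℤ) + 1 ≤ j := by omega
          nlinarith [Int.natCast_nonneg q]
        · left
          have : (j : ℤ) + 1 ≤ j' := by omega
          nlinarith [Int.natCast_nonneg q]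
      obtain ⟨f, hf, hf1⟩ := aux_other n (q * J) ((i : ℤ) + q * j - q * j')
        ((n : ℤ) + q * js - q * j') (by push_cast; omega) (by push_cast; omega) hx
        (by push_cast; omega) (by push_cast; omega)
      refine ⟨f, ?_, hf1⟩
      convert hf using 3
      · simp only [Prod.mk.injEq, hjj, and_false, if_false]
        push_cast; ring
      · simp only [Prod.mk.injEq, hjj, and_false, if_false]
        push_cast; ring
  choose! f hf hf1 using key
  refine ⟨∏ j' ∈ Finset.range J, f j', ?_, ?_⟩
  · rw [aux_prod_erase, aux_prod_erase, Finset.prod_product_right, Finset.prod_product_right,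
      ← Finset.prod_mul_distrib, Finset.prod_congr rfl hf, Finset.prod_mul_distrib]
    simp
  · rw [Finset.abs_prod]
    calc _ ≤ ∏ j' ∈ Finset.range J, (((q * J).lcmUpto : ℤ) * 8 ^ (q * J)) :=
          Finset.prod_le_prod (fun _ _ => abs_nonneg _) hf1
      _ = _ := by simp

theorem aux_node_inj {n q : ℕ} (hnq : n < q) {i i' j j' : ℕ} (hi : i ≤ n) (hi' : i' ≤ n)
    (h : i + q * j = i' + q * j') : i = i' ∧ j = j' := by
  have h1 : i = i' := by
    have := congrArg (· % q) h
    simpa [Nat.add_mul_mod_self_left, Nat.mod_eq_of_lt (lt_of_le_of_lt hi hnq),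
      Nat.mod_eq_of_lt (lt_of_le_of_lt hi' hnq)] using this
  subst h1
  refine ⟨rfl, ?_⟩
  have : q * j = q * j' := by omega
  exact Nat.eq_of_mul_eq_mul_left (by omega) this

theorem aux_lagrange (n q J js : ℕ) (hnq : n < q) (hjs : js < J) :
    ∃ (M : ℤ) (c : ℕ × ℕ → ℤ), M ≠ 0 ∧ |M| ≤ ((q * J).lcmUpto * 8 ^ (q * J)) ^ J ∧
      (∀ e ∈ Finset.range n ×ˢ Finset.range J, |c e| ≤ ((q * J).lcmUpto * 8 ^ (q * J)) ^ J) ∧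
      ∀ (K : Type) [Field K] [CharZero K] (p : Polynomial K), p.degree < (n * J : ℕ) →
        (M : K) * p.eval ((n + q * js : ℕ) : K) =
          ∑ e ∈ Finset.range n ×ˢ Finset.range J, (c e : K) * p.eval ((e.1 + q * e.2 : ℕ) : K) := by
  have key : ∀ e ∈ Finset.range n ×ˢ Finset.range J, _ := fun e he =>
    aux_coeff n q J js e.1 e.2 hnq hjs (Finset.mem_range.1 (Finset.mem_product.1 he).1)
      (Finset.mem_range.1 (Finset.mem_product.1 he).2)
  choose! c hc hc1 using key
  have hL : ((q * J).lcmUpto : ℤ) ≠ 0 := by exact_mod_cast (q * J).lcmUpto_ne_zero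
  refine ⟨((q * J).lcmUpto : ℤ) ^ J, c, pow_ne_zero _ hL, ?_, hc1, ?_⟩
  · rw [abs_of_nonneg (by positivity)]
    gcongr
    have : (1 : ℤ) ≤ 8 ^ (q * J) := one_le_pow₀ (by norm_num)
    nlinarith [Int.natCast_nonneg (q * J).lcmUpto]
  · intro K _ _ p hp
    set s := Finset.range n ×ˢ Finset.range J with hs
    have hinj : Set.InjOn (fun e : ℕ × ℕ => ((e.1 + q * e.2 : ℕ) : K)) s := by
      intro a ha b hb hab
      simp only [hs, Finset.coe_product, Set.mem_prod, Finset.coe_range, Set.mem_Iio] at ha hb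
      have hab' : a.1 + q * a.2 = b.1 + q * b.2 := by
        simp only at hab
        exact_mod_cast hab
      have := aux_node_inj hnq ha.1.le hb.1.le hab'
      exact Prod.ext this.1 this.2
    have hcard : s.card = n * J := by simp [hs]
    have h1 := Lagrange.eq_interpolate hinj (by rw [hcard]; exact hp)
    conv_lhs => rw [h1]
    rw [Lagrange.interpolate_apply, Polynomial.eval_finsetSum, Finset.mul_sum]
    apply Finset.sum_congr rfl
    intro e he
    have h2 := congrArg (Int.cast : ℤ → K) (hc e he)
    push_cast at h2
    have hD : ∏ e' ∈ s.erase e, ((e.1 : K) + q * e.2 - (e'.1 + q * e'.2)) ≠ 0 := by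
      rw [Finset.prod_ne_zero_iff]
      intro e' he'
      rw [Finset.mem_erase] at he'
      intro h
      apply he'.1
      apply hinj he'.2 he
      push_cast
      exact (sub_eq_zero.1 h).symm
    rw [Polynomial.eval_mul, Polynomial.eval_C, Lagrange.basis, Polynomial.eval_prod]
    simp only [Lagrange.basisDivisor, Polynomial.eval_mul, Polynomial.eval_C, Polynomial.eval_sub,
      Polynomial.eval_X]
    rw [Finset.prod_mul_distrib, Finset.prod_inv_distrib]
    push_cast
    rw [← mul_right_inj' hD]
    field_simp
    linear_combination -(Polynomial.eval ((e.1 : K) + q * e.2) p) * h2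

/-- `v` is one of the places of the field. -/
def IsPl {K : Type} [Field K] [AdmissibleAbsValues K] (v : AbsoluteValue K ℝ) : Prop :=
  v ∈ archAbsVal (K := K) ∨ v ∈ nonarchAbsVal (K := K)

theorem pl_le_height {K : Type} [Field K] [AdmissibleAbsValues K] {v : AbsoluteValue K ℝ}
    (hv : IsPl v) (x : K) : v x ≤ mulHeight₁ x := by
  classical
  rw [mulHeight₁_eq]
  have hA : 1 ≤ (Multiset.map (fun v : AbsoluteValue K ℝ => max (v x) 1) archAbsVal).prod :=
    Multiset.one_le_prod_map fun _ _ ↦ le_max_right ..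
  have hB : 1 ≤ ∏ᶠ (v : nonarchAbsVal (K := K)), max (v.val x) 1 :=
    one_le_finprod fun _ ↦ le_max_right ..
  rcases hv with hv | hv
  · obtain ⟨t, ht⟩ := Multiset.exists_cons_of_mem hv
    have hC : 1 ≤ (Multiset.map (fun v : AbsoluteValue K ℝ => max (v x) 1) t).prod :=
      Multiset.one_le_prod_map fun _ _ ↦ le_max_right ..
    rw [ht, Multiset.map_cons, Multiset.prod_cons] at hA ⊢
    have h1 : v x ≤ max (v x) 1 := le_max_left _ _
    have h2 : 0 ≤ v x := v.nonneg x
    nlinarith [mul_le_mul hC hB (by norm_num) (by linarith)]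
  · have h1 : v x ≤ ∏ᶠ (v : nonarchAbsVal (K := K)), max (v.val x) 1 := by
      have hf : (fun v : nonarchAbsVal (K := K) => max (v.val x) 1).HasFiniteMulSupport := by fun_prop
      rw [finprod_eq_prod_of_mulSupport_subset _ (s := insert (⟨v, hv⟩ : nonarchAbsVal (K := K)) hf.toFinset) (by
        intro a ha
        rw [Finset.coe_insert]
        exact Or.inr (hf.mem_toFinset.2 ha))]
      rw [← Finset.mul_prod_erase _ _ (Finset.mem_insert_self _ _)]
      have h3 : (1 : ℝ) ≤ ∏ w ∈ (insert (⟨v, hv⟩ : nonarchAbsVal (K := K)) hf.toFinset).erase ⟨v, hv⟩, max (w.val x) 1 := by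
        calc (1 : ℝ) = ∏ w ∈ (insert (⟨v, hv⟩ : nonarchAbsVal (K := K)) hf.toFinset).erase ⟨v, hv⟩, 1 := by simp
          _ ≤ _ := Finset.prod_le_prod (fun _ _ => zero_le_one) (fun _ _ => le_max_right _ _)
      have h4 : v x ≤ max (v x) 1 := le_max_left _ _
      have h2 : 0 ≤ v x := v.nonneg x
      simp only
      nlinarith
    have h2 : 0 ≤ v x := v.nonneg x
    nlinarith

theorem pl_liouville {K : Type} [Field K] [AdmissibleAbsValues K] {v : AbsoluteValue K ℝ}
    (hv : IsPl v) {x : K} (hx : x ≠ 0) : -logHeight₁ x ≤ Real.log (v x) := by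
  have h := pl_le_height hv x⁻¹
  rw [mulHeight₁_inv, map_inv₀] at h
  have h0 : 0 < v x := v.pos hx
  rw [logHeight₁_eq_log_mulHeight₁, neg_le, ← Real.log_inv]
  exact Real.log_le_log (by positivity) h

theorem height_bound {K : Type} [Field K] [AdmissibleAbsValues K] (x u₁ u₂ u₃ : K) (a₁ a₂ a₃ : ℕ)
    (C : ℝ) (hC : 1 ≤ C)
    (hA : ∀ v ∈ archAbsVal (K := K), v x ≤ C * (max (v u₁) 1 ^ a₁ * max (v u₂) 1 ^ a₂ * max (v u₃) 1 ^ a₃))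
    (hN : ∀ v ∈ nonarchAbsVal (K := K), v x ≤ max (v u₁) 1 ^ a₁ * max (v u₂) 1 ^ a₂ * max (v u₃) 1 ^ a₃) :
    mulHeight₁ x ≤ C ^ totalWeight K *
      (mulHeight₁ u₁ ^ a₁ * mulHeight₁ u₂ ^ a₂ * mulHeight₁ u₃ ^ a₃) := by
  have hone : ∀ v : AbsoluteValue K ℝ, 1 ≤ max (v u₁) 1 ^ a₁ * max (v u₂) 1 ^ a₂ * max (v u₃) 1 ^ a₃ := by
    intro v
    exact one_le_mul_of_one_le_of_one_le (one_le_mul_of_one_le_of_one_le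
      (one_le_pow₀ (le_max_right _ _)) (one_le_pow₀ (le_max_right _ _))) (one_le_pow₀ (le_max_right _ _))
  have e : C ^ totalWeight K * (mulHeight₁ u₁ ^ a₁ * mulHeight₁ u₂ ^ a₂ * mulHeight₁ u₃ ^ a₃) =
    (archAbsVal.map fun v : AbsoluteValue K ℝ ↦
      C * (max (v u₁) 1 ^ a₁ * max (v u₂) 1 ^ a₂ * max (v u₃) 1 ^ a₃)).prod *
    ∏ᶠ v : nonarchAbsVal (K := K),
      (max (v.val u₁) 1 ^ a₁ * max (v.val u₂) 1 ^ a₂ * max (v.val u₃) 1 ^ a₃) := by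
    rw [finprod_mul_distrib (by fun_prop) (by fun_prop), finprod_mul_distrib (by fun_prop) (by fun_prop),
      ← finprod_pow (by fun_prop), ← finprod_pow (by fun_prop), ← finprod_pow (by fun_prop),
      Multiset.prod_map_mul, Multiset.prod_map_mul, Multiset.prod_map_mul, Multiset.prod_map_pow,
      Multiset.prod_map_pow, Multiset.prod_map_pow, Multiset.map_const', Multiset.prod_replicate]
    simp only [mulHeight₁_eq, totalWeight]
    ring
  rw [e, mulHeight₁_eq]
  gcongr
  · exact finprod_nonneg fun _ ↦ by positivity
  · refine Multiset.prod_map_nonneg fun v h ↦ ?_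
    have := hone v
    positivity
  · refine Multiset.prod_map_le_prod_map₀ _ _ (fun _ _ ↦ by positivity) fun v h ↦ ?_
    refine max_le (hA v h) ?_
    exact one_le_mul_of_one_le_of_one_le hC (hone v)
  · exact finprod_le_finprod (by fun_prop) (fun _ ↦ by positivity) (by fun_prop) <|
       fun v ↦ max_le (hN v v.2) (hone v)

theorem abv_int_le {K : Type} [Field K] (v : AbsoluteValue K ℝ) (c : ℤ) : v (c : K) ≤ |(c : ℝ)| := by
  obtain ⟨a, rfl | rfl⟩ := Int.eq_nat_or_neg c
  · simpa using v.apply_nat_le_self a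
  · simpa using v.apply_nat_le_self a

theorem abv_lin_bound {K : Type} [Field K] (v : AbsoluteValue K ℝ) {ι : Type*} (s : Finset ι)
    (M : ℤ) (c : ι → ℤ) (a : K) (b : ι → K) (B Y : ℝ) (hM : |(M : ℝ)| ≤ B)
    (hc : ∀ e ∈ s, |(c e : ℝ)| ≤ B) (ha : v a ≤ Y) (hb : ∀ e ∈ s, v (b e) ≤ Y) :
    v (M * a - ∑ e ∈ s, c e * b e) ≤ (s.card + 1) * (B * Y) := by
  have hB : 0 ≤ B := (abs_nonneg _).trans hM
  have h1 : v ((M : K) * a) ≤ B * Y := by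
    rw [map_mul]
    exact mul_le_mul ((abv_int_le v M).trans hM) ha (v.nonneg _) hB
  have h2 : v (∑ e ∈ s, c e * b e) ≤ s.card * (B * Y) := by
    refine (v.sum_le s _).trans ?_
    rw [← nsmul_eq_mul]
    apply Finset.sum_le_card_nsmul
    intro e he
    rw [map_mul]
    exact mul_le_mul ((abv_int_le v _).trans (hc e he)) (hb e he) (v.nonneg _) hB
  have h3 : v (M * a - ∑ e ∈ s, c e * b e) ≤ v ((M : K) * a) + v (∑ e ∈ s, c e * b e) := by
    rw [sub_eq_add_neg, ← v.map_neg (∑ e ∈ s, c e * b e)]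
    exact v.add_le _ _
  linarith

theorem abv_lin_bound_na {K : Type} [Field K] (v : AbsoluteValue K ℝ) (hv : IsNonarchimedean v)
    {ι : Type*} (s : Finset ι)
    (M : ℤ) (c : ι → ℤ) (a : K) (b : ι → K) (Y : ℝ) (ha : v a ≤ Y) (hb : ∀ e ∈ s, v (b e) ≤ Y) :
    v (M * a - ∑ e ∈ s, c e * b e) ≤ Y := by
  have hY : 0 ≤ Y := (v.nonneg _).trans ha
  have hint : ∀ (m : ℤ) (z : K), v z ≤ Y → v (m * z) ≤ Y := by
    intro m z hz
    rw [map_mul]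
    have : v (m : K) ≤ 1 := hv.apply_intCast_le_one
    calc _ ≤ 1 * v z := by gcongr
      _ ≤ Y := by simpa using hz
  have hsum : v (∑ e ∈ s, c e * b e) ≤ Y := by
    rcases s.eq_empty_or_nonempty with rfl | hs
    · simpa using hY
    · refine (hv.apply_sum_le_sup hs).trans ?_
      rw [Finset.sup'_le_iff]
      exact fun e he => hint _ _ (hb e he)
  rw [sub_eq_add_neg]
  refine (hv _ _).trans (max_le (hint _ _ ha) ?_)
  rwa [v.map_neg]

theorem exists_nonvanish {K : Type} [Field K] [CharZero K] (n q J : ℕ) (hn : 1 ≤ n) (hnq : n < q)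
    (hJ : 1 ≤ J) (ξ y : K) (hξ : ξ ≠ 1) :
    ∃ js, js < J ∧ ∃ (M : ℤ) (c : ℕ × ℕ → ℤ), |M| ≤ ((q * J).lcmUpto * 8 ^ (q * J)) ^ J ∧
      (∀ e ∈ Finset.range n ×ˢ Finset.range J, |c e| ≤ ((q * J).lcmUpto * 8 ^ (q * J)) ^ J) ∧
      (∀ (p : Polynomial K), p.degree < (n * J : ℕ) →
        (M : K) * p.eval ((n + q * js : ℕ) : K) =
          ∑ e ∈ Finset.range n ×ˢ Finset.range J, (c e : K) * p.eval ((e.1 + q * e.2 : ℕ) : K)) ∧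
      (M : K) * (ξ ^ (n + q * js) * y ^ js) -
        ∑ e ∈ Finset.range n ×ˢ Finset.range J, (c e : K) * (ξ ^ (e.1 + q * e.2) * y ^ e.2) ≠ 0 := by
  by_contra! hcon
  set s := Finset.range n ×ˢ Finset.range J with hs
  have hinj : Set.InjOn (fun e : ℕ × ℕ => ((e.1 + q * e.2 : ℕ) : K)) s := by
    intro a ha b hb hab
    simp only [hs, Finset.coe_product, Set.mem_prod, Finset.coe_range, Set.mem_Iio] at ha hb
    have hab' : a.1 + q * a.2 = b.1 + q * b.2 := by
      simp only at hab
      exact_mod_cast hab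
    have := aux_node_inj hnq ha.1.le hb.1.le hab'
    exact Prod.ext this.1 this.2
  have hcard : s.card = n * J := by simp [hs]
  set p := Lagrange.interpolate s (fun e : ℕ × ℕ => ((e.1 + q * e.2 : ℕ) : K))
    (fun e => ξ ^ (e.1 + q * e.2) * y ^ e.2) with hp
  have hdeg : p.degree < (n * J : ℕ) := by
    rw [← hcard]; exact Lagrange.degree_interpolate_lt _ hinj
  have hev : ∀ e ∈ s, p.eval ((e.1 + q * e.2 : ℕ) : K) = ξ ^ (e.1 + q * e.2) * y ^ e.2 :=
    fun e he => Lagrange.eval_interpolate_at_node (fun e : ℕ × ℕ => ξ ^ (e.1 + q * e.2) * y ^ e.2) hinj he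
  have hev2 : ∀ js < J, p.eval ((n + q * js : ℕ) : K) = ξ ^ (n + q * js) * y ^ js := by
    intro js hjs
    obtain ⟨M, c, hM0, hM, hc, hpoly⟩ := aux_lagrange n q J js hnq hjs
    have h1 := hcon js hjs M c hM hc (fun p hp => hpoly K p hp)
    have h2 := hpoly K p hdeg
    rw [Finset.sum_congr rfl (fun e he => by rw [hev e he])] at h2
    have hM0' : (M : K) ≠ 0 := by exact_mod_cast hM0
    apply mul_left_cancel₀ hM0'
    rw [h2]
    exact (sub_eq_zero.1 h1).symm
  have hall : ∀ i ≤ n, ∀ j < J, p.eval ((i + q * j : ℕ) : K) = ξ ^ (i + q * j) * y ^ j := by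
    intro i hi j hj
    rcases hi.lt_or_eq with h | h
    · exact hev (i, j) (by simp [hs, h, hj])
    · subst h; exact hev2 j hj
  have hcomp : (p.comp (Polynomial.X + 1)).natDegree = p.natDegree := by
    rw [Polynomial.natDegree_comp, ← Polynomial.C_1, Polynomial.natDegree_X_add_C, mul_one]
  have hr : p.comp (Polynomial.X + 1) - Polynomial.C ξ * p = 0 := by
    apply Polynomial.eq_zero_of_degree_lt_of_eval_index_eq_zero _ hinj
    · rw [hcard]
      refine (Polynomial.degree_sub_le _ _).trans_lt (max_lt ?_ ?_)
      · by_cases h0 : p = 0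
        · rw [h0, Polynomial.zero_comp, Polynomial.degree_zero]; exact WithBot.bot_lt_coe _
        · have : p.natDegree < n * J := (Polynomial.natDegree_lt_iff_degree_lt h0).2 hdeg
          refine (Polynomial.degree_le_natDegree).trans_lt ?_
          rw [hcomp]; exact_mod_cast this
      · refine lt_of_le_of_lt ?_ hdeg
        rw [Polynomial.degree_mul]
        calc _ ≤ 0 + p.degree := by gcongr; exact Polynomial.degree_C_le
          _ = _ := zero_add _
    · intro e he
      simp only [hs, Finset.mem_product, Finset.mem_range] at he
      have h1 := hall e.1 he.1.le e.2 he.2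
      have h2 := hall (e.1 + 1) he.1 e.2 he.2
      rw [Polynomial.eval_sub, Polynomial.eval_comp, Polynomial.eval_mul, Polynomial.eval_C, h1]
      have : (Polynomial.X + 1 : Polynomial K).eval ((e.1 + q * e.2 : ℕ) : K) = ((e.1 + 1 + q * e.2 : ℕ) : K) := by
        simp; ring
      rw [this, h2]; ring
  have hlc : p.leadingCoeff = ξ * p.leadingCoeff := by
    have h1 := Polynomial.leadingCoeff_comp (p := p) (q := (Polynomial.X + 1 : Polynomial K))
      (by rw [← Polynomial.C_1, Polynomial.natDegree_X_add_C]; norm_num)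
    rw [sub_eq_zero.1 hr, Polynomial.leadingCoeff_mul, Polynomial.leadingCoeff_C, ← Polynomial.C_1,
      Polynomial.leadingCoeff_X_add_C] at h1
    rw [h1]; simp
  have hp0 : p.leadingCoeff = 0 := by
    have : (1 - ξ) * p.leadingCoeff = 0 := by linear_combination hlc
    rcases mul_eq_zero.1 this with h | h
    · exact absurd (sub_eq_zero.1 h).symm hξ
    · exact h
  rw [Polynomial.leadingCoeff_eq_zero] at hp0
  have h0 := hall 0 (by omega) 0 (by omega)
  rw [hp0] at h0
  simp at h0

theorem taylor_split {K : Type} [Field K] [CharZero K] (v : AbsoluteValue K ℝ) (ξ y : K)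
    (ε₁ ε₂ : ℝ) (h1 : ε₁ ≤ 1) (h2 : ε₂ ≤ 1) (hξ : v (ξ - 1) ≤ ε₁) (hy : v (y - 1) ≤ ε₂) (D N J : ℕ) :
    ∃ p : Polynomial K, p.degree < (D : ℕ) ∧ ∀ x j : ℕ, x ≤ N → j ≤ J →
      v (ξ ^ x * y ^ j - p.eval (x : K)) ≤ 2 ^ (N + J) * (ε₁ ^ D + ε₂) := by
  have he1 : 0 ≤ ε₁ := (v.nonneg _).trans hξ
  have he2 : 0 ≤ ε₂ := (v.nonneg _).trans hy
  set δ := ξ - 1 with hδ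
  have hv2 : ∀ z : K, ∀ ε : ℝ, ε ≤ 1 → v (z - 1) ≤ ε → v z ≤ 2 := by
    intro z ε hε hz
    have := v.add_le (z - 1) 1
    rw [sub_add_cancel, map_one] at this
    linarith
  have hxi2 := hv2 ξ ε₁ h1 hξ
  have hy2 := hv2 y ε₂ h2 hy
  have hyj : ∀ j : ℕ, v (y ^ j - 1) ≤ (2 ^ j - 1) * ε₂ := by
    intro j
    induction j with
    | zero => simp
    | succ j ih =>
      have e : y ^ (j + 1) - 1 = y * (y ^ j - 1) + (y - 1) := by ring
      rw [e]
      refine (v.add_le _ _).trans ?_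
      rw [map_mul]
      have : v y * v (y ^ j - 1) ≤ 2 * ((2 ^ j - 1) * ε₂) :=
        mul_le_mul hy2 ih (v.nonneg _) (by norm_num)
      rw [pow_succ]
      linarith
  refine ⟨∑ a ∈ Finset.range D, Polynomial.C (δ ^ a / (a.factorial : K)) * descPochhammer K a, ?_, ?_⟩
  · refine (Polynomial.degree_sum_le _ _).trans_lt ?_
    rw [Finset.sup_lt_iff (WithBot.bot_lt_coe _)]
    intro a ha
    have h3 : (Polynomial.C (δ ^ a / (a.factorial : K)) * descPochhammer K a).natDegree ≤ a :=
      (Polynomial.natDegree_C_mul_le _ _).trans (descPochhammer_natDegree K a).le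
    refine (Polynomial.degree_le_of_natDegree_le h3).trans_lt ?_
    exact_mod_cast Finset.mem_range.1 ha
  · intro x j hx hj
    have hev : (∑ a ∈ Finset.range D, Polynomial.C (δ ^ a / (a.factorial : K)) * descPochhammer K a).eval (x : K)
        = ∑ a ∈ Finset.range D, δ ^ a * (x.choose a : K) := by
      rw [Polynomial.eval_finsetSum]
      apply Finset.sum_congr rfl
      intro a _
      rw [Polynomial.eval_mul, Polynomial.eval_C, Nat.cast_choose_eq_descPochhammer_div]
      ring
    have hsub : Finset.range (x + 1) ⊆ Finset.range (D + (N + 1)) := by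
      intro a; simp only [Finset.mem_range]; omega
    have hxi : ξ ^ x = ∑ a ∈ Finset.range (D + (N + 1)), δ ^ a * (x.choose a : K) := by
      have : ξ = δ + 1 := by rw [hδ]; ring
      rw [this, add_pow]
      simp only [one_pow, mul_one]
      apply Finset.sum_subset hsub
      intro a _ ha
      rw [Finset.mem_range] at ha
      rw [Nat.choose_eq_zero_of_lt (by omega)]; simp
    have hsum : ((2 : ℝ)) ^ x = ∑ a ∈ Finset.range (D + (N + 1)), (x.choose a : ℝ) := by
      have : (2 : ℝ) = 1 + 1 := by norm_num
      rw [this, add_pow]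
      simp only [one_pow, mul_one, one_mul]
      apply Finset.sum_subset hsub
      intro a _ ha
      rw [Finset.mem_range] at ha
      rw [Nat.choose_eq_zero_of_lt (by omega)]; simp
    rw [Finset.sum_range_add] at hsum
    have hR : v (ξ ^ x - ∑ a ∈ Finset.range D, δ ^ a * (x.choose a : K)) ≤ 2 ^ x * ε₁ ^ D := by
      rw [hxi, Finset.sum_range_add, add_sub_cancel_left]
      refine (v.sum_le _ _).trans ?_
      have hpos : (0 : ℝ) ≤ ∑ a ∈ Finset.range D, (x.choose a : ℝ) :=
        Finset.sum_nonneg (fun _ _ => by positivity)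
      calc ∑ a ∈ Finset.range (N + 1), v (δ ^ (D + a) * (x.choose (D + a) : K))
          ≤ ∑ a ∈ Finset.range (N + 1), (x.choose (D + a) : ℝ) * ε₁ ^ D := by
            apply Finset.sum_le_sum
            intro a _
            rw [map_mul, map_pow, mul_comm]
            refine mul_le_mul (v.apply_nat_le_self _) ?_ (by positivity) (by positivity)
            calc v δ ^ (D + a) ≤ ε₁ ^ (D + a) := by gcongr
              _ ≤ ε₁ ^ D := pow_le_pow_of_le_one he1 h1 (by omega)
        _ = (∑ a ∈ Finset.range (N + 1), (x.choose (D + a) : ℝ)) * ε₁ ^ D := by rw [Finset.sum_mul]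
        _ ≤ 2 ^ x * ε₁ ^ D := by
            gcongr
            linarith
    rw [hev]
    have e : ξ ^ x * y ^ j - ∑ a ∈ Finset.range D, δ ^ a * (x.choose a : K) =
      (ξ ^ x - ∑ a ∈ Finset.range D, δ ^ a * (x.choose a : K)) + ξ ^ x * (y ^ j - 1) := by ring
    rw [e]
    refine (v.add_le _ _).trans ?_
    have hA : v (ξ ^ x * (y ^ j - 1)) ≤ 2 ^ N * (2 ^ J * ε₂) := by
      rw [map_mul, map_pow]
      refine mul_le_mul ?_ ?_ (v.nonneg _) (by positivity)
      · calc v ξ ^ x ≤ 2 ^ x := by gcongr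
          _ ≤ 2 ^ N := by gcongr; norm_num
      · refine (hyj j).trans ?_
        gcongr
        have : (2 : ℝ) ^ j ≤ 2 ^ J := by gcongr; norm_num
        linarith
    have hB : (2 : ℝ) ^ x * ε₁ ^ D ≤ 2 ^ N * 2 ^ J * ε₁ ^ D := by
      gcongr
      calc (2 : ℝ) ^ x ≤ 2 ^ N * 1 := by rw [mul_one]; gcongr; norm_num
        _ ≤ 2 ^ N * 2 ^ J := by gcongr; exact one_le_pow₀ (by norm_num)
    rw [pow_add]
    linarith

theorem coeff_exp_bound (q J : ℕ) (hJ : 1 ≤ J) :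
    (((((q * J).lcmUpto : ℤ) * 8 ^ (q * J)) ^ J : ℤ) : ℝ) ≤ Real.exp (8 * (q * J ^ 2)) := by
  push_cast
  have h1 := Chebyshev.psi_le_const_mul_self (x := ((q * J : ℕ) : ℝ)) (by positivity)
  rw [Chebyshev.psi_eq_log_lcmUpto] at h1
  have hpos : (0 : ℝ) < ((q * J).lcmUpto : ℝ) := by exact_mod_cast (q * J).lcmUpto_pos
  rw [← Real.log_le_iff_le_exp (by positivity), Real.log_pow, Real.log_mul hpos.ne' (by positivity),
    Real.log_pow]
  have h2 := Real.log_two_lt_d9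
  have h4 : Real.log 4 = 2 * Real.log 2 := by
    rw [show (4 : ℝ) = 2 ^ 2 by norm_num, Real.log_pow]; norm_num
  have h8 : Real.log 8 = 3 * Real.log 2 := by
    rw [show (8 : ℝ) = 2 ^ 3 by norm_num, Real.log_pow]; norm_num
  rw [h4] at h1
  rw [h8]
  push_cast at h1 ⊢
  have h5 : (0 : ℝ) ≤ q * J := by positivity
  have h6 : (0 : ℝ) ≤ J := by positivity
  have h7 : Real.log ((q * J).lcmUpto) + q * J * (3 * Real.log 2) ≤ 8 * (q * J) := by nlinarith
  calc _ ≤ (J : ℝ) * (8 * (q * J)) := by gcongr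
    _ = _ := by ring

theorem core_ineq {K : Type} [Field K] [CharZero K] [AdmissibleAbsValues K] {v : AbsoluteValue K ℝ}
    (hv : IsPl v) (lam g₁ g₂ : K) (hl : lam ≠ 0) (hg₁ : g₁ ≠ 0) (hg₂ : g₂ ≠ 0)
    (k₁ k₂ q n J : ℕ) (hn : 1 ≤ n) (hnq : n < q) (hJ : 1 ≤ J) (hk : k₂ ≤ k₁ * q)
    (hk' : k₁ * q ≤ k₂ + k₁) (hne : lam ^ k₁ ≠ g₁) (ε₁ ε₂ : ℝ) (h1 : ε₁ ≤ 1) (h2 : ε₂ ≤ 1)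
    (hξ : v (lam ^ k₁ / g₁ - 1) ≤ ε₁) (hy : v (g₂ / lam ^ k₂ - 1) ≤ ε₂) :
    -(totalWeight K * (9 * (q * J ^ 2)) + logHeight₁ lam * (k₁ * (n + J)) + logHeight₁ g₁ * (q * J)
      + logHeight₁ g₂ * J) ≤ 11 * (q * J ^ 2) + Real.log (ε₁ ^ (n * J) + ε₂) := by
  set ξ := lam ^ k₁ / g₁ with hxi
  set y := g₂ / lam ^ k₂ with hyy
  have hξ1 : ξ ≠ 1 := by
    rw [hxi, Ne, div_eq_one_iff_eq hg₁]; exact hne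
  obtain ⟨js, hjs, M, c, hM, hc, hpoly, hΦ⟩ := exists_nonvanish n q J hn hnq hJ ξ y hξ1
  set s := Finset.range n ×ˢ Finset.range J with hs
  set Φ := (M : K) * (ξ ^ (n + q * js) * y ^ js) -
        ∑ e ∈ s, (c e : K) * (ξ ^ (e.1 + q * e.2) * y ^ e.2) with hΦd
  have hcard : s.card = n * J := by simp [hs]
  set B := Real.exp (8 * (q * J ^ 2)) with hB
  have hBM : |(M : ℝ)| ≤ B := by
    refine le_trans ?_ (coeff_exp_bound q J hJ)
    exact_mod_cast hM
  have hBc : ∀ e ∈ s, |(c e : ℝ)| ≤ B := by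
    intro e he
    refine le_trans ?_ (coeff_exp_bound q J hJ)
    exact_mod_cast hc e he
  have hT : ((s.card : ℝ) + 1) ≤ Real.exp (q * J ^ 2) := by
    rw [hcard]
    refine le_trans ?_ (Real.add_one_le_exp _)
    push_cast
    have : n * J ≤ q * J ^ 2 := by
      have : J ≤ J ^ 2 := by nlinarith
      exact Nat.mul_le_mul hnq.le this
    have h' : (n : ℝ) * J ≤ q * J ^ 2 := by exact_mod_cast this
    linarith
  have hxle : ∀ i ≤ n, ∀ j < J, i + q * j ≤ q * J := by
    intro i hi j hj
    have : q * (j + 1) ≤ q * J := Nat.mul_le_mul_left _ hj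
    rw [mul_add] at this; omega
  -- the analytic upper bound
  have hup : v Φ ≤ Real.exp (11 * (q * J ^ 2)) * (ε₁ ^ (n * J) + ε₂) := by
    obtain ⟨p, hp, hpb⟩ := taylor_split v ξ y ε₁ ε₂ h1 h2 hξ hy (n * J) (q * J) J
    have he1 : 0 ≤ ε₁ := (v.nonneg _).trans hξ
    have he2 : 0 ≤ ε₂ := (v.nonneg _).trans hy
    have e : Φ = (M : K) * (ξ ^ (n + q * js) * y ^ js - p.eval ((n + q * js : ℕ) : K)) -
        ∑ e ∈ s, (c e : K) * (ξ ^ (e.1 + q * e.2) * y ^ e.2 - p.eval ((e.1 + q * e.2 : ℕ) : K)) := by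
      rw [hΦd]
      simp only [mul_sub, Finset.sum_sub_distrib]
      rw [← hpoly p hp]
      ring
    rw [e]
    refine (abv_lin_bound v s M c _ _ B (2 ^ (q * J + J) * (ε₁ ^ (n * J) + ε₂)) hBM hBc
      (hpb _ _ (hxle n le_rfl js hjs) hjs.le) ?_).trans ?_
    · intro e he
      simp only [hs, Finset.mem_product, Finset.mem_range] at he
      exact hpb _ _ (hxle e.1 he.1.le e.2 he.2) he.2.le
    · have h2e : (2 : ℝ) ≤ Real.exp 1 := by
        have := Real.add_one_le_exp (1 : ℝ); linarith
      have hpw : (2 : ℝ) ^ (q * J + J) ≤ Real.exp (2 * (q * J ^ 2)) := by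
        calc (2 : ℝ) ^ (q * J + J) ≤ Real.exp 1 ^ (q * J + J) := by gcongr
          _ = Real.exp ((q * J + J : ℕ) : ℝ) := by rw [← Real.exp_nat_mul, mul_one]
          _ ≤ Real.exp (2 * (q * J ^ 2)) := by
            apply Real.exp_le_exp.2
            have : q * J + J ≤ 2 * (q * J ^ 2) := by
              have h3 : q * J ≤ q * J ^ 2 := Nat.mul_le_mul_left _ (by nlinarith)
              have h4 : J ≤ q * J := by nlinarith
              omega
            exact_mod_cast this
      calc ((s.card : ℝ) + 1) * (B * (2 ^ (q * J + J) * (ε₁ ^ (n * J) + ε₂)))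
          ≤ Real.exp (q * J ^ 2) * (B * (Real.exp (2 * (q * J ^ 2)) * (ε₁ ^ (n * J) + ε₂))) := by gcongr
        _ = _ := by
          rw [hB, ← mul_assoc, ← mul_assoc, ← Real.exp_add, ← Real.exp_add]
          ring_nf
  -- the height bound
  have hterm : ∀ i ≤ n, ∀ j < J, ξ ^ (i + q * j) * y ^ j =
      lam ^ (k₁ * i + (k₁ * q - k₂) * j) * g₁⁻¹ ^ (i + q * j) * g₂ ^ j := by
    intro i hi j hj
    obtain ⟨d, hd⟩ := Nat.exists_eq_add_of_le hk
    have hd' : k₁ * q - k₂ = d := by omega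
    rw [hd', hxi, hyy, div_pow, div_pow, ← pow_mul, ← pow_mul, inv_pow]
    have : k₁ * (i + q * j) = k₁ * i + d * j + k₂ * j := by
      rw [mul_add, ← mul_assoc, hd]; ring
    rw [this]
    field_simp
    ring
  have hvterm : ∀ w : AbsoluteValue K ℝ, ∀ i ≤ n, ∀ j < J, w (ξ ^ (i + q * j) * y ^ j) ≤
      max (w lam) 1 ^ (k₁ * (n + J)) * max (w g₁⁻¹) 1 ^ (q * J) * max (w g₂) 1 ^ J := by
    intro w i hi j hj
    rw [hterm i hi j hj, map_mul, map_mul, map_pow, map_pow, map_pow]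
    have hgen : ∀ (z : ℝ) (a b : ℕ), 0 ≤ z → a ≤ b → z ^ a ≤ max z 1 ^ b := by
      intro z a b hz hab
      calc z ^ a ≤ max z 1 ^ a := by gcongr; exact le_max_left _ _
        _ ≤ max z 1 ^ b := pow_le_pow_right₀ (le_max_right _ _) hab
    have hexp : k₁ * i + (k₁ * q - k₂) * j ≤ k₁ * (n + J) := by
      have h3 : k₁ * q - k₂ ≤ k₁ := by omega
      rw [mul_add]
      exact add_le_add (Nat.mul_le_mul_left _ hi) (Nat.mul_le_mul h3 hj.le)
    exact mul_le_mul (mul_le_mul (hgen _ _ _ (w.nonneg _) hexp)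
      (hgen _ _ _ (w.nonneg _) (hxle i hi j hj)) (by positivity) (by positivity))
      (hgen _ _ _ (w.nonneg _) hj.le) (by positivity) (by positivity)
  have hH : mulHeight₁ Φ ≤ Real.exp (9 * (q * J ^ 2)) ^ totalWeight K *
      (mulHeight₁ lam ^ (k₁ * (n + J)) * mulHeight₁ g₁⁻¹ ^ (q * J) * mulHeight₁ g₂ ^ J) := by
    apply height_bound
    · exact Real.one_le_exp (by positivity)
    · intro w _
      refine (abv_lin_bound w s M c _ _ B _ hBM hBc (hvterm w n le_rfl js hjs) ?_).trans ?_
      · intro e he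
        simp only [hs, Finset.mem_product, Finset.mem_range] at he
        exact hvterm w _ he.1.le _ he.2
      · rw [← mul_assoc]
        gcongr
        calc ((s.card : ℝ) + 1) * B ≤ Real.exp (q * J ^ 2) * B := by gcongr
          _ = _ := by rw [hB, ← Real.exp_add]; ring_nf
    · intro w hw
      refine abv_lin_bound_na w (isNonarchimedean w hw) s M c _ _ _ (hvterm w n le_rfl js hjs) ?_
      intro e he
      simp only [hs, Finset.mem_product, Finset.mem_range] at he
      exact hvterm w _ he.1.le _ he.2
  have hlogH : logHeight₁ Φ ≤ totalWeight K * (9 * (q * J ^ 2)) + logHeight₁ lam * (k₁ * (n + J))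
      + logHeight₁ g₁ * (q * J) + logHeight₁ g₂ * J := by
    have h3 := Real.log_le_log (mulHeight₁_pos Φ) hH
    have p1 := (mulHeight₁_pos lam).ne'
    have p2 := (mulHeight₁_pos g₁).ne'
    have p3 := (mulHeight₁_pos g₂).ne'
    rw [mulHeight₁_inv, Real.log_mul (by positivity) (by positivity),
      Real.log_mul (by positivity) (by positivity), Real.log_mul (by positivity) (by positivity),
      Real.log_pow, Real.log_pow, Real.log_pow, Real.log_pow, Real.log_exp] at h3
    simp only [logHeight₁_eq_log_mulHeight₁]
    push_cast at h3
    linarith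
  have hL := pl_liouville hv hΦ
  have hvpos : 0 < v Φ := v.pos hΦ
  have hfin := Real.log_le_log hvpos hup
  have hε : 0 < ε₁ ^ (n * J) + ε₂ := by
    by_contra hcon
    have : Real.exp (11 * (q * J ^ 2)) * (ε₁ ^ (n * J) + ε₂) ≤ 0 :=
      mul_nonpos_of_nonneg_of_nonpos (by positivity) (not_lt.1 hcon)
    linarith
  rw [Real.log_mul (by positivity) hε.ne', Real.log_exp] at hfin
  linarith

theorem inv_close {K : Type} [Field K] (v : AbsoluteValue K ℝ) (u : K) (ε : ℝ) (hε : ε ≤ 1 / 2)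
    (h : v (u - 1) ≤ ε) : v (u⁻¹ - 1) ≤ 2 * ε := by
  have h1 : 1 / 2 ≤ v u := by
    have := v.add_le u (-(u - 1))
    rw [v.map_neg] at this
    have e : u + -(u - 1) = 1 := by ring
    rw [e, map_one] at this
    linarith
  have hu : u ≠ 0 := by
    rintro rfl
    rw [map_zero] at h1
    linarith
  have e : u⁻¹ - 1 = -(u - 1) * u⁻¹ := by field_simp; ring
  rw [e, map_mul, v.map_neg, map_inv₀]
  have h2 : (v u)⁻¹ ≤ 2 := by
    rw [inv_le_comm₀ (by linarith) (by norm_num)]; linarith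
  have : 0 ≤ v (u - 1) := v.nonneg _
  have h3 : 0 ≤ (v u)⁻¹ := by positivity
  nlinarith

set_option maxHeartbeats 1000000 in
theorem thmT {K : Type} [Field K] [CharZero K] [AdmissibleAbsValues K] {v : AbsoluteValue K ℝ}
    (hv : IsPl v) (lam : K) (hl : lam ≠ 0) (η : ℝ) (hη : 0 < η) :
    ∃ c : ℝ, 0 < c ∧ ∃ k₀ : ℕ, ∀ k : ℕ, k₀ ≤ k → ∀ γ : K, γ ≠ 0 → logHeight₁ γ ≤ c * k →
      lam ^ k ≠ γ → Real.exp (-(η * k)) < v (lam ^ k / γ - 1) := by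
  set d : ℝ := (totalWeight K : ℝ) with hd
  have hd0 : 0 ≤ d := by positivity
  obtain ⟨h, hh1, hh2, hh3⟩ : ∃ h : ℝ, 1 ≤ h ∧ η ≤ h ∧ logHeight₁ lam ≤ h :=
    ⟨max 1 (max η (logHeight₁ lam)), le_max_left _ _, (le_max_left _ _).trans (le_max_right _ _),
      (le_max_right _ _).trans (le_max_right _ _)⟩
  obtain ⟨J, hJ⟩ : ∃ J : ℕ, 8 * h / η ≤ J := exists_nat_ge _
  have hJ8 : (8 : ℝ) ≤ J := by
    refine le_trans ?_ hJ
    rw [le_div_iff₀ hη]; linarith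
  have hJ1 : 1 ≤ J := by
    have : (1 : ℝ) ≤ J := by linarith
    exact_mod_cast this
  set C : ℝ := 13 * (d + 1) with hC
  set c : ℝ := η / (16 * J) with hc
  have hcpos : 0 < c := by positivity
  obtain ⟨k₀, hk₀⟩ : ∃ k : ℕ, 8 * C * J ^ 2 / η + 1 / η + 1 ≤ k := exists_nat_ge _
  obtain ⟨q₀, hq₀⟩ : ∃ k : ℕ, 2 * (η + h * J) / η + 8 * h / η + 1 ≤ k := exists_nat_ge _
  have main : ∀ k₁ k₂ : ℕ, k₀ ≤ k₁ → q₀ * k₁ ≤ k₂ → ∀ g₁ g₂ : K, g₁ ≠ 0 → g₂ ≠ 0 →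
      logHeight₁ g₁ ≤ c * k₁ → logHeight₁ g₂ ≤ c * k₂ → lam ^ k₁ ≠ g₁ →
      v (lam ^ k₁ / g₁ - 1) ≤ Real.exp (-(η * k₁)) → v (lam ^ k₂ / g₂ - 1) ≤ Real.exp (-(η * k₂)) →
      False := by
    intro k₁ k₂ hk₁ hk₂ g₁ g₂ hg₁ hg₂ hH₁ hH₂ hne hv₁ hv₂
    have hk₁R : 8 * C * J ^ 2 / η + 1 / η + 1 ≤ (k₁ : ℝ) := hk₀.trans (by exact_mod_cast hk₁)
    have t1 : 0 ≤ 8 * C * J ^ 2 / η := by positivity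
    have t2 : 0 < 1 / η := by positivity
    have hk₁1 : (1 : ℝ) ≤ k₁ := by linarith
    have hk₁pos : 0 < k₁ := by
      have : (0 : ℝ) < k₁ := by linarith
      exact_mod_cast this
    have hCk : 8 * C * J ^ 2 ≤ η * k₁ := by
      have : 8 * C * J ^ 2 / η ≤ k₁ := by linarith
      rw [div_le_iff₀ hη] at this; linarith
    have hηk : 1 ≤ η * k₁ := by
      have : 1 / η ≤ k₁ := by linarith
      rw [div_le_iff₀ hη] at this; linarith
    set q := (k₂ + k₁ - 1) / k₁ with hq
    have hqa : k₂ ≤ k₁ * q := by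
      have h3 := Nat.div_add_mod (k₂ + k₁ - 1) k₁
      have h4 := Nat.mod_lt (k₂ + k₁ - 1) hk₁pos
      rw [← hq] at h3
      omega
    have hqb : k₁ * q ≤ k₂ + k₁ := by
      have h3 := Nat.mul_div_le (k₂ + k₁ - 1) k₁
      rw [← hq] at h3
      omega
    have hqq : q₀ ≤ q := by
      by_contra hcon
      have : k₁ * q < k₁ * q₀ := Nat.mul_lt_mul_of_pos_left (not_le.1 hcon) hk₁pos
      rw [mul_comm q₀] at hk₂
      omega
    have hqR : 2 * (η + h * J) / η + 8 * h / η + 1 ≤ (q : ℝ) := hq₀.trans (by exact_mod_cast hqq)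
    have t3 : 0 ≤ 2 * (η + h * J) / η := by positivity
    have t4 : 0 ≤ 8 * h / η := by positivity
    have hq1 : (1 : ℝ) ≤ q := by linarith
    have hqA : 8 * h ≤ η * q := by
      have : 8 * h / η ≤ q := by linarith
      rw [div_le_iff₀ hη] at this; linarith
    have hqB : 2 * (η + h * J) < η * q := by
      have : 2 * (η + h * J) / η < q := by linarith
      rw [div_lt_iff₀ hη] at this; linarith
    set n := ⌊η * q / (4 * h)⌋₊ with hn
    have hnle : (n : ℝ) ≤ η * q / (4 * h) := Nat.floor_le (by positivity)
    have hngt : η * q / (4 * h) < n + 1 := Nat.lt_floor_add_one _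
    have hnh : h * n ≤ η * q / 4 := by
      rw [le_div_iff₀ (by positivity)] at hnle; linarith
    have hnh2 : η * q ≤ 8 * h * n := by
      rw [div_lt_iff₀ (by positivity)] at hngt; linarith
    have hnq : n < q := by
      have : (n : ℝ) < q := by
        by_contra hcon
        have w1 : h * q ≤ h * n := mul_le_mul_of_nonneg_left (not_lt.1 hcon) (by linarith)
        have w2 : η * q ≤ h * q := mul_le_mul_of_nonneg_right hh2 (by linarith)
        have w3 : 0 < h * q := by positivity
        linarith
      exact_mod_cast this
    have hn1 : 1 ≤ n := by
      have : (0 : ℝ) < n := by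
        by_contra hcon
        have : 8 * h * n ≤ 0 := mul_nonpos_of_nonneg_of_nonpos (by positivity) (not_lt.1 hcon)
        linarith
      exact_mod_cast this
    have hnJ : (q : ℝ) ≤ n * J := by
      rw [div_le_iff₀ hη] at hJ
      have h5 : η * q ≤ η * (n * J) := by
        calc η * q ≤ 8 * h * n := hnh2
          _ ≤ (J * η) * n := by gcongr
          _ = _ := by ring
      exact le_of_mul_le_mul_left h5 hη
    have hk₂k₁ : (k₁ : ℝ) * (q - 1) ≤ k₂ := by
      have : (k₁ : ℝ) * q ≤ k₂ + k₁ := by exact_mod_cast hqb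
      linarith
    have hk₂k₁' : (k₂ : ℝ) ≤ k₁ * q := by exact_mod_cast hqa
    set X := η * k₁ * (q - 1) with hX
    have hexp2 : Real.exp (-(η * k₂)) ≤ Real.exp (-X) := by
      apply Real.exp_le_exp.2
      have : η * (k₁ * (q - 1)) ≤ η * k₂ := by gcongr
      rw [hX]; linarith
    have hX1 : 1 ≤ X := by
      have w1 : (2 : ℝ) ≤ q := by
        have : 2 * (η + h * J) / η = 2 + 2 * (h * J) / η := by field_simp
        have w2 : 0 ≤ 2 * (h * J) / η := by positivity
        linarith
      rw [hX]
      calc (1 : ℝ) = 1 * 1 := by norm_num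
        _ ≤ η * k₁ * (q - 1) := by gcongr; linarith
    have hhalf : ∀ t : ℝ, 1 ≤ t → Real.exp (-t) ≤ 1 / 2 := by
      intro t ht
      have h6 : Real.exp (-t) ≤ Real.exp (-1) := Real.exp_le_exp.2 (by linarith)
      have h7 : (2 : ℝ) ≤ Real.exp 1 := by have := Real.add_one_le_exp (1 : ℝ); linarith
      rw [Real.exp_neg 1] at h6
      have : (Real.exp 1)⁻¹ ≤ 1 / 2 := by rw [inv_le_comm₀ (by positivity) (by norm_num)]; linarith
      linarith
    have hk2half : Real.exp (-(η * k₂)) ≤ 1 / 2 := hexp2.trans (hhalf X hX1)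
    have hinv : v (g₂ / lam ^ k₂ - 1) ≤ 2 * Real.exp (-(η * k₂)) := by
      have := inv_close v (lam ^ k₂ / g₂) _ hk2half hv₂
      rwa [inv_div] at this
    have hcore := core_ineq hv lam g₁ g₂ hl hg₁ hg₂ k₁ k₂ q n J hn1 hnq hJ1 hqa hqb hne
      (Real.exp (-(η * k₁))) (2 * Real.exp (-(η * k₂))) ((hhalf _ hηk).trans (by norm_num))
      (by linarith) hv₁ hinv
    have hlog : Real.log (Real.exp (-(η * k₁)) ^ (n * J) + 2 * Real.exp (-(η * k₂))) ≤ 2 - X := by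
      rw [Real.log_le_iff_le_exp (by positivity)]
      have h8 : Real.exp (-(η * k₁)) ^ (n * J) ≤ Real.exp (-X) := by
        rw [← Real.exp_nat_mul]
        apply Real.exp_le_exp.2
        push_cast
        have : η * k₁ * (q - 1) ≤ η * k₁ * (n * J) := by gcongr; linarith
        rw [hX]; linarith
      have h9 : (3 : ℝ) ≤ Real.exp 2 := by have := Real.add_one_le_exp (2 : ℝ); linarith
      rw [sub_eq_add_neg, Real.exp_add]
      have : 0 < Real.exp (-X) := Real.exp_pos _
      nlinarith
    rw [← hd] at hcore
    have b1 : logHeight₁ lam * (k₁ * (n + J)) ≤ h * (k₁ * (n + J)) := by gcongr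
    have b2 : logHeight₁ g₁ * (q * J) ≤ c * k₁ * (q * J) := by gcongr
    have b3 : logHeight₁ g₂ * J ≤ c * (k₁ * q) * J := by
      have : c * k₂ ≤ c * (k₁ * q) := by gcongr
      have h9 : logHeight₁ g₂ ≤ c * (k₁ * q) := hH₂.trans this
      gcongr
    have b4 : c * k₁ * (q * J) = η * k₁ * q / 16 := by rw [hc]; field_simp
    have b5 : c * (k₁ * q) * J = η * k₁ * q / 16 := by rw [hc]; field_simp
    have b6 : h * (k₁ * (n + J)) ≤ η * k₁ * q / 4 + h * J * k₁ := by
      have : (h * n) * k₁ ≤ (η * q / 4) * k₁ := by gcongr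
      linarith
    have b7 : (2 : ℝ) ≤ 2 * (q * J ^ 2) := by
      have : (1 : ℝ) ≤ J ^ 2 := one_le_pow₀ (by linarith)
      nlinarith
    have b8 : C * (q * J ^ 2) ≤ η * k₁ * q / 8 := by
      have : (8 * C * J ^ 2) * q ≤ (η * k₁) * q := by gcongr
      linarith
    have b10 : 0 ≤ (q : ℝ) * J ^ 2 := by positivity
    have b9 : d * (9 * (q * J ^ 2)) + 11 * (q * J ^ 2) + 2 ≤ C * (q * J ^ 2) := by
      rw [hC]; nlinarith [mul_nonneg hd0 b10]
    have b11 : 2 * (η + h * J) * k₁ < η * q * k₁ := by gcongr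
    rw [hX] at hlog
    linarith
  by_cases hbad : ∃ k₁ : ℕ, k₀ ≤ k₁ ∧ ∃ g₁ : K, g₁ ≠ 0 ∧ logHeight₁ g₁ ≤ c * k₁ ∧ lam ^ k₁ ≠ g₁ ∧
      v (lam ^ k₁ / g₁ - 1) ≤ Real.exp (-(η * k₁))
  · obtain ⟨k₁, hk₁, g₁, a1, a2, a3, a4⟩ := hbad
    refine ⟨c, hcpos, q₀ * k₁, fun k hk γ hγ hH hne => ?_⟩
    by_contra hcon
    exact main k₁ k hk₁ hk g₁ γ a1 hγ a2 hH a3 a4 (not_lt.1 hcon)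
  · refine ⟨c, hcpos, k₀, fun k hk γ hγ hH hne => ?_⟩
    by_contra hcon
    exact hbad ⟨k, hk, γ, hγ, hH, hne, not_lt.1 hcon⟩

/-- Not a root of unity. -/
def NonRoot {R : Type*} [Monoid R] (z : R) : Prop := ∀ n : ℕ, 1 ≤ n → z ^ n ≠ 1

theorem NonRoot.inv {K : Type*} [Field K] {z : K} (h : NonRoot z) : NonRoot z⁻¹ := by
  intro n hn he
  apply h n hn
  rwa [inv_pow, inv_eq_one] at he

theorem NonRoot.pow_inj {K : Type*} [Field K] {z : K} (h : NonRoot z) (hz : z ≠ 0) {a b : ℕ}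
    (hab : z ^ a = z ^ b) : a = b := by
  wlog hle : a ≤ b generalizing a b
  · exact (this hab.symm (by omega)).symm
  obtain ⟨d, rfl⟩ := Nat.exists_eq_add_of_le hle
  rw [pow_add] at hab
  have : z ^ d = 1 := by
    have := mul_left_cancel₀ (pow_ne_zero a hz) (show z ^ a * z ^ d = z ^ a * 1 by rw [← hab, mul_one])
    exact this
  by_contra hne
  exact h d (by omega) this

theorem NonRoot.eventually_ne {K : Type*} [Field K] {z : K} (h : NonRoot z) (hz : z ≠ 0) (c : K) :
    ∃ N : ℕ, ∀ n, N ≤ n → z ^ n ≠ c := by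
  by_cases hc : ∃ m : ℕ, z ^ m = c
  · obtain ⟨m, hm⟩ := hc
    refine ⟨m + 1, fun n hn he => ?_⟩
    have := h.pow_inj hz (he.trans hm.symm)
    omega
  · push Not at hc
    exact ⟨0, fun n _ => hc n⟩

theorem kronecker {K : Type} [Field K] [NumberField K] {z : K} (hz : z ≠ 0) (h : NonRoot z) :
    ∃ v : AbsoluteValue K ℝ, IsPl v ∧ v z < 1 := by
  by_contra! hcon
  have hH : mulHeight₁ z = 1 := by
    rw [mulHeight₁_eq]
    refine Eq.trans ?_ (product_formula hz)
    congr 1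
    · congr 1
      apply Multiset.map_congr rfl
      intro v hv
      exact max_eq_left (hcon v (Or.inl hv))
    · apply finprod_congr
      intro v
      exact max_eq_left (hcon v.1 (Or.inr v.2))
  have hfin := NumberField.finite_setOfPred_mulHeight₁_le (K := K) 1
  have hinj : Function.Injective (fun n : ℕ => z ^ n) := fun a b hab => h.pow_inj hz hab
  refine Set.infinite_range_of_injective hinj (hfin.subset ?_)
  rintro _ ⟨n, rfl⟩
  simp [mulHeight₁_pow, hH]

theorem kronecker' {K : Type} [Field K] [NumberField K] {z : K} (hz : z ≠ 0) (h : NonRoot z) :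
    ∃ v : AbsoluteValue K ℝ, IsPl v ∧ 1 < v z := by
  obtain ⟨v, hv, h1⟩ := kronecker (inv_ne_zero hz) h.inv
  refine ⟨v, hv, ?_⟩
  rw [map_inv₀] at h1
  have := v.pos hz
  exact (inv_lt_one₀ this).1 h1

theorem exists_pow_lt_const (r : ℝ) (hr0 : 0 ≤ r) (hr : r < 1) (C c : ℝ) (hc : 0 < c) :
    ∃ N : ℕ, ∀ n, N ≤ n → C * r ^ n < c := by
  have h1 : Filter.Tendsto (fun n : ℕ => C * r ^ n) Filter.atTop (nhds (C * 0)) :=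
    (tendsto_pow_atTop_nhds_zero_of_lt_one hr0 hr).const_mul C
  rw [mul_zero] at h1
  exact Filter.eventually_atTop.1 (h1.eventually (gt_mem_nhds hc))

section
variable {K : Type} [Field K] [CharZero K] [AdmissibleAbsValues K] {v : AbsoluteValue K ℝ}

theorem thmT' (hv : IsPl v) (lam : K) (hl : lam ≠ 0) (C r : ℝ) (hr0 : 0 ≤ r) (hr : r < 1) :
    ∃ c : ℝ, 0 < c ∧ ∃ k₀ : ℕ, ∀ k : ℕ, k₀ ≤ k → ∀ γ : K, γ ≠ 0 → logHeight₁ γ ≤ c * k →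
      lam ^ k ≠ γ → C * r ^ k < v (lam ^ k / γ - 1) := by
  obtain ⟨r', hr1, hr2⟩ := exists_between hr
  have hr'0 : 0 < r' := by linarith
  obtain ⟨c, hc, k₀, hk⟩ := thmT hv lam hl (-Real.log r') (by have := Real.log_neg hr'0 hr2; linarith)
  obtain ⟨N, hN⟩ := exists_pow_lt_const (r / r') (by positivity) (by rw [div_lt_one hr'0]; exact hr1) C 1 one_pos
  refine ⟨c, hc, max k₀ N, fun k hk1 γ hγ hH hne => ?_⟩
  have h1 := hk k (le_of_max_le_left hk1) γ hγ hH hne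
  have h2 := hN k (le_of_max_le_right hk1)
  have e : Real.exp (-(-Real.log r' * k)) = r' ^ k := by
    rw [neg_mul, neg_neg, mul_comm, Real.exp_nat_mul, Real.exp_log hr'0]
  rw [e] at h1
  have h3 : C * r ^ k ≤ r' ^ k := by
    rw [div_pow] at h2
    have h4 : C * (r ^ k / r' ^ k) * r' ^ k ≤ 1 * r' ^ k := by gcongr
    rw [mul_assoc, div_mul_cancel₀ _ (by positivity), one_mul] at h4
    exact h4
  linarith

theorem thmT'' (hv : IsPl v) (lam : K) (hl : lam ≠ 0) (hroot : NonRoot lam) (γ : K) (hγ : γ ≠ 0)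
    (C r : ℝ) (hC : 0 ≤ C) (hr0 : 0 < r) (hr : r < 1) (θ : ℝ) (hθ : 0 < θ) :
    ∃ k₀ : ℕ, ∀ k : ℕ, k₀ ≤ k → ∀ n : ℕ, θ * k ≤ n → C * r ^ n < v (lam ^ k / γ - 1) := by
  have hrt : r ^ θ < 1 := Real.rpow_lt_one hr0.le hr hθ
  obtain ⟨c, hc, k₀, hk⟩ := thmT' hv lam hl C (r ^ θ) (by positivity) hrt
  obtain ⟨N, hN⟩ := hroot.eventually_ne hl γ
  obtain ⟨N₂, hN₂⟩ := exists_nat_ge (logHeight₁ γ / c)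
  refine ⟨max k₀ (max N N₂), fun k hk1 n hn => ?_⟩
  simp only [max_le_iff] at hk1
  refine lt_of_le_of_lt ?_ (hk k hk1.1 γ hγ ?_ (hN k hk1.2.1))
  · gcongr
    rw [← Real.rpow_natCast, ← Real.rpow_natCast, ← Real.rpow_mul hr0.le]
    exact Real.rpow_le_rpow_of_exponent_ge hr0 hr.le hn
  · have h1 : logHeight₁ γ / c ≤ k := hN₂.trans (by exact_mod_cast hk1.2.2)
    rw [div_le_iff₀ hc] at h1
    linarith

theorem height_lin (A B y : K) : ∃ h₀ h₁ : ℝ, 0 ≤ h₀ ∧ 0 ≤ h₁ ∧ ∀ n : ℕ,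
    logHeight₁ (A + B * y ^ n) ≤ h₀ + h₁ * n := by
  refine ⟨totalWeight K * Real.log 2 + logHeight₁ A + logHeight₁ B, logHeight₁ y, ?_, ?_, ?_⟩
  · have := zero_le_logHeight₁ A
    have := zero_le_logHeight₁ B
    have := Real.log_nonneg (show (1 : ℝ) ≤ 2 by norm_num)
    positivity
  · exact zero_le_logHeight₁ y
  · intro n
    have h1 := logHeight₁_add_le A (B * y ^ n)
    have h2 := logHeight₁_mul_le B (y ^ n)
    rw [logHeight₁_pow] at h2
    linarith

theorem abv_sub_le (v : AbsoluteValue K ℝ) (a b : K) : v (a - b) ≤ v a + v b := by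
  have := v.add_le a (-b)
  rwa [v.map_neg, ← sub_eq_add_neg] at this

theorem abv_lower (v : AbsoluteValue K ℝ) (A B y : K) (hA : A ≠ 0) (hy : v y < 1) :
    ∃ N : ℕ, ∀ n, N ≤ n → v A / 2 ≤ v (A + B * y ^ n) := by
  have hA' := v.pos hA
  obtain ⟨N, hN⟩ := exists_pow_lt_const (v y) (v.nonneg _) hy (v B) (v A / 2) (by positivity)
  refine ⟨N, fun n hn => ?_⟩
  have h1 := hN n hn
  have h2 := abv_sub_le v (A + B * y ^ n) (B * y ^ n)
  rw [add_sub_cancel_right, map_mul, map_pow] at h2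
  linarith

set_option maxHeartbeats 1000000 in
theorem main1 (hv : IsPl v) (p s x : K) (hp : v p < 1) (hs : v s < 1) (hs0 : s ≠ 0) (hx0 : x ≠ 0)
    (hx : NonRoot x) (α β γ δ ζ ξ : K) (hα : α ≠ 0) (hγ : γ ≠ 0)
    (hz : ∃ N : ℕ, ∀ g, N ≤ g → ζ * p ^ g + ξ * s ^ g ≠ 0) :
    ∃ N : ℕ, ∀ g₁ g₂ : ℕ, N ≤ g₁ → N ≤ g₂ →
      α + β * p ^ g₁ + s ^ g₂ * (ζ * p ^ g₁ + ξ * s ^ g₁) ≠ x ^ g₂ * (γ + δ * s ^ g₁) := by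
  obtain ⟨N₀, hN₀⟩ := hz
  have hvα := v.pos hα
  have hvγ := v.pos hγ
  have n1 := v.nonneg β
  have n2 := v.nonneg δ
  have n3 := v.nonneg ζ
  have n4 := v.nonneg ξ
  obtain ⟨N₁, hN₁⟩ := abv_lower v α β p hα hp
  obtain ⟨N₂, hN₂⟩ := abv_lower v γ δ s hγ hs
  set Q := (v α + v β + v ζ + v ξ) / (v γ / 2) with hQ
  have hQ0 : 0 ≤ Q := by positivity
  obtain ⟨ρ, hρ1, hρ2⟩ : ∃ ρ, max (v p) (v s) ≤ ρ ∧ ρ < 1 := ⟨_, le_rfl, max_lt hp hs⟩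
  have hpρ : v p ≤ ρ := (le_max_left _ _).trans hρ1
  have hsρ : v s ≤ ρ := (le_max_right _ _).trans hρ1
  have hρ0 : 0 < ρ := (v.pos hs0).trans_le hsρ
  obtain ⟨c, hc, k₀, hk⟩ := thmT' hv x hx0 ((v ζ + v ξ) / (v α / 2)) (v s) (v.nonneg _) hs
  obtain ⟨a₀, a₁, ha₀, ha₁, ha⟩ := height_lin α β p
  obtain ⟨b₀, b₁, hb₀, hb₁, hb⟩ := height_lin γ δ s
  set θ := c / (2 * (a₁ + b₁ + 1)) with hθ
  have hθ0 : 0 < θ := by positivity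
  obtain ⟨N₃, hN₃⟩ := thmT'' hv x hx0 hx (α / γ) (div_ne_zero hα hγ)
    ((v β + v ζ + v ξ + Q * v δ) / v α) ρ (by positivity) hρ0 hρ2 θ hθ0
  obtain ⟨N₄, hN₄⟩ := exists_nat_ge (2 * (a₀ + b₀) / c)
  refine ⟨max N₀ (max N₁ (max N₂ (max k₀ (max N₃ N₄)))), fun g₁ g₂ h1 h2 heq => ?_⟩
  simp only [max_le_iff] at h1 h2
  obtain ⟨h10, h11, h12, -, -, -⟩ := h1
  obtain ⟨-, -, -, h23, h24, h25⟩ := h2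
  have hzne := hN₀ g₁ h10
  have hu := hN₁ g₁ h11
  have hw := hN₂ g₁ h12
  set z := ζ * p ^ g₁ + ξ * s ^ g₁ with hzd
  set u := α + β * p ^ g₁ with hud
  set w := γ + δ * s ^ g₁ with hwd
  have hu0 : u ≠ 0 := by intro h; rw [h, map_zero] at hu; linarith
  have hw0 : w ≠ 0 := by intro h; rw [h, map_zero] at hw; linarith
  have hppow : v (p ^ g₁) ≤ ρ ^ g₁ := by rw [map_pow]; gcongr
  have hspow : v (s ^ g₁) ≤ ρ ^ g₁ := by rw [map_pow]; gcongr
  have hρp : ρ ^ g₁ ≤ 1 := pow_le_one₀ hρ0.le hρ2.le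
  have hρp0 : 0 < ρ ^ g₁ := by positivity
  have hs2 : v (s ^ g₂) ≤ 1 := by rw [map_pow]; exact pow_le_one₀ (v.nonneg _) hs.le
  have hvz : v z ≤ (v ζ + v ξ) * ρ ^ g₁ := by
    refine (v.add_le _ _).trans ?_
    rw [map_mul, map_mul, add_mul]
    gcongr
  have hβp : v (β * p ^ g₁) ≤ v β * ρ ^ g₁ := by rw [map_mul]; gcongr
  have hsz : v (s ^ g₂ * z) ≤ (v ζ + v ξ) * ρ ^ g₁ := by
    rw [map_mul]
    calc v (s ^ g₂) * v z ≤ 1 * v z := by gcongr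
      _ ≤ _ := by linarith
  have hxQ : v (x ^ g₂) ≤ Q := by
    have e1 : v (x ^ g₂) * v w ≤ v α + v β + v ζ + v ξ := by
      rw [← map_mul, ← heq, hud]
      refine (v.add_le _ _).trans ?_
      have := v.add_le α (β * p ^ g₁)
      nlinarith
    rw [hQ, le_div_iff₀ (by positivity)]
    have : v (x ^ g₂) * (v γ / 2) ≤ v (x ^ g₂) * v w := by gcongr
    linarith
  -- step 1
  have hg : (g₁ : ℝ) < θ * g₂ := by
    by_contra hcon
    have h3 := hN₃ g₂ h24 g₁ (not_lt.1 hcon)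
    have e : x ^ g₂ / (α / γ) - 1 = (β * p ^ g₁ + s ^ g₂ * z - x ^ g₂ * (δ * s ^ g₁)) / α := by
      field_simp
      rw [hud, hwd] at heq
      linear_combination -heq
    rw [e, map_div₀] at h3
    have e2 : v (x ^ g₂ * (δ * s ^ g₁)) ≤ Q * (v δ * ρ ^ g₁) := by
      rw [map_mul, map_mul]; gcongr
    have e3 := abv_sub_le v (β * p ^ g₁ + s ^ g₂ * z) (x ^ g₂ * (δ * s ^ g₁))
    have e4 := v.add_le (β * p ^ g₁) (s ^ g₂ * z)
    rw [div_mul_eq_mul_div, div_lt_div_iff_of_pos_right hvα] at h3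
    linarith
  -- step 2
  have hH : logHeight₁ (u / w) ≤ c * g₂ := by
    have f1 := logHeight₁_mul_le u w⁻¹
    rw [logHeight₁_inv, ← div_eq_mul_inv] at f1
    have f2 := ha g₁
    have f3 := hb g₁
    have f4 : (a₁ + b₁ + 1) * g₁ ≤ c * g₂ / 2 := by
      calc (a₁ + b₁ + 1) * g₁ ≤ (a₁ + b₁ + 1) * (θ * g₂) := by gcongr
        _ = _ := by rw [hθ]; field_simp
    have f5 : a₀ + b₀ ≤ c * g₂ / 2 := by
      have : 2 * (a₀ + b₀) / c ≤ g₂ := hN₄.trans (by exact_mod_cast h25)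
      rw [div_le_iff₀ hc] at this
      linarith
    have f6 : (0 : ℝ) ≤ g₁ := by positivity
    linarith
  have e5 : x ^ g₂ / (u / w) - 1 = s ^ g₂ * z / u := by
    field_simp
    linear_combination -heq
  have hne : x ^ g₂ ≠ u / w := by
    intro h
    rw [h, div_self (div_ne_zero hu0 hw0), sub_self] at e5
    have := div_ne_zero (mul_ne_zero (pow_ne_zero g₂ hs0) hzne) hu0
    exact this e5.symm
  have h4 := hk g₂ h23 (u / w) (div_ne_zero hu0 hw0) hH hne
  rw [e5, map_div₀, map_mul, map_pow] at h4
  have hvz' : v z ≤ v ζ + v ξ := by nlinarith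
  have hvu : 0 < v u := v.pos hu0
  have : v s ^ g₂ * v z / v u ≤ v s ^ g₂ * (v ζ + v ξ) / (v α / 2) := by
    have := v.nonneg s
    have := v.nonneg z
    gcongr
  have e6 : (v ζ + v ξ) / (v α / 2) * v s ^ g₂ = v s ^ g₂ * (v ζ + v ξ) / (v α / 2) := by ring
  linarith

end

def EE {R : Type*} [CommRing R] (a : Fin 3 → Fin 3 → R) (l : Fin 3 → R) (g₁ g₂ : ℕ) : R :=
  a 0 0 * l 0 ^ (g₁ + g₂) * (a 1 1 * l 1 ^ g₂ * a 2 2 - a 1 2 * l 2 ^ g₂ * a 2 1)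
  - a 0 1 * l 1 ^ (g₁ + g₂) * (a 1 0 * l 0 ^ g₂ * a 2 2 - a 1 2 * l 2 ^ g₂ * a 2 0)
  + a 0 2 * l 2 ^ (g₁ + g₂) * (a 1 0 * l 0 ^ g₂ * a 2 1 - a 1 1 * l 1 ^ g₂ * a 2 0)

theorem twoterm_ne {K : Type} [Field K] (ζ ξ p s : K) (hζ : ζ ≠ 0) (hp : p ≠ 0) (hs : s ≠ 0)
    (h : NonRoot (p / s)) : ∃ N : ℕ, ∀ g, N ≤ g → ζ * p ^ g + ξ * s ^ g ≠ 0 := by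
  obtain ⟨N, hN⟩ := h.eventually_ne (div_ne_zero hp hs) (-ξ / ζ)
  refine ⟨N, fun g hg he => hN g hg ?_⟩
  rw [div_pow]
  have := pow_ne_zero g hs
  field_simp
  linear_combination he

section
variable {K : Type} [Field K] [NumberField K]

theorem EE_dom0 {v : AbsoluteValue K ℝ} (hv : IsPl v) (a : Fin 3 → Fin 3 → K) (l : Fin 3 → K)
    (ha : ∀ i j, a i j ≠ 0) (hl : ∀ i, l i ≠ 0) (hr : ∀ i j, i ≠ j → NonRoot (l i / l j))
    (h1 : v (l 1) < v (l 0)) (h2 : v (l 2) < v (l 0)) :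
    ∃ N : ℕ, ∀ g₁ g₂ : ℕ, N ≤ g₁ → N ≤ g₂ → EE a l g₁ g₂ ≠ 0 := by
  have hl0 := hl 0
  have hl1 := hl 1
  have hl2 := hl 2
  have h0 := v.pos hl0
  have e : l 1 / l 0 / (l 2 / l 0) = l 1 / l 2 := by field_simp
  obtain ⟨N, hN⟩ := main1 hv (l 1 / l 0) (l 2 / l 0) (l 2 / l 1)
    (by rw [map_div₀, div_lt_one h0]; exact h1) (by rw [map_div₀, div_lt_one h0]; exact h2)
    (div_ne_zero hl2 hl0) (div_ne_zero hl2 hl1) (hr 2 1 (by decide))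
    (a 2 2 * a 0 0 * a 1 1) (-(a 2 2 * a 1 0 * a 0 1)) (a 2 1 * a 0 0 * a 1 2)
    (-(a 2 1 * a 0 2 * a 1 0)) (a 2 0 * a 0 1 * a 1 2) (-(a 2 0 * a 0 2 * a 1 1))
    (by simp [ha]) (by simp [ha])
    (twoterm_ne _ _ _ _ (by simp [ha]) (div_ne_zero hl1 hl0) (div_ne_zero hl2 hl0)
      (by rw [e]; exact hr 1 2 (by decide)))
  refine ⟨N, fun g₁ g₂ hg₁ hg₂ he => hN g₁ g₂ hg₁ hg₂ ?_⟩
  unfold EE at he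
  simp only [div_pow]
  have := pow_ne_zero g₁ hl0
  have := pow_ne_zero g₂ hl0
  have := pow_ne_zero g₂ hl1
  field_simp
  simp only [pow_add] at he
  linear_combination he

theorem EE_dom {v : AbsoluteValue K ℝ} (hv : IsPl v) (a : Fin 3 → Fin 3 → K) (l : Fin 3 → K)
    (ha : ∀ i j, a i j ≠ 0) (hl : ∀ i, l i ≠ 0) (hr : ∀ i j, i ≠ j → NonRoot (l i / l j))
    (i : Fin 3) (h : ∀ j, j ≠ i → v (l j) < v (l i)) :
    ∃ N : ℕ, ∀ g₁ g₂ : ℕ, N ≤ g₁ → N ≤ g₂ → EE a l g₁ g₂ ≠ 0 := by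
  have key : ∀ σ : Equiv.Perm (Fin 3), σ 0 = i → ∃ N : ℕ, ∀ g₁ g₂ : ℕ, N ≤ g₁ → N ≤ g₂ →
      EE (fun r c => a r (σ c)) (fun c => l (σ c)) g₁ g₂ ≠ 0 := by
    intro σ hσ
    apply EE_dom0 hv _ _ (fun _ _ => ha _ _) (fun _ => hl _)
      (fun p q hpq => hr _ _ (fun hc => hpq (σ.injective hc)))
    · rw [hσ]; apply h; rw [← hσ]; intro hc; exact absurd (σ.injective hc) (by decide)
    · rw [hσ]; apply h; rw [← hσ]; intro hc; exact absurd (σ.injective hc) (by decide)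
  obtain ⟨N, hN⟩ := key (Equiv.swap 0 i) (by simp)
  refine ⟨N, fun g₁ g₂ hg₁ hg₂ he => hN g₁ g₂ hg₁ hg₂ ?_⟩
  unfold EE at he ⊢
  fin_cases i
  · simpa using he
  · have e0 : Equiv.swap (0 : Fin 3) 1 0 = 1 := by decide
    have e1 : Equiv.swap (0 : Fin 3) 1 1 = 0 := by decide
    have e2 : Equiv.swap (0 : Fin 3) 1 2 = 2 := by decide
    simp only [Fin.mk_one, Fin.isValue, e0, e1, e2]
    linear_combination -he
  · have e0 : Equiv.swap (0 : Fin 3) 2 0 = 2 := by decide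
    have e1 : Equiv.swap (0 : Fin 3) 2 1 = 1 := by decide
    have e2 : Equiv.swap (0 : Fin 3) 2 2 = 0 := by decide
    simp only [Fin.reduceFinMk, Fin.isValue, e0, e1, e2]
    linear_combination -he

theorem EE_min {v : AbsoluteValue K ℝ} (hv : IsPl v) (a : Fin 3 → Fin 3 → K) (l : Fin 3 → K)
    (ha : ∀ i j, a i j ≠ 0) (hl : ∀ i, l i ≠ 0) (hr : ∀ i j, i ≠ j → NonRoot (l i / l j))
    (i : Fin 3) (h : ∀ j, j ≠ i → v (l i) < v (l j)) :
    ∃ N : ℕ, ∀ g₁ g₂ : ℕ, N ≤ g₁ → N ≤ g₂ → EE a l g₁ g₂ ≠ 0 := by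
  obtain ⟨N, hN⟩ := EE_dom hv (fun r c => a r.rev c) (fun c => (l c)⁻¹) (fun _ _ => ha _ _)
    (fun _ => inv_ne_zero (hl _))
    (fun p q hpq => by rw [inv_div_inv]; exact hr _ _ (Ne.symm hpq)) i
    (fun j hj => by
      simp only [map_inv₀]
      exact inv_strictAnti₀ (v.pos (hl i)) (h j hj))
  refine ⟨N, fun g₁ g₂ hg₁ hg₂ he => hN g₂ g₁ hg₂ hg₁ ?_⟩
  unfold EE at he ⊢
  have e0 : Fin.rev (0 : Fin 3) = 2 := by decide
  have e1 : Fin.rev (1 : Fin 3) = 1 := by decide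
  have e2 : Fin.rev (2 : Fin 3) = 0 := by decide
  simp only [e0, e1, e2, pow_add, inv_pow] at he ⊢
  have h0 := pow_ne_zero g₁ (hl 0)
  have h1 := pow_ne_zero g₁ (hl 1)
  have h2 := pow_ne_zero g₁ (hl 2)
  have h3 := pow_ne_zero g₂ (hl 0)
  have h4 := pow_ne_zero g₂ (hl 1)
  have h5 := pow_ne_zero g₂ (hl 2)
  field_simp
  linear_combination -he

theorem claim_i (a : Fin 3 → Fin 3 → K) (l : Fin 3 → K)
    (ha : ∀ i j, a i j ≠ 0) (hl : ∀ i, l i ≠ 0) (hr : ∀ i j, i ≠ j → NonRoot (l i / l j)) :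
    ∃ N : ℕ, ∀ g₁ g₂ : ℕ, N ≤ g₁ → N ≤ g₂ → EE a l g₁ g₂ ≠ 0 := by
  obtain ⟨v, hv, h⟩ := kronecker (div_ne_zero (hl 0) (hl 1)) (hr 0 1 (by decide))
  rw [map_div₀, div_lt_one (v.pos (hl 1))] at h
  by_cases h2 : v (l 2) < v (l 1)
  · apply EE_dom hv a l ha hl hr 1
    intro j hj
    fin_cases j
    · exact h
    · exact absurd rfl hj
    · exact h2
  · apply EE_min hv a l ha hl hr 0
    intro j hj
    fin_cases j
    · exact absurd rfl hj
    · exact h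
    · exact h.trans_le (not_lt.1 h2)

theorem claim_iia (A B C D x y : K) (hA : A ≠ 0) (hC : C ≠ 0) (hD : D ≠ 0)
    (hx : x ≠ 0) (hy : y ≠ 0) (hxr : NonRoot x) (hyr : NonRoot y) :
    ∃ N : ℕ, ∀ n u : ℕ, N ≤ n → N ≤ u → x ^ u * (A + B * y ^ n) ≠ C + D * y ^ (n + u) := by
  obtain ⟨v, hv, h⟩ := kronecker hy hyr
  obtain ⟨N, hN⟩ := main1 hv y y x h h hy hx hxr C 0 A B 0 D hC hA
    ⟨0, fun g _ => by simp [hD, hy]⟩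
  refine ⟨N, fun n u hn hu he => hN n u hn hu ?_⟩
  rw [he, pow_add]; ring

theorem claim_iii_aux (P Q R x y : K) (hP : P ≠ 0) (hQ : Q ≠ 0) (hR : R ≠ 0)
    (hx : x ≠ 0) (hy : y ≠ 0) (hxr : NonRoot x) (hyr : NonRoot y) :
    ∃ N : ℕ, ∀ k n : ℕ, N ≤ n → n ≤ k → P + Q * x ^ k + R * y ^ n ≠ 0 := by
  obtain ⟨v, hv, h⟩ := kronecker hx hxr
  have hvx := v.pos hx
  have hvP := v.pos hP
  have hg : -P / R ≠ 0 := div_ne_zero (neg_ne_zero.2 hP) hR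
  obtain ⟨k₀, hk⟩ := thmT'' hv y hy hyr (-P / R) hg (v Q / v P) (v x) (by positivity) hvx h 1 one_pos
  refine ⟨k₀, fun k n hn hnk he => ?_⟩
  have h1 := hk n hn k (by rw [one_mul]; exact_mod_cast hnk)
  have e : y ^ n / (-P / R) - 1 = Q * x ^ k / P := by
    field_simp
    linear_combination -he
  rw [e, map_div₀, map_mul, map_pow] at h1
  have : v Q / v P * v x ^ k = v Q * v x ^ k / v P := by ring
  linarith

theorem claim_iii (P Q R x y : K) (hP : P ≠ 0) (hQ : Q ≠ 0) (hR : R ≠ 0)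
    (hx : x ≠ 0) (hy : y ≠ 0) (hxr : NonRoot x) (hyr : NonRoot y) :
    ∃ N : ℕ, ∀ k n : ℕ, N ≤ k → N ≤ n → P + Q * x ^ k + R * y ^ n ≠ 0 := by
  obtain ⟨N₁, h1⟩ := claim_iii_aux P Q R x y hP hQ hR hx hy hxr hyr
  obtain ⟨N₂, h2⟩ := claim_iii_aux P R Q y x hP hR hQ hy hx hyr hxr
  refine ⟨max N₁ N₂, fun k n hk hn he => ?_⟩
  simp only [max_le_iff] at hk hn
  rcases le_total n k with h | h
  · exact h1 k n hn.1 h he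
  · exact h2 n k hk.2 h (by linear_combination he)

/-- Lower and upper growth of `C + D y^n`. -/
theorem growth_aux {v : AbsoluteValue K ℝ} (hv : IsPl v) (C D y : K) (hC : C ≠ 0) (hD : D ≠ 0)
    (hy : y ≠ 0) (hyr : NonRoot y) (hy1 : v y ≤ 1) (η : ℝ) (hη : 0 < η) :
    ∃ N : ℕ, ∀ n : ℕ, N ≤ n → C + D * y ^ n ≠ 0 ∧ |Real.log (v (C + D * y ^ n))| ≤ η * n := by
  have hvC := v.pos hC
  have hvD := v.pos hD
  have hg : -C / D ≠ 0 := div_ne_zero (neg_ne_zero.2 hC) hD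
  obtain ⟨k₀, hk⟩ := thmT'' hv y hy hyr (-C / D) hg (1 / v C) (Real.exp (-η)) (by positivity)
    (Real.exp_pos _) (by rw [Real.exp_lt_one_iff]; linarith) 1 one_pos
  obtain ⟨N₁, hN₁⟩ := exists_nat_ge (Real.log (v C + v D) / η)
  refine ⟨max k₀ N₁, fun n hn => ?_⟩
  simp only [max_le_iff] at hn
  have h1 := hk n hn.1 n (by rw [one_mul])
  have e : y ^ n / (-C / D) - 1 = -(C + D * y ^ n) / C := by
    field_simp
    ring
  rw [e, map_div₀, v.map_neg, div_mul_eq_mul_div, div_lt_div_iff_of_pos_right hvC, one_mul,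
    ← Real.exp_nat_mul] at h1
  have hpos : 0 < v (C + D * y ^ n) := (Real.exp_pos _).trans h1
  refine ⟨fun h => by rw [h, map_zero] at hpos; exact lt_irrefl _ hpos, ?_⟩
  rw [abs_le]
  constructor
  · have := Real.log_le_log (Real.exp_pos _) h1.le
    rw [Real.log_exp] at this
    linarith
  · have h2 : v (C + D * y ^ n) ≤ v C + v D := by
      refine (v.add_le _ _).trans ?_
      rw [map_mul, map_pow]
      have : v y ^ n ≤ 1 := pow_le_one₀ (v.nonneg _) hy1
      nlinarith
    have h3 := Real.log_le_log hpos h2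
    have h4 : Real.log (v C + v D) / η ≤ n := hN₁.trans (by exact_mod_cast hn.2)
    rw [div_le_iff₀ hη] at h4
    linarith

theorem growth {v : AbsoluteValue K ℝ} (hv : IsPl v) (C D y : K) (hC : C ≠ 0) (hD : D ≠ 0)
    (hy : y ≠ 0) (hyr : NonRoot y) (η : ℝ) (hη : 0 < η) :
    ∃ N : ℕ, ∀ n : ℕ, N ≤ n → C + D * y ^ n ≠ 0 ∧
      |Real.log (v (C + D * y ^ n)) - max 0 (Real.log (v y)) * n| ≤ η * n := by
  have hvy := v.pos hy
  rcases le_or_gt (v y) 1 with h | h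
  · obtain ⟨N, hN⟩ := growth_aux hv C D y hC hD hy hyr h η hη
    refine ⟨N, fun n hn => ⟨(hN n hn).1, ?_⟩⟩
    rw [max_eq_left (Real.log_nonpos hvy.le h), zero_mul, sub_zero]
    exact (hN n hn).2
  · have h' : v y⁻¹ ≤ 1 := by rw [map_inv₀]; exact inv_le_one_of_one_le₀ h.le
    obtain ⟨N, hN⟩ := growth_aux hv D C y⁻¹ hD hC (inv_ne_zero hy) hyr.inv h' η hη
    refine ⟨N, fun n hn => ?_⟩
    obtain ⟨h1, h2⟩ := hN n hn
    have hyn := pow_ne_zero n hy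
    have e : C + D * y ^ n = y ^ n * (D + C * y⁻¹ ^ n) := by
      rw [inv_pow]; field_simp; ring
    refine ⟨by rw [e]; exact mul_ne_zero hyn h1, ?_⟩
    rw [max_eq_right (Real.log_nonneg h.le), e, map_mul, map_pow,
      Real.log_mul (by positivity) (v.pos h1).ne', Real.log_pow]
    convert h2 using 2
    ring

theorem claim_iib (A B C D x y : K) (hA : A ≠ 0) (hB : B ≠ 0) (hC : C ≠ 0) (hD : D ≠ 0)
    (hx : x ≠ 0) (hy : y ≠ 0) (hyr : NonRoot y) (hxy : NonRoot (x ^ 2 / y)) :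
    ∃ N : ℕ, ∀ n p : ℕ, N ≤ n → N ≤ p →
      x ^ (n + p) * (A * y ^ p + B) ≠ y ^ p * (C + D * y ^ n) := by
  have hz0 : x ^ 2 / y ≠ 0 := div_ne_zero (pow_ne_zero 2 hx) hy
  have main : ∀ v : AbsoluteValue K ℝ, IsPl v → ∀ η : ℝ, 0 < η → ∃ N : ℕ, ∀ n p : ℕ, N ≤ n → N ≤ p →
      x ^ (n + p) * (A * y ^ p + B) = y ^ p * (C + D * y ^ n) →
      |Real.log (v (x ^ 2 / y)) * (n + p) - |Real.log (v y)| * ((n : ℝ) - p)| ≤ 2 * η * (n + p) := by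
    intro v hv η hη
    obtain ⟨N₁, h1⟩ := growth hv B A y hB hA hy hyr η hη
    obtain ⟨N₂, h2⟩ := growth hv C D y hC hD hy hyr η hη
    refine ⟨max N₁ N₂, fun n p hn hp he => ?_⟩
    simp only [max_le_iff] at hn hp
    obtain ⟨h1, h1'⟩ := h1 p hp.1
    obtain ⟨h2, h2'⟩ := h2 n hn.2
    have hvx := v.pos hx
    have hvy := v.pos hy
    have h3 := congrArg (fun t => Real.log (v t)) he
    simp only [add_comm (A * y ^ p) B] at h3
    rw [map_mul, map_mul, map_pow, map_pow, Real.log_mul (by positivity) (v.pos h1).ne',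
      Real.log_mul (by positivity) (v.pos h2).ne', Real.log_pow, Real.log_pow] at h3
    have e : Real.log (v (x ^ 2 / y)) = 2 * Real.log (v x) - Real.log (v y) := by
      rw [map_div₀, map_pow, Real.log_div (by positivity) (by positivity), Real.log_pow]
      norm_num
    have e2 : max 0 (Real.log (v y)) = (|Real.log (v y)| + Real.log (v y)) / 2 := by
      rcases le_total 0 (Real.log (v y)) with h | h
      · rw [max_eq_right h, abs_of_nonneg h]; ring
      · rw [max_eq_left h, abs_of_nonpos h]; ring
    rw [e]
    rw [e2] at h1' h2'
    push_cast at h3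
    rw [abs_le] at h1' h2' ⊢
    constructor <;> nlinarith
  obtain ⟨v, hv, hlt⟩ := kronecker hz0 hxy
  obtain ⟨w, hw, hgt⟩ := kronecker' hz0 hxy
  have hl1 : Real.log (v (x ^ 2 / y)) < 0 := Real.log_neg (v.pos hz0) hlt
  have hl2 : 0 < Real.log (w (x ^ 2 / y)) := Real.log_pos hgt
  obtain ⟨N₁, h1⟩ := main v hv (-Real.log (v (x ^ 2 / y)) / 4) (by linarith)
  obtain ⟨N₂, h2⟩ := main w hw (Real.log (w (x ^ 2 / y)) / 4) (by linarith)
  refine ⟨max 1 (max N₁ N₂), fun n p hn hp he => ?_⟩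
  simp only [max_le_iff] at hn hp
  have h1 := h1 n p hn.2.1 hp.2.1 he
  have h2 := h2 n p hn.2.2 hp.2.2 he
  have hn1 : (1 : ℝ) ≤ n := by exact_mod_cast hn.1
  have hp1 : (1 : ℝ) ≤ p := by exact_mod_cast hp.1
  rw [abs_le] at h1 h2
  have a1 := abs_nonneg (Real.log (v y))
  have a2 := abs_nonneg (Real.log (w y))
  rcases le_total (n : ℝ) p with h | h
  · have : |Real.log (w y)| * ((n : ℝ) - p) ≤ 0 := mul_nonpos_of_nonneg_of_nonpos a2 (by linarith)
    have : 0 < Real.log (w (x ^ 2 / y)) * (n + p) := by positivity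
    linarith
  · have : 0 ≤ |Real.log (v y)| * ((n : ℝ) - p) := mul_nonneg a1 (by linarith)
    have : 0 < -Real.log (v (x ^ 2 / y)) * (n + p) := mul_pos (by linarith) (by linarith)
    linarith

end

theorem spec_aux {R K : Type} [CommRing R] [Algebra ℚ R] [kf : Field K] {s : ℕ}
    (g : MvPolynomial (Fin s) ℚ →ₐ[ℚ] R) (φ : R →+* K) (hφ : Function.Surjective φ) (t : Fin s → ℚ)
    (hk : ∀ a, MvPolynomial.eval t a = 0 → φ (g a) = 0) (n : ℕ) (r : Fin n → R)
    (hr : ∀ y, ∃ c : Fin n → MvPolynomial (Fin s) ℚ, y = ∑ i, g (c i) * r i) :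
    ∃ _ : NumberField K, Module.finrank ℚ K ≤ n := by
  have hcz : CharZero K := charZero_of_injective_ringHom (φ.comp (algebraMap ℚ R)).injective
  have key : ∀ a : MvPolynomial (Fin s) ℚ, φ (g a) = algebraMap ℚ K (MvPolynomial.eval t a) := by
    intro a
    have h1 := hk (a - MvPolynomial.C (MvPolynomial.eval t a)) (by simp)
    have h2 : g (MvPolynomial.C (MvPolynomial.eval t a)) = algebraMap ℚ R (MvPolynomial.eval t a) := by
      rw [← MvPolynomial.algebraMap_eq, g.commutes]
    rw [map_sub, map_sub, h2, sub_eq_zero] at h1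
    rw [h1, eq_ratCast (algebraMap ℚ K)]
    exact eq_ratCast (φ.comp (algebraMap ℚ R)) _
  have hspan : Submodule.span ℚ (Set.range (fun i => φ (r i))) = ⊤ := by
    rw [eq_top_iff]
    rintro x -
    obtain ⟨y, rfl⟩ := hφ x
    obtain ⟨c, rfl⟩ := hr y
    rw [map_sum]
    refine Submodule.sum_mem _ (fun i _ => ?_)
    rw [map_mul, key, ← Algebra.smul_def]
    exact Submodule.smul_mem _ _ (Submodule.subset_span ⟨i, rfl⟩)
  have hfd : Module.Finite ℚ K := ⟨⟨Set.Finite.toFinset (Set.finite_range _), by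
    rw [Set.Finite.coe_toFinset]; exact hspan⟩⟩
  have hrk := finrank_le_of_span_eq_top hspan
  rw [Fintype.card_fin] at hrk
  exact ⟨⟨⟩, hrk⟩

theorem spec_abs (R : Type) [CommRing R] [IsDomain R] [Algebra ℚ R] [Algebra.FiniteType ℚ R] :
    ∃ n : ℕ, ∀ f : R, f ≠ 0 → ∃ (K : Type) (_ : Field K) (_ : NumberField K) (φ : R →+* K),
      φ f ≠ 0 ∧ Module.finrank ℚ K ≤ n := by
  obtain ⟨s, g, hinj, hfin⟩ := exists_finite_inj_algHom_of_fg ℚ R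
  let := g.toRingHom.toAlgebra
  have hmap : ∀ a, algebraMap (MvPolynomial (Fin s) ℚ) R a = g a := fun a => rfl
  have : Module.Finite (MvPolynomial (Fin s) ℚ) R := hfin
  obtain ⟨n, r, hr⟩ := Module.Finite.exists_fin (R := MvPolynomial (Fin s) ℚ) (M := R)
  refine ⟨n, fun f hf => ?_⟩
  have hne := Ideal.comap_ne_bot_of_integral_mem (R := MvPolynomial (Fin s) ℚ) (I := Ideal.span {f})
    hf (Ideal.mem_span_singleton_self f) (Algebra.IsIntegral.isIntegral f)
  obtain ⟨g0, hg0, hg0ne⟩ := Submodule.exists_mem_ne_zero_of_ne_bot hne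
  obtain ⟨t, ht⟩ : ∃ t : Fin s → ℚ, MvPolynomial.eval t g0 ≠ 0 := by
    by_contra! h
    exact hg0ne (MvPolynomial.funext (fun x => by rw [h x, map_zero]))
  have hsurj : Function.Surjective (MvPolynomial.eval t) := fun q => ⟨MvPolynomial.C q, by simp⟩
  have hmax : (RingHom.ker (MvPolynomial.eval t)).IsMaximal :=
    RingHom.ker_isMaximal_of_surjective _ hsurj
  obtain ⟨Q, hQ, hQc⟩ := Ideal.exists_ideal_over_maximal_of_isIntegral (S := R)
    (RingHom.ker (MvPolynomial.eval t)) (by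
      rw [(RingHom.injective_iff_ker_eq_bot _).1 (show Function.Injective (algebraMap _ R) from hinj)]
      exact bot_le)
  obtain ⟨h1, h2⟩ := spec_aux (K := R ⧸ Q) (kf := Ideal.Quotient.field Q) g (Ideal.Quotient.mk Q)
    Ideal.Quotient.mk_surjective t (fun a ha => by
      have : a ∈ Ideal.comap (algebraMap (MvPolynomial (Fin s) ℚ) R) Q := by rw [hQc]; exact ha
      exact Ideal.Quotient.eq_zero_iff_mem.2 this) n r (fun y => by
      have hy : y ∈ Submodule.span (MvPolynomial (Fin s) ℚ) (Set.range r) := by rw [hr]; trivial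
      obtain ⟨c, hc⟩ := (Submodule.mem_span_range_iff_exists_fun _).1 hy
      exact ⟨c, by rw [← hc]; exact Finset.sum_congr rfl (fun i _ => by rw [Algebra.smul_def, hmap])⟩)
  refine ⟨R ⧸ Q, Ideal.Quotient.field Q, h1, Ideal.Quotient.mk Q, ?_, h2⟩
  intro h
  have hfQ : f ∈ Q := Ideal.Quotient.eq_zero_iff_mem.1 h
  have : g0 ∈ Ideal.comap (algebraMap (MvPolynomial (Fin s) ℚ) R) Q := by
    rw [Ideal.mem_comap]
    exact (Ideal.span_singleton_le_iff_mem Q).2 hfQ (Ideal.mem_comap.1 hg0)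
  rw [hQc] at this
  exact ht this

theorem dvd_of_totient_le (n d : ℕ) (h0 : d ≠ 0) (h : d.totient ≤ n) : d ∣ ((n + 1).factorial) ^ (n + 1) := by
  rw [Nat.dvd_iff_prime_pow_dvd_dvd]
  intro p k hp hk
  rcases Nat.eq_zero_or_pos k with rfl | hk0
  · simp
  have h1 : (p ^ k).totient ≤ n :=
    (Nat.le_of_dvd (Nat.totient_pos.2 (Nat.pos_of_ne_zero h0)) (Nat.totient_dvd_of_dvd hk)).trans h
  rw [Nat.totient_prime_pow hp hk0] at h1
  have hp2 := hp.two_le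
  have hpp : 1 ≤ p ^ (k - 1) := Nat.one_le_pow _ _ hp.pos
  have h2 : p - 1 ≤ n := le_trans (Nat.le_mul_of_pos_left _ hpp) h1
  have h3 : p ^ (k - 1) ≤ n := le_trans (Nat.le_mul_of_pos_right _ (by omega)) h1
  have h4 : k - 1 < p ^ (k - 1) := Nat.lt_pow_self (by omega)
  exact (pow_dvd_pow_of_dvd (Nat.dvd_factorial hp.pos (by omega)) k).trans (pow_dvd_pow _ (by omega))

theorem root_order {K : Type} [Field K] [NumberField K] (n : ℕ) (hn : Module.finrank ℚ K ≤ n) (z : K)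
    (h : ¬ NonRoot z) : z ^ ((n + 1).factorial ^ (n + 1)) = 1 := by
  unfold NonRoot at h
  push Not at h
  obtain ⟨m, hm, hz⟩ := h
  have hfin : IsOfFinOrder z := isOfFinOrder_iff_pow_eq_one.2 ⟨m, hm, hz⟩
  have hd := hfin.orderOf_pos
  have hp := IsPrimitiveRoot.orderOf z
  have h1 := hp.totient_le_degree_minpoly
  have hint : IsIntegral ℤ z := hp.isIntegral hd
  have h2 := minpoly.isIntegrallyClosed_eq_field_fractions' ℚ hint
  have h3 := minpoly.natDegree_le (A := ℚ) z
  rw [h2, (minpoly.monic hint).natDegree_map] at h3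
  exact orderOf_dvd_iff_pow_eq_one.1 (dvd_of_totient_le n _ hd.ne' (h1.trans (h3.trans hn)))

theorem specialize_exists (S : Finset ℂ) (hS : ∀ z ∈ S, z ≠ 0) :
    ∃ (K : Type) (_ : Field K) (_ : NumberField K) (φ : Algebra.adjoin ℚ (S : Set ℂ) →+* K),
      ∀ z (hz : z ∈ S), φ ⟨z, Algebra.subset_adjoin hz⟩ ≠ 0 ∧
        (NonRoot z → NonRoot (φ ⟨z, Algebra.subset_adjoin hz⟩)) := by
  classical
  have : Algebra.FiniteType ℚ (Algebra.adjoin ℚ (S : Set ℂ)) :=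
    (Subalgebra.fg_iff_finiteType _).1 (Subalgebra.fg_adjoin_finset S)
  obtain ⟨n, hn⟩ := spec_abs (Algebra.adjoin ℚ (S : Set ℂ))
  set M := (n + 1).factorial ^ (n + 1) with hM
  have hM1 : 1 ≤ M := Nat.one_le_pow _ _ (Nat.factorial_pos _)
  let e : S → Algebra.adjoin ℚ (S : Set ℂ) := fun z => ⟨z.1, Algebra.subset_adjoin z.2⟩
  let f : Algebra.adjoin ℚ (S : Set ℂ) :=
    ∏ z : S, (e z * (if NonRoot z.1 then e z ^ M - 1 else 1))
  have hf : f ≠ 0 := by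
    refine Finset.prod_ne_zero_iff.2 (fun z _ => mul_ne_zero ?_ ?_)
    · intro h
      exact hS z.1 z.2 (congrArg Subtype.val h)
    · split_ifs with h
      · intro h'
        have := congrArg Subtype.val h'
        simp only [e, AddSubgroupClass.coe_sub, SubmonoidClass.coe_pow, OneMemClass.coe_one, ZeroMemClass.coe_zero] at this
        exact h M hM1 (sub_eq_zero.1 this)
      · exact one_ne_zero
  obtain ⟨K, hK, hNF, φ, hφ, hrk⟩ := hn f hf
  refine ⟨K, hK, hNF, φ, fun z hz => ?_⟩
  have h1 : φ (e ⟨z, hz⟩ * (if NonRoot z then e ⟨z, hz⟩ ^ M - 1 else 1)) ≠ 0 := by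
    rw [show φ f = _ from map_prod φ _ _] at hφ
    exact (Finset.prod_ne_zero_iff.1 hφ) ⟨z, hz⟩ (Finset.mem_univ _)
  rw [map_mul] at h1
  refine ⟨left_ne_zero_of_mul h1, fun hr => ?_⟩
  have h2 := right_ne_zero_of_mul h1
  rw [if_pos hr, map_sub, map_pow, map_one] at h2
  by_contra hcon
  exact h2 (by rw [root_order n hrk _ hcon, sub_self])

theorem spec_fam {ι : Type} [Fintype ι] (z : ι → ℂ) (hz : ∀ i, z i ≠ 0) :
    ∃ (K : Type) (_ : Field K) (_ : NumberField K) (R : Subalgebra ℚ ℂ) (φ : R →+* K) (ζ : ι → R),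
      (∀ i, (ζ i : ℂ) = z i) ∧ (∀ i, φ (ζ i) ≠ 0) ∧ ∀ i, NonRoot (z i) → NonRoot (φ (ζ i)) := by
  classical
  obtain ⟨K, hK, hN, φ, h⟩ := specialize_exists (Finset.univ.image z) (by simpa using hz)
  refine ⟨K, hK, hN, _, φ, fun i => ⟨z i, Algebra.subset_adjoin (by simp)⟩, fun i => rfl,
    fun i => (h (z i) (by simp)).1, fun i => (h (z i) (by simp)).2⟩

theorem EE_map {R S : Type} [CommRing R] [CommRing S] (f : R →+* S) (a : Fin 3 → Fin 3 → R)
    (l : Fin 3 → R) (g₁ g₂ : ℕ) :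
    f (EE a l g₁ g₂) = EE (fun i j => f (a i j)) (fun i => f (l i)) g₁ g₂ := by
  simp only [EE, map_add, map_sub, map_mul, map_pow]

theorem claim_i_C (a : Fin 3 → Fin 3 → ℂ) (l : Fin 3 → ℂ)
    (ha : ∀ i j, a i j ≠ 0) (hl : ∀ i, l i ≠ 0) (hr : ∀ i j, i ≠ j → NonRoot (l i / l j)) :
    ∃ N : ℕ, ∀ g₁ g₂ : ℕ, N ≤ g₁ → N ≤ g₂ → EE a l g₁ g₂ ≠ 0 := by
  obtain ⟨K, hK, hNF, R, φ, ζ, h1, h2, h3⟩ := spec_fam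
    (Sum.elim (fun p : Fin 3 × Fin 3 => a p.1 p.2)
      (Sum.elim l (fun p : Fin 3 × Fin 3 => l p.1 / l p.2)))
    (by rintro (p | i | p)
        · exact ha _ _
        · exact hl _
        · exact div_ne_zero (hl _) (hl _))
  obtain ⟨N, hN⟩ := claim_i (fun i j => φ (ζ (Sum.inl (i, j)))) (fun i => φ (ζ (Sum.inr (Sum.inl i))))
    (fun i j => h2 _) (fun i => h2 _) (fun i j hij => by
      have := h3 (Sum.inr (Sum.inr (i, j))) (hr i j hij)
      have e : ζ (Sum.inr (Sum.inl i)) = ζ (Sum.inr (Sum.inr (i, j))) * ζ (Sum.inr (Sum.inl j)) := by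
        apply Subtype.ext
        push_cast
        rw [h1, h1, h1]
        simp [hl]
      have e2 := congrArg φ e
      rw [map_mul] at e2
      rw [e2, mul_div_cancel_right₀ _ (h2 _)]
      exact this)
  refine ⟨N, fun g₁ g₂ hg₁ hg₂ he => hN g₁ g₂ hg₁ hg₂ ?_⟩
  rw [← EE_map φ (fun i j => ζ (Sum.inl (i, j))) (fun i => ζ (Sum.inr (Sum.inl i)))]
  convert map_zero φ
  apply Subtype.ext
  have := EE_map R.val.toRingHom (fun i j => ζ (Sum.inl (i, j))) (fun i => ζ (Sum.inr (Sum.inl i))) g₁ g₂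
  refine this.trans ?_
  simp only [AlgHom.toRingHom_eq_coe, RingHom.coe_coe, Subalgebra.coe_val, h1, Sum.elim_inl,
    Sum.elim_inr]
  simpa using he

theorem claim_iia_C (A B C D x y : ℂ) (hA : A ≠ 0) (hB : B ≠ 0) (hC : C ≠ 0) (hD : D ≠ 0)
    (hx : x ≠ 0) (hy : y ≠ 0) (hxr : NonRoot x) (hyr : NonRoot y) :
    ∃ N : ℕ, ∀ n u : ℕ, N ≤ n → N ≤ u → x ^ u * (A + B * y ^ n) ≠ C + D * y ^ (n + u) := by
  obtain ⟨K, hK, hNF, R, φ, ζ, h1, h2, h3⟩ := spec_fam ![A, B, C, D, x, y]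
    (by intro i; fin_cases i <;> assumption)
  obtain ⟨N, hN⟩ := claim_iia (φ (ζ 0)) (φ (ζ 1)) (φ (ζ 2)) (φ (ζ 3)) (φ (ζ 4)) (φ (ζ 5))
    (h2 _) (h2 _) (h2 _) (h2 _) (h2 _) (h3 4 hxr) (h3 5 hyr)
  refine ⟨N, fun n u hn hu he => hN n u hn hu ?_⟩
  have e : ζ 4 ^ u * (ζ 0 + ζ 1 * ζ 5 ^ n) = ζ 2 + ζ 3 * ζ 5 ^ (n + u) := by
    apply Subtype.ext
    push_cast
    simp only [h1]
    exact he
  simpa using congrArg φ e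

theorem claim_iib_C (A B C D x y : ℂ) (hA : A ≠ 0) (hB : B ≠ 0) (hC : C ≠ 0) (hD : D ≠ 0)
    (hx : x ≠ 0) (hy : y ≠ 0) (hyr : NonRoot y) (hxy : NonRoot (x ^ 2 / y)) :
    ∃ N : ℕ, ∀ n p : ℕ, N ≤ n → N ≤ p →
      x ^ (n + p) * (A * y ^ p + B) ≠ y ^ p * (C + D * y ^ n) := by
  have hz : x ^ 2 / y ≠ 0 := div_ne_zero (pow_ne_zero 2 hx) hy
  obtain ⟨K, hK, hNF, R, φ, ζ, h1, h2, h3⟩ := spec_fam ![A, B, C, D, x, y, x ^ 2 / y]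
    (by intro i; fin_cases i <;> assumption)
  obtain ⟨N, hN⟩ := claim_iib (φ (ζ 0)) (φ (ζ 1)) (φ (ζ 2)) (φ (ζ 3)) (φ (ζ 4)) (φ (ζ 5))
    (h2 _) (h2 _) (h2 _) (h2 _) (h2 _) (h2 _) (h3 5 hyr) (by
      have e : ζ 4 ^ 2 = ζ 6 * ζ 5 := by
        apply Subtype.ext
        push_cast
        simp only [h1]
        exact (div_mul_cancel₀ (x ^ 2) hy).symm
      have e2 := congrArg φ e
      rw [map_mul, map_pow] at e2
      rw [e2, mul_div_cancel_right₀ _ (h2 _)]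
      exact h3 6 hxy)
  refine ⟨N, fun n u hn hu he => hN n u hn hu ?_⟩
  have e : ζ 4 ^ (n + u) * (ζ 0 * ζ 5 ^ u + ζ 1) = ζ 5 ^ u * (ζ 2 + ζ 3 * ζ 5 ^ n) := by
    apply Subtype.ext
    push_cast
    simp only [h1]
    exact he
  simpa using congrArg φ e

theorem claim_iii_C (P Q T x y : ℂ) (hP : P ≠ 0) (hQ : Q ≠ 0) (hT : T ≠ 0)
    (hx : x ≠ 0) (hy : y ≠ 0) (hxr : NonRoot x) (hyr : NonRoot y) :
    ∃ N : ℕ, ∀ k n : ℕ, N ≤ k → N ≤ n → P + Q * x ^ k + T * y ^ n ≠ 0 := by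
  obtain ⟨K, hK, hNF, R, φ, ζ, h1, h2, h3⟩ := spec_fam ![P, Q, T, x, y]
    (by intro i; fin_cases i <;> assumption)
  obtain ⟨N, hN⟩ := claim_iii (φ (ζ 0)) (φ (ζ 1)) (φ (ζ 2)) (φ (ζ 3)) (φ (ζ 4))
    (h2 _) (h2 _) (h2 _) (h2 _) (h2 _) (h3 3 hxr) (h3 4 hyr)
  refine ⟨N, fun n u hn hu he => hN n u hn hu ?_⟩
  have e : ζ 0 + ζ 1 * ζ 3 ^ n + ζ 2 * ζ 4 ^ u = 0 := by
    apply Subtype.ext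
    push_cast
    simp only [h1]
    exact he
  simpa using congrArg φ e

/-- Multiplicative independence of the ratios of the entries. -/
def MulIndep (l : Fin 3 → ℂ) : Prop :=
  (∀ i, l i ≠ 0) ∧ ∀ e : Fin 3 → ℤ, ∑ i, e i = 0 → ∏ i, l i ^ e i = 1 → ∀ i, e i = 0

theorem MulIndep.perm {l : Fin 3 → ℂ} (h : MulIndep l) (τ : Equiv.Perm (Fin 3)) :
    MulIndep (fun j => l (τ j)) := by
  refine ⟨fun i => h.1 _, fun e he hp i => ?_⟩
  have := h.2 (fun i => e (τ.symm i)) (by rw [Equiv.sum_comp τ.symm e, he])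
    (by rw [← hp, ← Equiv.prod_comp τ]; simp) (τ i)
  simpa using this

theorem MulIndep.ratio {l : Fin 3 → ℂ} (h : MulIndep l) {i j : Fin 3} (hij : i ≠ j) {n : ℤ}
    (hn : (l i / l j) ^ n = 1) : n = 0 := by
  have := h.2 (fun k => (if k = i then n else 0) - (if k = j then n else 0)) (by simp) (by
    rw [← hn, div_zpow]
    simp only [zpow_sub₀ (h.1 _), Finset.prod_div_distrib]
    congr 1
    · rw [Finset.prod_eq_single i] <;> simp +contextual
    · rw [Finset.prod_eq_single j] <;> simp +contextual) i
  simpa [hij] using this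

theorem MulIndep.nonroot {l : Fin 3 → ℂ} (h : MulIndep l) {i j : Fin 3} (hij : i ≠ j) :
    NonRoot (l i / l j) := by
  intro n hn he
  have := h.ratio hij (n := n) (by exact_mod_cast he)
  omega

theorem MulIndep.nonroot2 {l : Fin 3 → ℂ} (h : MulIndep l) :
    NonRoot ((l 0 / l 2) ^ 2 / (l 1 / l 2)) := by
  intro n hn he
  have h0 := h.1 0
  have h1 := h.1 1
  have h2 := h.1 2
  have := h.2 ![2 * n, -n, -n] (by simp [Fin.sum_univ_three]; ring) (by
    simp only [Fin.prod_univ_three, Matrix.cons_val_zero, Matrix.cons_val_one, Matrix.cons_val]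
    rw [← he, show (l 0 / l 2) ^ 2 / (l 1 / l 2) = l 0 ^ 2 / (l 1 * l 2) by field_simp, div_pow,
      mul_pow]
    simp only [zpow_neg, zpow_natCast, zpow_mul, zpow_ofNat]
    field_simp) 1
  simp at this
  omega

noncomputable def DD (a : Fin 3 → Fin 3 → ℂ) (l : Fin 3 → ℂ) (m : Fin 3 → ℤ) : ℂ :=
  (Matrix.of fun i j => a i j * l j ^ m i).det

def GoodM (a : Fin 3 → Fin 3 → ℂ) (l : Fin 3 → ℂ) : Prop :=
  ∃ N : ℤ, ∀ m : Fin 3 → ℤ, DD a l m = 0 → ∃ i j, i ≠ j ∧ |m i - m j| < N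

theorem DD_perm (a : Fin 3 → Fin 3 → ℂ) (l : Fin 3 → ℂ) (m : Fin 3 → ℤ) (σ τ : Equiv.Perm (Fin 3))
    (h : DD a l m = 0) :
    DD (fun i j => a (σ i) (τ j)) (fun j => l (τ j)) (fun i => m (σ i)) = 0 := by
  unfold DD at *
  have h1 := Matrix.det_permute σ (Matrix.of fun i j => a i j * l j ^ m i)
  have h2 := Matrix.det_permute' τ ((Matrix.of fun i j => a i j * l j ^ m i).submatrix σ id)
  rw [h1, h, mul_zero, mul_zero] at h2
  exact h2

theorem GoodM.perm {a : Fin 3 → Fin 3 → ℂ} {l : Fin 3 → ℂ} (σ τ : Equiv.Perm (Fin 3))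
    (h : GoodM (fun i j => a (σ i) (τ j)) (fun j => l (τ j))) : GoodM a l := by
  obtain ⟨N, hN⟩ := h
  refine ⟨N, fun m hm => ?_⟩
  obtain ⟨i, j, hij, h⟩ := hN _ (DD_perm a l m σ τ hm)
  exact ⟨σ i, σ j, fun hc => hij (σ.injective hc), h⟩

theorem good0 (a : Fin 3 → Fin 3 → ℂ) (l : Fin 3 → ℂ) (h : MulIndep l) (ha : ∀ i j, a i j ≠ 0) :
    GoodM a l := by
  have := fun σ : Equiv.Perm (Fin 3) => claim_i_C (fun i j => a (σ i) j) l (fun _ _ => ha _ _) h.1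
    (fun i j hij => h.nonroot hij)
  choose N hN using this
  refine ⟨∑ σ, N σ, fun m hm => ?_⟩
  by_contra! hcon
  set σ := Tuple.sort (fun i => - m i) with hσ
  have hmono : Monotone ((fun i => - m i) ∘ σ) := Tuple.monotone_sort _
  have h01 : m (σ 1) ≤ m (σ 0) := by simpa using hmono (show (0 : Fin 3) ≤ 1 by decide)
  have h12 : m (σ 2) ≤ m (σ 1) := by simpa using hmono (show (1 : Fin 3) ≤ 2 by decide)
  have hle : N σ ≤ ∑ σ, N σ := Finset.single_le_sum (f := N) (fun _ _ => Nat.zero_le _) (Finset.mem_univ σ)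
  have c01 := hcon (σ 0) (σ 1) (fun hc => absurd (σ.injective hc) (by decide))
  have c12 := hcon (σ 1) (σ 2) (fun hc => absurd (σ.injective hc) (by decide))
  rw [abs_of_nonneg (by omega)] at c01 c12
  obtain ⟨g₁, hg₁⟩ := Int.eq_ofNat_of_zero_le (show 0 ≤ m (σ 0) - m (σ 1) by omega)
  obtain ⟨g₂, hg₂⟩ := Int.eq_ofNat_of_zero_le (show 0 ≤ m (σ 1) - m (σ 2) by omega)
  have hle' : (N σ : ℤ) ≤ ((∑ σ, N σ : ℕ) : ℤ) := by exact_mod_cast hle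
  push_cast at hle'
  apply hN σ g₁ g₂ (by omega) (by omega)
  have hD := DD_perm a l m σ 1 hm
  have e1 : m (σ 1) = g₂ + m (σ 2) := by omega
  have e0 : m (σ 0) = (g₁ + g₂ : ℕ) + m (σ 2) := by push_cast; omega
  have l0 := zpow_ne_zero (m (σ 2)) (h.1 0)
  have l1 := zpow_ne_zero (m (σ 2)) (h.1 1)
  have l2 := zpow_ne_zero (m (σ 2)) (h.1 2)
  unfold DD at hD
  rw [Matrix.det_fin_three] at hD
  simp only [Matrix.of_apply, Equiv.Perm.coe_one, id, e0, e1, zpow_add₀ (h.1 _), zpow_natCast] at hD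
  unfold EE
  have l012 := mul_ne_zero (mul_ne_zero l0 l1) l2
  apply mul_left_cancel₀ l012
  rw [mul_zero, ← hD]
  ring

theorem DD_norm (a : Fin 3 → Fin 3 → ℂ) (l : Fin 3 → ℂ) (hl : ∀ i, l i ≠ 0) (m : Fin 3 → ℤ) (k : ℤ)
    (h : DD a l m = 0) : DD a ![l 0 / l 2, l 1 / l 2, 1] (fun i => m i - k) = 0 := by
  have hl0 := hl 0
  have hl1 := hl 1
  have hl2 := hl 2
  have h0 := zpow_ne_zero k hl0
  have h1 := zpow_ne_zero k hl1
  have h2 := zpow_ne_zero k hl2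
  have e0 := zpow_ne_zero (m 0) hl2
  have e1 := zpow_ne_zero (m 1) hl2
  have e2 := zpow_ne_zero (m 2) hl2
  unfold DD at *
  rw [Matrix.det_fin_three] at *
  simp only [Matrix.of_apply, Matrix.cons_val_zero, Matrix.cons_val_one, Matrix.cons_val, one_zpow,
    div_zpow, zpow_sub₀ hl0, zpow_sub₀ hl1, zpow_sub₀ hl2] at *
  field_simp
  linear_combination (l 2 ^ k) ^ 2 * h

theorem two_var_half (A B C D x y : ℂ) (hA : A ≠ 0) (hB : B ≠ 0) (hC : C ≠ 0) (hD : D ≠ 0)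
    (hx : x ≠ 0) (hy : y ≠ 0) (hxr : NonRoot x) (hyr : NonRoot y) (hyx : NonRoot (y / x))
    (hxy : NonRoot (x ^ 2 / y)) :
    ∃ N : ℕ, ∀ n₁ n₂ : ℤ, n₂ ≤ n₁ → x ^ n₁ * (A + B * y ^ n₂) = x ^ n₂ * (C + D * y ^ n₁) →
      |n₁| < N ∨ |n₂| < N ∨ |n₁ - n₂| < N := by
  obtain ⟨N₁, h1⟩ := claim_iia_C A B C D x y hA hB hC hD hx hy hxr hyr
  obtain ⟨N₂, h2⟩ := claim_iia_C D C B A (y / x) y hD hC hB hA (div_ne_zero hy hx) hy hyx hyr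
  obtain ⟨N₃, h3⟩ := claim_iib_C A B C D x y hA hB hC hD hx hy hyr hxy
  refine ⟨N₁ + N₂ + N₃ + 1, fun n₁ n₂ hle he => ?_⟩
  by_contra! hcon
  obtain ⟨c1, c2, c3⟩ := hcon
  push_cast at c1 c2 c3
  rw [abs_of_nonneg (by omega)] at c3
  rcases le_total 0 n₂ with s2 | s2
  · rw [abs_of_nonneg s2] at c2
    obtain ⟨n, rfl⟩ := Int.eq_ofNat_of_zero_le s2
    obtain ⟨u, hu⟩ := Int.eq_ofNat_of_zero_le (show 0 ≤ n₁ - n by omega)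
    obtain rfl : n₁ = ((n + u : ℕ) : ℤ) := by push_cast; omega
    apply h1 n u (by omega) (by omega)
    simp only [zpow_natCast] at he
    have := pow_ne_zero n hx
    apply mul_left_cancel₀ this
    rw [← he]; ring
  rw [abs_of_nonpos s2] at c2
  rcases le_total 0 n₁ with s1 | s1
  · rw [abs_of_nonneg s1] at c1
    obtain ⟨n, rfl⟩ := Int.eq_ofNat_of_zero_le s1
    obtain ⟨p, hp⟩ := Int.eq_ofNat_of_zero_le (show 0 ≤ - n₂ by omega)
    obtain rfl : n₂ = -(p : ℤ) := by omega
    apply h3 n p (by omega) (by omega)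
    simp only [zpow_natCast, zpow_neg] at he
    have := pow_ne_zero p hx
    have := pow_ne_zero p hy
    field_simp at he
    rw [pow_add]
    linear_combination he
  · rw [abs_of_nonpos s1] at c1
    obtain ⟨n, hn⟩ := Int.eq_ofNat_of_zero_le (show 0 ≤ - n₁ by omega)
    obtain ⟨u, hu⟩ := Int.eq_ofNat_of_zero_le (show 0 ≤ n₁ - n₂ by omega)
    obtain rfl : n₁ = -(n : ℤ) := by omega
    obtain rfl : n₂ = -((n + u : ℕ) : ℤ) := by push_cast; omega
    apply h2 n u (by omega) (by omega)
    simp only [zpow_natCast, zpow_neg, pow_add] at he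
    have := pow_ne_zero n hx
    have := pow_ne_zero n hy
    have := pow_ne_zero u hx
    have := pow_ne_zero u hy
    rw [div_pow, pow_add]
    field_simp at he ⊢
    linear_combination -he

theorem two_var (A B C D x y : ℂ) (hA : A ≠ 0) (hB : B ≠ 0) (hC : C ≠ 0) (hD : D ≠ 0)
    (hx : x ≠ 0) (hy : y ≠ 0) (hxr : NonRoot x) (hyr : NonRoot y) (hyx : NonRoot (y / x))
    (hxy : NonRoot (x ^ 2 / y)) :
    ∃ N : ℤ, ∀ n₁ n₂ : ℤ, x ^ n₁ * (A + B * y ^ n₂) = x ^ n₂ * (C + D * y ^ n₁) →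
      |n₁| < N ∨ |n₂| < N ∨ |n₁ - n₂| < N := by
  obtain ⟨N₁, h1⟩ := two_var_half A B C D x y hA hB hC hD hx hy hxr hyr hyx hxy
  obtain ⟨N₂, h2⟩ := two_var_half C D A B x y hC hD hA hB hx hy hxr hyr hyx hxy
  refine ⟨N₁ + N₂, fun n₁ n₂ he => ?_⟩
  rcases le_total n₂ n₁ with h | h
  · have := h1 n₁ n₂ h he
    omega
  · have := h2 n₂ n₁ h he.symm
    rw [abs_sub_comm] at this
    omega

theorem three_term (P Q T x y : ℂ) (hP : P ≠ 0) (hQ : Q ≠ 0) (hT : T ≠ 0)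
    (hx : x ≠ 0) (hy : y ≠ 0) (hxr : NonRoot x) (hyr : NonRoot y) :
    ∃ N : ℤ, ∀ k n : ℤ, P + Q * x ^ k + T * y ^ n = 0 → |k| < N ∨ |n| < N := by
  obtain ⟨N₁, h1⟩ := claim_iii_C P Q T x y hP hQ hT hx hy hxr hyr
  obtain ⟨N₂, h2⟩ := claim_iii_C P Q T x⁻¹ y hP hQ hT (inv_ne_zero hx) hy hxr.inv hyr
  obtain ⟨N₃, h3⟩ := claim_iii_C P Q T x y⁻¹ hP hQ hT hx (inv_ne_zero hy) hxr hyr.inv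
  obtain ⟨N₄, h4⟩ := claim_iii_C P Q T x⁻¹ y⁻¹ hP hQ hT (inv_ne_zero hx) (inv_ne_zero hy) hxr.inv hyr.inv
  refine ⟨N₁ + N₂ + N₃ + N₄, fun k n he => ?_⟩
  by_contra! hcon
  obtain ⟨c1, c2⟩ := hcon
  obtain ⟨k', rfl | rfl⟩ := Int.eq_nat_or_neg k <;> obtain ⟨n', rfl | rfl⟩ := Int.eq_nat_or_neg n <;>
    simp only [abs_neg, Nat.abs_cast] at c1 c2 <;>
    simp only [zpow_neg, zpow_natCast, ← inv_pow] at he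
  · exact h1 k' n' (by omega) (by omega) he
  · exact h3 k' n' (by omega) (by omega) he
  · exact h2 k' n' (by omega) (by omega) he
  · exact h4 k' n' (by omega) (by omega) he

theorem good1 (a : Fin 3 → Fin 3 → ℂ) (l : Fin 3 → ℂ) (h : MulIndep l)
    (ha : ∀ i j, i ≠ j → a i j ≠ 0) (h00 : a 0 0 = 0) (h11 : a 1 1 ≠ 0) (h22 : a 2 2 ≠ 0) :
    GoodM a l := by
  have hl0 := h.1 0
  have hl1 := h.1 1
  have hl2 := h.1 2
  have e : l 1 / l 2 / (l 0 / l 2) = l 1 / l 0 := by field_simp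
  have a01 := ha 0 1 (by decide)
  have a02 := ha 0 2 (by decide)
  have a10 := ha 1 0 (by decide)
  have a12 := ha 1 2 (by decide)
  have a20 := ha 2 0 (by decide)
  have a21 := ha 2 1 (by decide)
  obtain ⟨N, hN⟩ := two_var (-(a 0 1 * a 1 0 * a 2 2)) (a 0 2 * a 1 0 * a 2 1)
    (-(a 0 1 * a 1 2 * a 2 0)) (a 0 2 * a 1 1 * a 2 0) (l 0 / l 2) (l 1 / l 2)
    (by simp [*]) (by simp [*]) (by simp [*]) (by simp [*]) (div_ne_zero hl0 hl2)
    (div_ne_zero hl1 hl2) (h.nonroot (by decide)) (h.nonroot (by decide))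
    (by rw [e]; exact h.nonroot (by decide)) h.nonroot2
  refine ⟨N, fun m hm => ?_⟩
  have hD := DD_norm a l h.1 m (m 0) hm
  unfold DD at hD
  rw [Matrix.det_fin_three] at hD
  simp only [Matrix.of_apply, Matrix.cons_val_zero, Matrix.cons_val_one, Matrix.cons_val, one_zpow,
    sub_self, zpow_zero, h00] at hD
  have := hN (m 1 - m 0) (m 2 - m 0) (by linear_combination hD)
  rcases this with h | h | h
  · exact ⟨1, 0, by decide, h⟩
  · exact ⟨2, 0, by decide, h⟩
  · exact ⟨1, 2, by decide, by rwa [sub_sub_sub_cancel_right] at h⟩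

theorem good2 (a : Fin 3 → Fin 3 → ℂ) (l : Fin 3 → ℂ) (h : MulIndep l)
    (ha : ∀ i j, i ≠ j → a i j ≠ 0) (h00 : a 0 0 = 0) (h11 : a 1 1 = 0) (h22 : a 2 2 ≠ 0) :
    GoodM a l := by
  have hl0 := h.1 0
  have hl1 := h.1 1
  have hl2 := h.1 2
  have a01 := ha 0 1 (by decide)
  have a02 := ha 0 2 (by decide)
  have a10 := ha 1 0 (by decide)
  have a12 := ha 1 2 (by decide)
  have a20 := ha 2 0 (by decide)
  have a21 := ha 2 1 (by decide)
  have hx := div_ne_zero hl0 hl2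
  have hy := div_ne_zero hl1 hl2
  obtain ⟨N, hN⟩ := three_term (-(a 0 1 * a 1 0 * a 2 2)) (a 0 1 * a 1 2 * a 2 0)
    (a 0 2 * a 1 0 * a 2 1) (l 0 / l 2) (l 1 / l 2)
    (by simp [*]) (by simp [*]) (by simp [*]) hx hy (h.nonroot (by decide)) (h.nonroot (by decide))
  refine ⟨N, fun m hm => ?_⟩
  have hD := DD_norm a l h.1 m (m 2) hm
  unfold DD at hD
  rw [Matrix.det_fin_three] at hD
  simp only [Matrix.of_apply, Matrix.cons_val_zero, Matrix.cons_val_one, Matrix.cons_val, one_zpow,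
    sub_self, zpow_zero, h00, h11] at hD
  have e1 := zpow_ne_zero (m 1 - m 2) hx
  have e2 := zpow_ne_zero (m 0 - m 2) hy
  have := hN (-(m 1 - m 2)) (-(m 0 - m 2)) (by
    rw [zpow_neg, zpow_neg]
    generalize (l 0 / l 2) ^ (m 1 - m 2) = X at *
    generalize (l 1 / l 2) ^ (m 0 - m 2) = Y at *
    field_simp
    linear_combination hD)
  rw [abs_neg, abs_neg] at this
  rcases this with h | h
  · exact ⟨1, 2, by decide, h⟩
  · exact ⟨0, 2, by decide, h⟩

theorem good3 (a : Fin 3 → Fin 3 → ℂ) (l : Fin 3 → ℂ) (h : MulIndep l)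
    (ha : ∀ i j, i ≠ j → a i j ≠ 0) (h00 : a 0 0 = 0) (h11 : a 1 1 = 0) (h22 : a 2 2 = 0) :
    GoodM a l := by
  have hl0 := h.1 0
  have hl1 := h.1 1
  have hl2 := h.1 2
  have a01 := ha 0 1 (by decide)
  have a02 := ha 0 2 (by decide)
  have a10 := ha 1 0 (by decide)
  have a12 := ha 1 2 (by decide)
  have a20 := ha 2 0 (by decide)
  have a21 := ha 2 1 (by decide)
  have hx := div_ne_zero hl0 hl2
  have hy := div_ne_zero hl1 hl2
  have key : ∀ m, DD a l m = 0 → a 0 1 * a 1 2 * a 2 0 * (l 1 / l 2) ^ (m 0 - m 2) =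
      - (a 0 2 * a 1 0 * a 2 1 * (l 0 / l 2) ^ (m 1 - m 2)) := by
    intro m hm
    have hD := DD_norm a l h.1 m (m 2) hm
    unfold DD at hD
    rw [Matrix.det_fin_three] at hD
    simp only [Matrix.of_apply, Matrix.cons_val_zero, Matrix.cons_val_one, Matrix.cons_val, one_zpow,
      sub_self, zpow_zero, h00, h11, h22] at hD
    linear_combination hD
  by_cases hex : ∃ m, DD a l m = 0
  · obtain ⟨m', hm'⟩ := hex
    refine ⟨|m' 1 - m' 2| + 1, fun m hm => ⟨1, 2, by decide, ?_⟩⟩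
    have k1 := key m hm
    have k2 := key m' hm'
    have e1 := zpow_ne_zero (m' 1 - m' 2) hx
    have e2 := zpow_ne_zero (m' 0 - m' 2) hy
    have e3 := zpow_ne_zero (m 1 - m 2) hx
    have e4 := zpow_ne_zero (m 0 - m 2) hy
    have hq : (l 0 / l 2) ^ (m 1 - m 2 - (m' 1 - m' 2)) *
        (l 1 / l 2) ^ (m' 0 - m' 2 - (m 0 - m 2)) = 1 := by
      rw [zpow_sub₀ hx, zpow_sub₀ hy]
      generalize (l 0 / l 2) ^ (m 1 - m 2) = X at *
      generalize (l 0 / l 2) ^ (m' 1 - m' 2) = X' at *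
      generalize (l 1 / l 2) ^ (m 0 - m 2) = Y at *
      generalize (l 1 / l 2) ^ (m' 0 - m' 2) = Y' at *
      field_simp
      have hc : a 0 1 * a 1 2 * a 2 0 * (a 0 2 * a 1 0 * a 2 1) ≠ 0 := by simp [*]
      apply mul_left_cancel₀ hc
      linear_combination -(a 0 2 * a 1 0 * a 2 1 * X') * k1 + (a 0 2 * a 1 0 * a 2 1 * X) * k2
    have := h.2 ![m 1 - m 2 - (m' 1 - m' 2), m' 0 - m' 2 - (m 0 - m 2),
      -(m 1 - m 2 - (m' 1 - m' 2)) - (m' 0 - m' 2 - (m 0 - m 2))] (by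
        simp [Fin.sum_univ_three]) (by
        simp only [Fin.prod_univ_three, Matrix.cons_val_zero, Matrix.cons_val_one, Matrix.cons_val]
        rw [← hq]
        generalize m 1 - m 2 - (m' 1 - m' 2) = s
        generalize m' 0 - m' 2 - (m 0 - m 2) = t
        rw [div_zpow, div_zpow, zpow_sub₀ hl2, zpow_neg]
        field_simp) 0
    simp only [Matrix.cons_val_zero] at this
    rw [show m 1 - m 2 = m' 1 - m' 2 by omega]
    omega
  · push Not at hex
    exact ⟨0, fun m hm => absurd hm (hex m)⟩

theorem good_diag (a : Fin 3 → Fin 3 → ℂ) (l : Fin 3 → ℂ) (h : MulIndep l)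
    (ha : ∀ i j, i ≠ j → a i j ≠ 0) : GoodM a l := by
  have hp : ∀ σ : Equiv.Perm (Fin 3), ∀ i j, i ≠ j → a (σ i) (σ j) ≠ 0 := fun σ i j hij =>
    ha _ _ (fun hc => hij (σ.injective hc))
  by_cases h0 : a 0 0 = 0 <;> by_cases h1 : a 1 1 = 0 <;> by_cases h2 : a 2 2 = 0
  · exact good3 a l h ha h0 h1 h2
  · exact good2 a l h ha h0 h1 h2
  · apply GoodM.perm (Equiv.swap 1 2) (Equiv.swap 1 2)
    exact good2 _ _ (h.perm _) (hp _) h0 h2 h1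
  · exact good1 a l h ha h0 h1 h2
  · apply GoodM.perm (Equiv.swap 0 2) (Equiv.swap 0 2)
    exact good2 _ _ (h.perm _) (hp _) h2 h1 h0
  · apply GoodM.perm (Equiv.swap 0 1) (Equiv.swap 0 1)
    exact good1 _ _ (h.perm _) (hp _) h1 h0 h2
  · apply GoodM.perm (Equiv.swap 0 2) (Equiv.swap 0 2)
    exact good1 _ _ (h.perm _) (hp _) h2 h1 h0
  · apply good0 a l h
    intro i j
    by_cases hij : i = j
    · subst hij; fin_cases i <;> assumption
    · exact ha i j hij

theorem perm_ext : ∀ c : Fin 3 → Option (Fin 3), (∀ i j k, c i = some k → c j = some k → i = j) →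
    ∃ π : Equiv.Perm (Fin 3), ∀ i k, c i = some k → π i = k := by
  decide

/-- The uniform bound for torus points. -/
theorem bound_torus (b : Fin 3 → Fin 3 → ℂ) (l : Fin 3 → ℂ) (h : MulIndep l) (hb : ∀ i, b i ≠ 0) :
    ∃ N : ℤ, ∀ (m : Fin 3 → ℤ) (v : Fin 3 → ℂ), (∀ j, v j ≠ 0) →
      (∀ i, ∑ j, b i j * (l j ^ m i * v j) = 0) → ∃ i j, i ≠ j ∧ |m i - m j| < N := by
  classical
  have split : ∀ c d : Fin 3, c ≠ d → ∃ e, c ≠ e ∧ d ≠ e ∧ ∀ x : Fin 3, x = c ∨ x = d ∨ x = e := by decide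
  have hsum : ∀ c d e : Fin 3, c ≠ d → c ≠ e → d ≠ e → (∀ x : Fin 3, x = c ∨ x = d ∨ x = e) →
      ∀ f : Fin 3 → ℂ, ∑ j, f j = f c + f d + f e := by
    intro c d e hcd hce hde hall f
    have : (Finset.univ : Finset (Fin 3)) = {c, d, e} := by
      ext x; simpa using hall x
    rw [this, Finset.sum_insert (by simp [hcd, hce]), Finset.sum_insert (by simp [hde]),
      Finset.sum_singleton, add_assoc]
  by_cases c1 : ∃ i c d, c ≠ d ∧ b i c = 0 ∧ b i d = 0
  · obtain ⟨i, c, d, hcd, hc, hd⟩ := c1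
    obtain ⟨e, hce, hde, hall⟩ := split c d hcd
    refine ⟨0, fun m v hv hs => absurd (hs i) ?_⟩
    rw [hsum c d e hcd hce hde hall, hc, hd, zero_mul, zero_mul, zero_add, zero_add]
    have hbe : b i e ≠ 0 := by
      intro he
      apply hb i
      ext x
      rcases hall x with rfl | rfl | rfl <;> assumption
    exact mul_ne_zero hbe (mul_ne_zero (zpow_ne_zero _ (h.1 _)) (hv _))
  push Not at c1
  by_cases c2 : ∃ i i' c, i ≠ i' ∧ b i c = 0 ∧ b i' c = 0
  · obtain ⟨i, i', c, hii, hc, hc'⟩ := c2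
    obtain ⟨d, hcd⟩ : ∃ d, c ≠ d := (by decide : ∀ c : Fin 3, ∃ d, c ≠ d) c
    obtain ⟨e, hce, hde, hall⟩ := split c d hcd
    have n1 := c1 i c d hcd hc
    have n2 := c1 i c e hce hc
    have n3 := c1 i' c d hcd hc'
    have n4 := c1 i' c e hce hc'
    have key : ∀ (m : Fin 3 → ℤ) (v : Fin 3 → ℂ), (∀ j, v j ≠ 0) →
      (∀ i, ∑ j, b i j * (l j ^ m i * v j) = 0) →
      (l d / l e) ^ (m i - m i') = (b i e * b i' d) / (b i d * b i' e) := by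
      intro m v hv hs
      have s1 := hs i
      have s2 := hs i'
      rw [hsum c d e hcd hce hde hall, hc, zero_mul, zero_add] at s1
      rw [hsum c d e hcd hce hde hall, hc', zero_mul, zero_add] at s2
      have hld := h.1 d
      have hle := h.1 e
      have hvd := hv d
      have hve := hv e
      rw [div_zpow, zpow_sub₀ hld, zpow_sub₀ hle]
      have z1 := zpow_ne_zero (m i) hld
      have z2 := zpow_ne_zero (m i') hld
      have z3 := zpow_ne_zero (m i) hle
      have z4 := zpow_ne_zero (m i') hle
      generalize l d ^ m i = X1 at *
      generalize l d ^ m i' = X2 at *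
      generalize l e ^ m i = X3 at *
      generalize l e ^ m i' = X4 at *
      field_simp
      apply mul_left_cancel₀ (mul_ne_zero hvd hve)
      linear_combination (v e * b i' e * X4) * s1 - (v e * b i e * X3) * s2
    by_cases hex : ∃ (m : Fin 3 → ℤ) (v : Fin 3 → ℂ), (∀ j, v j ≠ 0) ∧
      (∀ i, ∑ j, b i j * (l j ^ m i * v j) = 0)
    · obtain ⟨m', v', hv', hs'⟩ := hex
      refine ⟨|m' i - m' i'| + 1, fun m v hv hs => ⟨i, i', hii, ?_⟩⟩
      have k1 := key m v hv hs
      have k2 := key m' v' hv' hs'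
      have hne := div_ne_zero (h.1 d) (h.1 e)
      have := h.ratio hde (n := m i - m i' - (m' i - m' i')) (by
        rw [zpow_sub₀ hne, k1, ← k2, div_self (zpow_ne_zero _ hne)])
      rw [show m i - m i' = m' i - m' i' by omega]
      omega
    · push Not at hex
      refine ⟨0, fun m v hv hs => ?_⟩
      obtain ⟨i, hi⟩ := hex m v hv
      exact absurd (hs i) hi
  push Not at c2
  obtain ⟨π, hπ⟩ := perm_ext (fun i => if hi : ∃ c, b i c = 0 then some hi.choose else none) (by
    intro i j k h1 h2
    split_ifs at h1 h2 with hi hj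
    simp only [Option.some.injEq] at h1 h2
    by_contra hne
    exact c2 i j k hne (h1 ▸ hi.choose_spec) (h2 ▸ hj.choose_spec))
  have hz : ∀ i c, b i c = 0 → π i = c := by
    intro i c hc
    have hi : ∃ c, b i c = 0 := ⟨c, hc⟩
    have h1 := hπ i hi.choose (by rw [dif_pos hi])
    rw [h1]
    by_contra hne
    exact c1 i _ _ hne hi.choose_spec hc
  have hG : GoodM b l := by
    apply GoodM.perm 1 π
    apply good_diag _ _ (h.perm _)
    intro i j hij h0
    exact hij (π.injective (hz i _ h0))
  obtain ⟨N, hN⟩ := hG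
  refine ⟨N, fun m v hv hs => hN m ?_⟩
  unfold DD
  apply Matrix.exists_mulVec_eq_zero_iff.1
  refine ⟨v, fun h0 => hv 0 (by rw [h0]; rfl), ?_⟩
  ext i
  rw [Matrix.mulVec, dotProduct]
  simp only [Matrix.of_apply, Pi.zero_apply, mul_assoc]
  exact hs i

theorem exists_covector (W : Submodule ℂ (Fin 3 → ℂ)) (h : Module.finrank ℂ W = 2) :
    ∃ b : Fin 3 → ℂ, b ≠ 0 ∧ ∀ x, x ∈ W ↔ ∑ j, b j * x j = 0 := by
  have hlt : W < ⊤ := by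
    rw [lt_top_iff_ne_top]
    rintro rfl
    rw [finrank_top, Module.finrank_fin_fun] at h
    omega
  obtain ⟨f, hf, hle⟩ := Submodule.exists_le_ker_of_lt_top W hlt
  have hrep : ∀ x, f x = ∑ j, f (Pi.single j 1) * x j := by
    intro x
    conv_lhs => rw [pi_eq_sum_univ' x]
    simp [mul_comm]
  have hr := LinearMap.finrank_range_add_finrank_ker f
  rw [Module.finrank_fin_fun, LinearMap.range_eq_top.2 (LinearMap.surjective hf), finrank_top,
    Module.finrank_self] at hr
  have hW : W = LinearMap.ker f := Submodule.eq_of_le_of_finrank_eq hle (by omega)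
  refine ⟨fun j => f (Pi.single j 1), fun h0 => hf ?_, fun x => ?_⟩
  · ext x
    have := congrFun h0 x
    simpa using this
  · rw [hW, LinearMap.mem_ker, hrep]

theorem onLine_mk (v : Fin 3 → ℂ) (hv : v ≠ 0) (W : Submodule ℂ (Fin 3 → ℂ)) :
    OnLine (Projectivization.mk ℂ v hv) W ↔ v ∈ W := by
  unfold OnLine
  rw [Projectivization.submodule_mk, Submodule.span_singleton_le_iff_mem]

theorem lines_inter (W W' : Submodule ℂ (Fin 3 → ℂ)) (h : Module.finrank ℂ W = 2)
    (h' : Module.finrank ℂ W' = 2) (hne : W ≠ W') :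
    {P : ProjPlane | OnLine P W ∧ OnLine P W'}.Finite := by
  apply Set.Subsingleton.finite
  have hlt : W ⊓ W' < W := by
    refine lt_of_le_of_ne inf_le_left (fun he => hne ?_)
    exact Submodule.eq_of_le_of_finrank_eq (inf_eq_left.1 he) (by rw [h, h'])
  have h1 := Submodule.finrank_lt_finrank_of_lt hlt
  rw [h] at h1
  rintro P ⟨hP, hP'⟩ Q ⟨hQ, hQ'⟩
  have key : ∀ R : ProjPlane, OnLine R W → OnLine R W' → R.submodule = W ⊓ W' := by
    intro R h2 h3
    refine Submodule.eq_of_le_of_finrank_le (le_inf h2 h3) ?_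
    rw [Projectivization.finrank_submodule]
    omega
  exact Projectivization.submodule_injective ((key P hP hP').trans (key Q hQ hQ').symm)

end helpers

/-- For the automorphism of `ℙ²(ℂ)` induced by `diag(λ₁, λ₂, 1)` with `λ₁, λ₂`
multiplicatively independent, only finitely many orbits meet three given lines lying in
pairwise distinct orbits. -/
theorem finiteness_orbits_diagonal (lam₁ lam₂ : ℂ) (h₁ : lam₁ ≠ 0) (h₂ : lam₂ ≠ 0)
    (hindep : ∀ a b : ℤ, lam₁ ^ a * lam₂ ^ b = 1 → a = 0 ∧ b = 0)
    (β : (Fin 3 → ℂ) ≃ₗ[ℂ] (Fin 3 → ℂ))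
    (hβ : β.toLinearMap = Matrix.toLin' (Matrix.diagonal ![lam₁, lam₂, 1]))
    (W : Fin 3 → Submodule ℂ (Fin 3 → ℂ))
    (hrank : ∀ i, Module.finrank ℂ (W i) = 2)
    (horb : ∀ (k : ℤ) (i j : Fin 3), i ≠ j →
      Submodule.map (β ^ k).toLinearMap (W i) ≠ W j) :
    ∃ F : Set ProjPlane, F.Finite ∧
      ∀ P : ProjPlane,
        (∃ m₁ m₂ m₃ : ℤ, OnLine (projAct (β ^ m₁) P) (W 0) ∧
          OnLine (projAct (β ^ m₂) P) (W 1) ∧ OnLine (projAct (β ^ m₃) P) (W 2)) →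
        ∃ Q ∈ F, ∃ k : ℤ, P = projAct (β ^ k) Q := by
  have hl : MulIndep ![lam₁, lam₂, 1] := by
    refine ⟨fun i => by fin_cases i <;> simp [h₁, h₂], fun e he hp => ?_⟩
    rw [Fin.prod_univ_three] at hp
    rw [Fin.sum_univ_three] at he
    simp only [Matrix.cons_val_zero, Matrix.cons_val_one, Matrix.cons_val, one_zpow, mul_one] at hp
    have := hindep _ _ hp
    intro i
    fin_cases i
    · exact this.1
    · exact this.2
    · show e 2 = 0
      omega
  set l : Fin 3 → ℂ := ![lam₁, lam₂, 1] with hld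
  have hβ1 : ∀ x j, β x j = l j * x j := by
    intro x j
    have := LinearMap.congr_fun hβ x
    rw [LinearEquiv.coe_coe] at this
    rw [this, Matrix.toLin'_apply, Matrix.mulVec_diagonal]
  have hβn : ∀ (n : ℕ) x j, (β ^ n) x j = l j ^ n * x j := by
    intro n
    induction n with
    | zero => intro x j; simp
    | succ n ih =>
      intro x j
      rw [pow_succ', LinearEquiv.mul_apply, hβ1, ih]
      ring
  have hβk : ∀ (k : ℤ) x j, (β ^ k) x j = l j ^ k * x j := by
    intro k x j
    obtain ⟨n, rfl | rfl⟩ := Int.eq_nat_or_neg k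
    · rw [zpow_natCast, zpow_natCast]; exact hβn n x j
    · have h1 := hβn n ((β ^ (-(n : ℤ))) x) j
      rw [← LinearEquiv.mul_apply, ← zpow_natCast, ← zpow_add, add_neg_cancel, zpow_zero] at h1
      have := pow_ne_zero n (hl.1 j)
      change x j = _ at h1
      rw [h1, zpow_neg (l j), zpow_natCast (l j), inv_mul_cancel_left₀ this]
  choose b hb0 hb using fun i => exists_covector (W i) (hrank i)
  obtain ⟨N, hN⟩ := bound_torus b l hl hb0
  have hact : ∀ (k : ℤ) (v : Fin 3 → ℂ) (hv : v ≠ 0), projAct (β ^ k) (Projectivization.mk ℂ v hv) =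
      Projectivization.mk ℂ ((β ^ k) v) (by simpa using hv) := by
    intro k v hv
    rfl
  have hinv : ∀ (k : ℤ) (P : ProjPlane), P = projAct (β ^ (-k)) (projAct (β ^ k) P) := by
    intro k P
    induction P using Projectivization.ind with
    | h v hv =>
      rw [hact, hact]
      congr 1
      rw [← LinearEquiv.mul_apply, ← zpow_add, neg_add_cancel, zpow_zero]
      rfl
  let H : Fin 3 → Submodule ℂ (Fin 3 → ℂ) := fun c => LinearMap.ker (LinearMap.proj (R := ℂ) (φ := fun _ : Fin 3 => ℂ) c)
  have hH : ∀ c, Module.finrank ℂ (H c) = 2 := by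
    intro c
    have hr := LinearMap.finrank_range_add_finrank_ker (LinearMap.proj (R := ℂ) (φ := fun _ : Fin 3 => ℂ) c)
    rw [Module.finrank_fin_fun, LinearMap.range_eq_top.2 (LinearMap.proj_surjective c), finrank_top,
      Module.finrank_self] at hr
    change 1 + Module.finrank ℂ (H c) = 3 at hr
    omega
  have hmr : ∀ (k : ℤ) j, Module.finrank ℂ (Submodule.map (β ^ k).toLinearMap (W j)) = 2 := by
    intro k j
    rw [← hrank j]
    exact LinearEquiv.finrank_map_eq (β ^ k) (W j)
  let F1 : Set ProjPlane := ⋃ c : Fin 3, ⋃ i : Fin 3, ⋃ _ : W i ≠ H c,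
    {P : ProjPlane | OnLine P (W i) ∧ OnLine P (H c)}
  let F2 : Set ProjPlane := ⋃ i : Fin 3, ⋃ j : Fin 3, ⋃ _ : i ≠ j, ⋃ d ∈ Finset.Icc (-N) N,
    {P : ProjPlane | OnLine P (W i) ∧ OnLine P (Submodule.map (β ^ d).toLinearMap (W j))}
  refine ⟨F1 ∪ F2, Set.Finite.union ?_ ?_, ?_⟩
  · refine Set.finite_iUnion fun c => Set.finite_iUnion fun i => Set.finite_iUnion fun hne => ?_
    exact lines_inter _ _ (hrank i) (hH c) hne
  · refine Set.finite_iUnion fun i => Set.finite_iUnion fun j => Set.finite_iUnion fun hij => ?_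
    refine Set.Finite.biUnion (Finset.finite_toSet _) fun d _ => ?_
    exact lines_inter _ _ (hrank i) (hmr d j) (horb d j i (Ne.symm hij)).symm
  rintro P ⟨m₁, m₂, m₃, p1, p2, p3⟩
  set m : Fin 3 → ℤ := ![m₁, m₂, m₃] with hm
  have hp : ∀ i, OnLine (projAct (β ^ m i) P) (W i) := by
    intro i
    fin_cases i
    · exact p1
    · exact p2
    · exact p3
  suffices hs : ∃ i, projAct (β ^ m i) P ∈ F1 ∪ F2 by
    obtain ⟨i, hi⟩ := hs
    exact ⟨_, hi, - m i, hinv _ P⟩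
  clear p1 p2 p3
  induction P using Projectivization.ind with
  | h v hv =>
  simp only [hact, onLine_mk] at hp ⊢
  by_cases hz : ∃ c, v c = 0
  · obtain ⟨c, hc⟩ := hz
    have h01 : W 0 ≠ W 1 := by
      have := horb 0 0 1 (by decide)
      rw [zpow_zero] at this
      intro he
      apply this
      rw [he]
      exact Submodule.map_id _
    obtain ⟨i, hi⟩ : ∃ i, W i ≠ H c := by
      by_contra! hcon
      exact h01 ((hcon 0).trans (hcon 1).symm)
    refine ⟨i, Or.inl ?_⟩
    simp only [F1, Set.mem_iUnion, Set.mem_ofPred_eq, onLine_mk]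
    refine ⟨c, i, hi, hp i, ?_⟩
    show ((β ^ m i) v) c = 0
    rw [hβk, hc, mul_zero]
  · push Not at hz
    obtain ⟨i, j, hij, hlt⟩ := hN m v hz (fun i => by
      have := (hb i _).1 (hp i)
      simpa only [hβk] using this)
    refine ⟨i, Or.inr ?_⟩
    simp only [F2, Set.mem_iUnion, Set.mem_ofPred_eq, onLine_mk]
    refine ⟨i, j, hij, m i - m j, ?_, hp i, ?_⟩
    · rw [Finset.mem_Icc]
      have := abs_lt.1 hlt
      omega
    · refine ⟨(β ^ m j) v, hp j, ?_⟩
      rw [LinearEquiv.coe_coe, ← LinearEquiv.mul_apply, ← zpow_add, sub_add_cancel]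
end
end
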